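/- arXiv:1701.00787 — 3 statements merged into one kernel-verified Lean document; each statement's English description precedes it below -/
import Mathlib

section
/- (Pólya criterion, positive definiteness) Let d ∈ ℕ with d ≥ 3 and set λ = ⌈(d-2)/2⌉. Let g: [0,π] → ℝ be λ-times continuously differentiable and suppose that: (i) (-1)^λ g^{(λ)} is convex on [0,π]; (ii) g^{(j)}(π) = 0 for all 0 ≤ j ≤ λ, the left derivative of g^{(λ)} at π equals 0, and the right derivative of g^{(λ)} at 0 exists and is finite. Then g is a positive definite function on the unit sphere S^{d-1}. -/
open MeasureTheory Real Set
open scoped RealInnerProductSpace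

/-- A continuous function `g : [0,π] → ℝ` is positive definite on the unit sphere
`S^{d-1} ⊂ ℝ^d` if for every `N` and every family of `N` distinct points on the sphere,
the matrix `[g(arccos ⟨x_i, x_j⟩)]` is positive semidefinite. -/
def PosDefOnSphere (d : ℕ) (g : ℝ → ℝ) : Prop :=
  ∀ (N : ℕ) (x : Fin N → EuclideanSpace ℝ (Fin d)),
    (∀ i, ‖x i‖ = 1) → Function.Injective x →
    (Matrix.of fun i j : Fin N => g (Real.arccos ⟪x i, x j⟫)).PosSemidef

/-- A continuous function `g : [0,π] → ℝ` is strictly positive definite on the unit sphere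
`S^{d-1} ⊂ ℝ^d` if for every `N` and every family of `N` distinct points on the sphere,
the matrix `[g(arccos ⟨x_i, x_j⟩)]` is positive definite. -/
def StrictPosDefOnSphere (d : ℕ) (g : ℝ → ℝ) : Prop :=
  ∀ (N : ℕ) (x : Fin N → EuclideanSpace ℝ (Fin d)),
    (∀ i, ‖x i‖ = 1) → Function.Injective x →
    (Matrix.of fun i j : Fin N => g (Real.arccos ⟪x i, x j⟫)).PosDef


def CMk : ℕ → ℝ → (ℝ → ℝ) → Prop
  | 0, a, F => ContinuousOn F (Ioi a) ∧ ∀ x, a < x → 0 ≤ F x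
  | k + 1, a, F => (∀ x, a < x → 0 ≤ F x) ∧
      ∃ F' : ℝ → ℝ, (∀ x, a < x → HasDerivAt F (-F' x) x) ∧ CMk k a F'

theorem CMk.nonneg {k : ℕ} {a : ℝ} {F : ℝ → ℝ} (h : CMk k a F) : ∀ x, a < x → 0 ≤ F x := by
  cases k with
  | zero => exact h.2
  | succ k => exact h.1

theorem CMk.cont {k : ℕ} {a : ℝ} {F : ℝ → ℝ} (h : CMk k a F) : ContinuousOn F (Ioi a) := by
  cases k with
  | zero => exact h.1
  | succ k =>
    obtain ⟨_, F', hF, _⟩ := h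
    exact fun x hx => (hF x hx).continuousAt.continuousWithinAt

theorem CMk.pred {k : ℕ} {a : ℝ} : ∀ {F : ℝ → ℝ}, CMk (k + 1) a F → CMk k a F := by
  induction k with
  | zero => intro F h; exact ⟨h.cont, h.nonneg⟩
  | succ k ih =>
    intro F h
    obtain ⟨h0, F', hF, h'⟩ := h
    exact ⟨h0, F', hF, ih h'⟩

theorem CMk.anti {k : ℕ} {a b : ℝ} (hab : a ≤ b) : ∀ {F : ℝ → ℝ}, CMk k a F → CMk k b F := by
  induction k with
  | zero => intro F h; exact ⟨h.1.mono (Ioi_subset_Ioi hab), fun x hx => h.2 x (by linarith)⟩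
  | succ k ih =>
    intro F h
    obtain ⟨h0, F', hF, h'⟩ := h
    exact ⟨fun x hx => h0 x (by linarith), F', fun x hx => hF x (by linarith), ih h'⟩

theorem CMk.add {k : ℕ} {a : ℝ} : ∀ {F G : ℝ → ℝ}, CMk k a F → CMk k a G →
    CMk k a (fun x => F x + G x) := by
  induction k with
  | zero =>
    intro F G h g
    exact ⟨h.1.add g.1, fun x hx => add_nonneg (h.2 x hx) (g.2 x hx)⟩
  | succ k ih =>
    intro F G h g
    obtain ⟨h0, F', hF, h'⟩ := h
    obtain ⟨g0, G', gF, g'⟩ := g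
    refine ⟨fun x hx => add_nonneg (h0 x hx) (g0 x hx), _, fun x hx => ?_, ih h' g'⟩
    have := (hF x hx).add (gF x hx)
    refine HasDerivAt.congr_deriv this ?_
    ring

theorem CMk.mul {k : ℕ} {a : ℝ} : ∀ {F G : ℝ → ℝ}, CMk k a F → CMk k a G →
    CMk k a (fun x => F x * G x) := by
  induction k with
  | zero =>
    intro F G h g
    exact ⟨h.1.mul g.1, fun x hx => mul_nonneg (h.2 x hx) (g.2 x hx)⟩
  | succ k ih =>
    intro F G h g
    have h1 := h.pred
    have g1 := g.pred
    obtain ⟨h0, F', hF, h'⟩ := h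
    obtain ⟨g0, G', gF, g'⟩ := g
    refine ⟨fun x hx => mul_nonneg (h0 x hx) (g0 x hx), _, fun x hx => ?_,
      (ih h' g1).add (ih h1 g')⟩
    have := (hF x hx).mul (gF x hx)
    refine HasDerivAt.congr_deriv this ?_
    ring

theorem CMk.const_mul {k : ℕ} {a c : ℝ} (hc : 0 ≤ c) : ∀ {F : ℝ → ℝ}, CMk k a F →
    CMk k a (fun x => c * F x) := by
  induction k with
  | zero =>
    intro F h
    exact ⟨continuousOn_const.mul h.1, fun x hx => mul_nonneg hc (h.2 x hx)⟩
  | succ k ih =>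
    intro F h
    obtain ⟨h0, F', hF, h'⟩ := h
    refine ⟨fun x hx => mul_nonneg hc (h0 x hx), _, fun x hx => ?_, ih h'⟩
    have := (hF x hx).const_mul c
    refine HasDerivAt.congr_deriv this ?_
    ring

theorem CMk.rpow {k : ℕ} {b c : ℝ} (hbc : 0 ≤ b + c) : ∀ {s : ℝ}, 0 ≤ s →
    CMk k b (fun x => (x + c) ^ (-s)) := by
  induction k with
  | zero =>
    intro s hs
    refine ⟨fun x hx => ?_, fun x hx => ?_⟩
    · have : x + c ≠ 0 := by have : b < x := hx; linarith
      exact ((continuousAt_id.add continuousAt_const).rpow_const (Or.inl this)).continuousWithinAt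
    · exact Real.rpow_nonneg (by linarith) _
  | succ k ih =>
    intro s hs
    refine ⟨fun x hx => Real.rpow_nonneg (by linarith) _, _, fun x hx => ?_,
      CMk.const_mul hs (ih (s := s + 1) (by linarith))⟩
    have : x + c ≠ 0 := by linarith
    have := ((hasDerivAt_id x).add_const c).rpow_const (p := -s) (Or.inl this)
    refine HasDerivAt.congr_deriv this ?_
    show _ = -(s * (x + c) ^ (-(s+1)))
    rw [show -(s+1) = -s - 1 by ring]
    simp only [id]
    ring

theorem CMk.comp {k : ℕ} {a b : ℝ} {t t' : ℝ → ℝ} (ht : ∀ x, b < x → a < t x)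
    (hd : ∀ x, b < x → HasDerivAt t (t' x) x) (h' : ∀ k, CMk k b t') :
    ∀ {F : ℝ → ℝ}, CMk k a F → CMk k b (fun x => F (t x)) := by
  induction k with
  | zero =>
    intro F h
    refine ⟨h.1.comp (fun x hx => (hd x hx).continuousAt.continuousWithinAt) ht,
      fun x hx => h.2 _ (ht x hx)⟩
  | succ k ih =>
    intro F h
    obtain ⟨h0, F', hF, hh⟩ := h
    refine ⟨fun x hx => h0 _ (ht x hx), _, fun x hx => ?_, (ih hh).mul (h' k)⟩
    have := (hF _ (ht x hx)).comp x (hd x hx)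
    refine HasDerivAt.congr_deriv this ?_
    ring

theorem CMk.comp_arctan {k : ℕ} {e : ℝ} {F : ℝ → ℝ} (h : CMk k 0 F) :
    CMk k (1 - e) (fun q => F (2 * arctan (√(q - 1 + e)))) := by
  refine CMk.comp (t' := fun q => (q + e) ^ (-1 : ℝ) * (q + (e - 1)) ^ (-(1/2) : ℝ)) ?_ ?_ ?_ h
  · intro x hx
    have : 0 < Real.arctan (√(x - 1 + e)) := by
      rw [← Real.arctan_zero]
      exact Real.arctan_strictMono (Real.sqrt_pos.2 (by linarith))
    linarith
  · intro x hx
    have h0 : 0 < x - 1 + e := by linarith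
    have h1 : HasDerivAt (fun q : ℝ => q - 1 + e) 1 x :=
      ((hasDerivAt_id x).sub_const 1).add_const e
    have := ((h1.sqrt h0.ne').arctan).const_mul 2
    refine HasDerivAt.congr_deriv this ?_
    rw [Real.sq_sqrt h0.le, Real.rpow_neg_one, Real.rpow_neg (by linarith), ← Real.sqrt_eq_rpow,
      show x + (e - 1) = x - 1 + e by ring, show 1 + (x - 1 + e) = x + e by ring]
    have : √(x - 1 + e) ≠ 0 := (Real.sqrt_pos.2 h0).ne'
    have : x + e ≠ 0 := by linarith
    field_simp
  · intro k
    exact (CMk.rpow (by linarith) (by norm_num)).mul (CMk.rpow (by linarith) (by norm_num))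

theorem CMk.exists_seq {k : ℕ} {a : ℝ} : ∀ {F : ℝ → ℝ}, CMk k a F →
    ∃ f : ℕ → ℝ → ℝ, f 0 = F ∧ (∀ j < k, ∀ x, a < x → HasDerivAt (f j) (-(f (j+1) x)) x) ∧
      ∀ j ≤ k, ContinuousOn (f j) (Ioi a) ∧ ∀ x, a < x → 0 ≤ f j x := by
  induction k with
  | zero =>
    intro F h
    exact ⟨fun _ => F, rfl, by simp, fun j _ => ⟨h.cont, h.nonneg⟩⟩
  | succ k ih =>
    intro F h
    have hc := h.cont
    obtain ⟨h0, F', hF, h'⟩ := h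
    obtain ⟨f, f0, f1, f2⟩ := ih h'
    refine ⟨fun j => Nat.casesOn j F f, rfl, ?_, ?_⟩
    · intro j hj x hx
      cases j with
      | zero => simp only [f0]; exact hF x hx
      | succ j => exact f1 j (by omega) x hx
    · intro j hj
      cases j with
      | zero => exact ⟨hc, h0⟩
      | succ j => exact f2 j (by omega)

theorem seq_vanish {k : ℕ} {a R : ℝ} (haR : a ≤ R) {f : ℕ → ℝ → ℝ}
    (hf : ∀ j < k, ∀ x, a < x → HasDerivAt (f j) (-(f (j+1) x)) x)
    (h0 : ∀ x, R < x → f 0 x = 0) : ∀ j ≤ k, ∀ x, R < x → f j x = 0 := by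
  intro j
  induction j with
  | zero => intro _; exact h0
  | succ j ih =>
    intro hj x hx
    have h1 := hf j (by omega) x (by linarith)
    have h2 : HasDerivAt (f j) 0 x := by
      refine (hasDerivAt_const x (0:ℝ)).congr_of_eventuallyEq ?_
      filter_upwards [Ioi_mem_nhds hx] with y hy
      exact ih (by omega) y hy
    have := h1.unique h2
    linarith

theorem radial_seq {k : ℕ} {a R : ℝ} (haR : a ≤ R) {f : ℕ → ℝ → ℝ}
    (hf : ∀ j < k, ∀ x, a < x → HasDerivAt (f j) (-(f (j+1) x)) x)
    (hc : ∀ j ≤ k, ContinuousOn (f j) (Ioi a))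
    (h0 : ∀ x, R < x → f 0 x = 0) {q T : ℝ} (hq : a < q) (hT : 0 ≤ T) (hqT : R < q + T ^ 2) :
    ∀ j < k, ∫ r in (0:ℝ)..T, r ^ (2 * j + 1) * f (j + 1) (q + r ^ 2) =
      (j.factorial / 2 : ℝ) * f 0 q := by
  have hv := seq_vanish haR hf h0
  have hD : ∀ j < k, ∀ r, HasDerivAt (fun r => -(1/2) * f j (q + r ^ 2))
      (r * f (j + 1) (q + r ^ 2)) r := by
    intro j hj r
    have h1 : HasDerivAt (fun r : ℝ => q + r ^ 2) (2 * r) r := by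
      simpa using (hasDerivAt_pow 2 r).const_add q
    have h2 := ((hf j hj (q + r ^ 2) (by nlinarith [sq_nonneg r])).comp r h1).const_mul (-(1/2) : ℝ)
    refine HasDerivAt.congr_deriv h2 ?_
    ring
  have hcont : ∀ j ≤ k, Continuous (fun r : ℝ => f j (q + r ^ 2)) := by
    intro j hj
    refine (hc j hj).comp_continuous (by fun_prop) (fun r => ?_)
    have := sq_nonneg r
    show a < q + r ^ 2
    linarith
  intro j
  induction j with
  | zero =>
    intro hj
    have := intervalIntegral.integral_eq_sub_of_hasDerivAt (fun r _ => hD 0 hj r)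
      ((continuous_id.mul (hcont 1 hj)).intervalIntegrable 0 T)
    simp only [zero_add, mul_zero, pow_one] at this ⊢
    rw [this, h0 _ hqT]
    simp
  | succ j ih =>
    intro hj
    have h1 := ih (by omega)
    have hu : ∀ r ∈ uIcc 0 T, HasDerivAt (fun r : ℝ => r ^ (2 * j + 2)) ((2 * j + 2 : ℝ) * r ^ (2 * j + 1)) r := by
      intro r _
      have := hasDerivAt_pow (2 * j + 2) r
      refine this.congr_deriv ?_
      push_cast
      simp
    have h2 := intervalIntegral.integral_mul_deriv_eq_deriv_mul hu (fun r _ => hD (j+1) hj r)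
      (by apply Continuous.intervalIntegrable; fun_prop)
      ((continuous_id.mul (hcont (j+1+1) hj)).intervalIntegrable 0 T)
    have h3 : ∀ r : ℝ, r ^ (2 * (j + 1) + 1) * f (j + 1 + 1) (q + r ^ 2) =
        r ^ (2 * j + 2) * (r * f (j + 1 + 1) (q + r ^ 2)) := by
      intro r; ring
    simp_rw [h3]
    rw [h2, hv _ hj.le _ hqT]
    have h4 : ∀ r : ℝ, (2 * j + 2 : ℝ) * r ^ (2 * j + 1) * (-(1 / 2) * f (j + 1) (q + r ^ 2)) =
      -(j + 1) * (r ^ (2 * j + 1) * f (j + 1) (q + r ^ 2)) := by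
      intro r; ring
    simp_rw [h4]
    rw [intervalIntegral.integral_const_mul, h1]
    simp [Nat.factorial_succ]
    ring

theorem inner_w {k : ℕ} {q R T A : ℝ} {m : ℝ → ℝ} (hT : 0 ≤ T) (hqT : R < q + T ^ 2)
    (hv : ∀ x, R < x → m x = 0)
    (h : ∫ r in (0:ℝ)..T, r ^ (2 * k + 1) * m (q + r ^ 2) = A) :
    ∫ w : EuclideanSpace ℝ (Fin (2 * (k + 1))), m (q + ‖w‖ ^ 2) =
      ((2 * (k + 1) : ℕ) * (volume : Measure (EuclideanSpace ℝ (Fin (2 * (k + 1))))).real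
        (Metric.ball 0 1)) * A := by
  have h1 := integral_fun_norm_addHaar
    (volume : Measure (EuclideanSpace ℝ (Fin (2 * (k + 1))))) (fun r => m (q + r ^ 2))
  rw [h1, ← h]
  have h2 : ∫ y in Ioi (0:ℝ), y ^ (Module.finrank ℝ (EuclideanSpace ℝ (Fin (2 * (k + 1)))) - 1) •
      m (q + y ^ 2) = ∫ r in (0:ℝ)..T, r ^ (2 * k + 1) * m (q + r ^ 2) := by
    rw [intervalIntegral.integral_of_le hT]
    simp only [finrank_euclideanSpace, Fintype.card_fin, smul_eq_mul]
    rw [show 2 * (k + 1) - 1 = 2 * k + 1 by omega]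
    apply setIntegral_eq_of_subset_of_forall_sdiff_eq_zero measurableSet_Ioi Ioc_subset_Ioi_self
    intro x hx
    have : T < x := by
      by_contra hh
      exact hx.2 ⟨hx.1, not_lt.1 hh⟩
    rw [hv _ (by nlinarith), mul_zero]
  rw [h2]
  simp [mul_assoc]

theorem ray_int {a R : ℝ} (ha : a < 1) {N F : ℝ → ℝ}
    (hd : ∀ x, a < x → HasDerivAt N (-F x) x) (hc : ContinuousOn F (Ioi a))
    (hN : ∀ x, R < x → N x = 0) (hF : ∀ x, R < x → F x = 0) {t : ℝ} (ht : 1 ≤ t) :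
    ∫ r in Ici t, r * F (r ^ 2) = 1 / 2 * N (t ^ 2) := by
  set T := t + |R| + 1
  have hT : t ≤ T := by have := abs_nonneg R; simp only [T]; linarith
  have hRT : ∀ r, T ≤ r → R < r ^ 2 := by
    intro r hr
    have h1 := abs_nonneg R
    have h2 := le_abs_self R
    have : R + 1 ≤ r := by simp only [T] at hr; linarith
    have : 1 ≤ r := by linarith
    nlinarith
  have hpos : ∀ r, t ≤ r → a < r ^ 2 := by intro r hr; nlinarith
  have h1 : ∫ r in t..T, r * F (r ^ 2) = -(1/2) * N (T ^ 2) - (-(1/2) * N (t ^ 2)) := by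
    apply intervalIntegral.integral_eq_sub_of_hasDerivAt (f := fun r => -(1/2) * N (r ^ 2))
    · intro r hr
      rw [uIcc_of_le hT] at hr
      have := (HasDerivAt.comp (h₂ := N) (h := fun r : ℝ => r ^ 2) r (hd (r^2) (hpos r hr.1)) (hasDerivAt_pow 2 r)).const_mul (-(1/2) : ℝ)
      refine this.congr_deriv ?_
      simp
      ring
    · apply ContinuousOn.intervalIntegrable
      rw [uIcc_of_le hT]
      apply continuousOn_id.mul
      exact hc.comp (by fun_prop) (fun r hr => hpos r hr.1)
  rw [hN _ (hRT T le_rfl), intervalIntegral.integral_of_le hT, ← integral_Icc_eq_integral_Ioc] at h1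
  rw [setIntegral_eq_of_subset_of_forall_sdiff_eq_zero measurableSet_Ici Icc_subset_Ici_self
    (t := Ici t) (s := Icc t T)]
  · rw [h1]; ring
  · intro r hr
    have : T < r := by
      by_contra hh
      exact hr.2 ⟨hr.1, not_lt.1 hh⟩
    rw [hF _ (hRT r this.le), mul_zero]

theorem cond_iff {t b r : ℝ} (ht : t ∈ Icc 0 (π/2)) (hb : b ∈ Ioo (-π) π) (hr : 0 < r) :
    (1 ≤ cos t * (r * cos b) + sin t * (r * sin b) ∧ 1 ≤ cos t * (r * cos b) - sin t * (r * sin b))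
      ↔ 1 ≤ r * cos (|b| + t) := by
  have hs : 0 ≤ sin t := sin_nonneg_of_mem_Icc ⟨ht.1, by linarith [ht.2, pi_pos]⟩
  rcases le_total 0 b with h | h
  · rw [abs_of_nonneg h, cos_add]
    have h2 : 0 ≤ sin b := sin_nonneg_of_mem_Icc ⟨h, hb.2.le⟩
    have h3 : 0 ≤ r * (sin t * sin b) := by positivity
    constructor
    · rintro ⟨_, h⟩; linarith
    · intro h; constructor <;> linarith
  · rw [abs_of_nonpos h, cos_add, cos_neg, sin_neg]
    have h2 : 0 ≤ sin (-b) := sin_nonneg_of_mem_Icc ⟨by linarith, by linarith [hb.1]⟩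
    rw [sin_neg] at h2
    have h3 : 0 ≤ r * (sin t * (-sin b)) := by positivity
    constructor
    · rintro ⟨h, _⟩; linarith
    · intro h; constructor <;> linarith

theorem plane_int {a R : ℝ} (ha : a < 1) {N F : ℝ → ℝ}
    (hd : ∀ x, a < x → HasDerivAt N (-F x) x) (hc : ContinuousOn F (Ioi a))
    (hN : ∀ x, R < x → N x = 0) (hF : ∀ x, R < x → F x = 0)
    {t : ℝ} (ht : t ∈ Icc 0 (π/2)) :
    ∫ p : ℝ × ℝ, (if 1 ≤ cos t * p.1 + sin t * p.2 ∧ 1 ≤ cos t * p.1 - sin t * p.2 then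
      F (p.1 ^ 2 + p.2 ^ 2) else 0) = ∫ b in t..(π/2), N (1 / cos b ^ 2) := by
  rw [← integral_comp_polarCoord_symm]
  set G : ℝ × ℝ → ℝ := fun p => p.1 * (if 1 ≤ p.1 * cos (|p.2| + t) then F (p.1 ^ 2) else 0) with hG
  have h1 : ∫ p in polarCoord.target, p.1 • (if 1 ≤ cos t * (polarCoord.symm p).1 + sin t * (polarCoord.symm p).2 ∧ 1 ≤ cos t * (polarCoord.symm p).1 - sin t * (polarCoord.symm p).2 then
      F ((polarCoord.symm p).1 ^ 2 + (polarCoord.symm p).2 ^ 2) else 0) =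
      ∫ p in Ioi (0:ℝ) ×ˢ Ioo (-π) π, G p := by
    rw [polarCoord_target]
    apply setIntegral_congr_fun (measurableSet_Ioi.prod measurableSet_Ioo)
    rintro ⟨r, b⟩ ⟨hr, hb⟩
    simp only [polarCoord_symm_apply, hG, smul_eq_mul]
    rw [if_congr (cond_iff ht hb hr) rfl rfl]
    rw [show (r * cos b) ^ 2 + (r * sin b) ^ 2 = r ^ 2 by
      have := sin_sq_add_cos_sq b; linear_combination r ^ 2 * this]
  rw [h1]
  have hint : IntegrableOn G (Ioi (0:ℝ) ×ˢ Ioo (-π) π) := by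
    set H : ℝ × ℝ → ℝ := fun p => p.1 * F (max (p.1 ^ 2) 1) with hH
    have hHc : Continuous H := by
      refine continuous_fst.mul ?_
      exact hc.comp_continuous (by fun_prop) (fun p => lt_of_lt_of_le ha (le_max_right _ _))
    have hGH : G = indicator {p : ℝ × ℝ | 1 ≤ p.1 * cos (|p.2| + t)} H := by
      funext p
      simp only [hG, hH, indicator, mem_ofPred_eq]
      split_ifs with h
      · have h2 : 1 ≤ p.1 ^ 2 := by
          have h3 := abs_cos_le_one (|p.2| + t)
          have h4 : 1 ≤ |p.1| * |cos (|p.2| + t)| := by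
            rw [← abs_mul]; exact h.trans (le_abs_self _)
          have h5 : 1 ≤ |p.1| := by nlinarith [abs_nonneg p.1]
          rw [← sq_abs]; nlinarith
        rw [max_eq_left h2]
      · simp
    rw [hGH]
    refine IntegrableOn.indicator ?_ (measurableSet_le measurable_const (by fun_prop))
    have hK : IntegrableOn H (Icc 0 (|R| + 1) ×ˢ Icc (-π) π) :=
      hHc.continuousOn.integrableOn_compact (isCompact_Icc.prod isCompact_Icc)
    refine hK.of_forall_sdiff_eq_zero (measurableSet_Ioi.prod measurableSet_Ioo) ?_
    rintro ⟨r, b⟩ ⟨⟨hr, hb⟩, hh⟩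
    have hr0 : (0:ℝ) < r := hr
    have : |R| + 1 < r := by
      by_contra h
      exact hh ⟨⟨hr0.le, not_lt.1 h⟩, ⟨hb.1.le, hb.2.le⟩⟩
    have h1 := abs_nonneg R
    have h2 := le_abs_self R
    simp only [hH]
    rw [hF, mul_zero]
    exact lt_of_lt_of_le (by nlinarith) (le_max_left _ _)
  have hray : ∀ b, ∫ r in Ioi (0:ℝ), G (r, b) =
      if 0 < cos (|b| + t) then 1 / 2 * N (1 / cos (|b| + t) ^ 2) else 0 := by
    intro b
    simp only [hG]
    split_ifs with hcos
    · have h2 := ray_int ha hd hc hN hF (t := 1 / cos (|b| + t))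
        (by rw [le_div_iff₀ hcos]; linarith [cos_le_one (|b| + t)])
      rw [div_pow, one_pow] at h2
      rw [← h2]
      have hsub : Ici (1 / cos (|b| + t)) ⊆ Ioi 0 := by
        intro r hr
        have : 0 < 1 / cos (|b| + t) := by positivity
        exact lt_of_lt_of_le this hr
      rw [setIntegral_eq_of_subset_of_forall_sdiff_eq_zero measurableSet_Ioi hsub]
      · apply setIntegral_congr_fun measurableSet_Ici
        intro r hr
        have : 1 ≤ r * cos (|b| + t) := by
          have : 1 / cos (|b| + t) ≤ r := hr
          rwa [div_le_iff₀ hcos] at this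
        simp [this]
      · intro r hr
        have : ¬ 1 ≤ r * cos (|b| + t) := by
          intro h
          apply hr.2
          show 1 / cos (|b| + t) ≤ r
          rwa [div_le_iff₀ hcos]
        simp [this]
    · rw [setIntegral_eq_zero_of_forall_eq_zero]
      intro r hr
      have : ¬ 1 ≤ r * cos (|b| + t) := by
        intro h
        have : r * cos (|b| + t) ≤ 0 := mul_nonpos_of_nonneg_of_nonpos (le_of_lt hr) (not_lt.1 hcos)
        linarith
      simp [this]
  rw [Measure.volume_eq_prod] at hint ⊢
  unfold IntegrableOn at hint
  rw [← Measure.prod_restrict] at hint ⊢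
  rw [integral_prod_symm _ hint]
  simp_rw [hray]
  set f : ℝ → ℝ := fun b => if b < π then
    (if 0 < cos (b + t) then 1 / 2 * N (1 / cos (b + t) ^ 2) else 0) else 0 with hf
  have e1 : ∫ b in Ioo (-π) π, (if 0 < cos (|b| + t) then 1 / 2 * N (1 / cos (|b| + t) ^ 2) else 0)
      = ∫ b, f |b| := by
    rw [← integral_indicator measurableSet_Ioo]
    congr 1
    funext b
    simp only [indicator, hf, mem_Ioo, ← abs_lt]
  rw [e1, integral_comp_abs]
  have ht2 : t ≤ π / 2 := ht.2
  have ht1 : 0 ≤ t := ht.1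
  have hpi := pi_pos
  have e2 : ∫ b in Ioi 0, f b = ∫ b in Ioo 0 (π / 2 - t), 1 / 2 * N (1 / cos (b + t) ^ 2) := by
    rw [setIntegral_eq_of_subset_of_forall_sdiff_eq_zero measurableSet_Ioi
      (s := Ioo 0 (π / 2 - t)) Ioo_subset_Ioi_self]
    · apply setIntegral_congr_fun measurableSet_Ioo
      intro b hb
      simp only [hf]
      rw [if_pos (by linarith [hb.2]), if_pos (cos_pos_of_mem_Ioo ⟨by linarith [hb.1], by linarith [hb.2]⟩)]
    · rintro b ⟨hb, hb2⟩
      have hb0 : (0:ℝ) < b := hb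
      have hb3 : π / 2 - t ≤ b := by
        by_contra h
        exact hb2 ⟨hb0, not_le.1 h⟩
      simp only [hf]
      split_ifs with h3 h4
      · exact absurd h4 (not_lt.2 (cos_nonpos_of_pi_div_two_le_of_le (by linarith) (by linarith)))
      · rfl
      · rfl
  rw [e2, ← integral_Ioc_eq_integral_Ioo, ← intervalIntegral.integral_of_le (by linarith),
    intervalIntegral.integral_const_mul,
    intervalIntegral.integral_comp_add_right (fun b => N (1 / cos b ^ 2))]
  simp
section geom
variable {E : Type*} [NormedAddCommGroup E] [InnerProductSpace ℝ E] [FiniteDimensional ℝ E]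

theorem exists_unit_perp (h2 : 2 ≤ Module.finrank ℝ E) (x : E) :
    ∃ f : E, ‖f‖ = 1 ∧ ⟪x, f⟫ = 0 := by
  have h1 := Submodule.finrank_add_finrank_orthogonal (𝕜 := ℝ) (Submodule.span ℝ {x})
  have h3 : Module.finrank ℝ (Submodule.span ℝ {x}) ≤ 1 :=
    (finrank_span_le_card {x}).trans (by simp)
  have h4 : (Submodule.span ℝ {x})ᗮ ≠ ⊥ := by
    intro h
    rw [h, finrank_bot] at h1
    omega
  obtain ⟨f, hf, hf0⟩ := Submodule.exists_mem_ne_zero_of_ne_bot h4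
  refine ⟨(‖f‖)⁻¹ • f, ?_, ?_⟩
  · rw [norm_smul, norm_inv, norm_norm, inv_mul_cancel₀ (norm_ne_zero_iff.2 hf0)]
  · rw [inner_smul_right, Submodule.mem_orthogonal_singleton_iff_inner_right.1 hf, mul_zero]

theorem exists_frame (h2 : 2 ≤ Module.finrank ℝ E) {x y : E} (hx : ‖x‖ = 1) (hy : ‖y‖ = 1) :
    ∃ e₁ e₂ : E, ‖e₁‖ = 1 ∧ ‖e₂‖ = 1 ∧ ⟪e₁, e₂⟫ = 0 ∧
      x = cos (arccos ⟪x, y⟫ / 2) • e₁ + sin (arccos ⟪x, y⟫ / 2) • e₂ ∧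
      y = cos (arccos ⟪x, y⟫ / 2) • e₁ - sin (arccos ⟪x, y⟫ / 2) • e₂ := by
  have hxx : ⟪x, x⟫ = 1 := by rw [real_inner_self_eq_norm_sq, hx]; norm_num
  have hyy : ⟪y, y⟫ = 1 := by rw [real_inner_self_eq_norm_sq, hy]; norm_num
  have habs : |⟪x, y⟫| ≤ 1 := by simpa [hx, hy] using abs_real_inner_le_norm x y
  set t := arccos ⟪x, y⟫ with ht
  have hcos : cos t = ⟪x, y⟫ := cos_arccos (abs_le.1 habs).1 (abs_le.1 habs).2
  have hsc := sin_sq_add_cos_sq t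
  have key : ⟪y - cos t • x, y - cos t • x⟫ = sin t ^ 2 := by
    simp only [inner_sub_left, inner_sub_right, inner_smul_left, inner_smul_right, hxx, hyy,
      real_inner_comm x y, ← hcos]
    simp only [RCLike.conj_to_real]
    linear_combination -hsc
  have hperp : ⟪x, y - cos t • x⟫ = 0 := by
    rw [inner_sub_right, inner_smul_right, hxx, hcos]; ring
  obtain ⟨f, hf1, hf0, hyf⟩ : ∃ f : E, ‖f‖ = 1 ∧ ⟪x, f⟫ = 0 ∧ y = cos t • x + sin t • f := by
    by_cases hs : sin t = 0
    · obtain ⟨f, h1, h0⟩ := exists_unit_perp h2 x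
      refine ⟨f, h1, h0, ?_⟩
      rw [hs] at key
      have : y - cos t • x = 0 := by
        rw [← inner_self_eq_zero (𝕜 := ℝ), key]; norm_num
      rw [hs, zero_smul, add_zero]
      exact sub_eq_zero.1 this
    · refine ⟨(sin t)⁻¹ • (y - cos t • x), ?_, ?_, ?_⟩
      · have h3 : ‖(sin t)⁻¹ • (y - cos t • x)‖ ^ 2 = 1 := by
          rw [← real_inner_self_eq_norm_sq, inner_smul_left, inner_smul_right, key]
          simp only [RCLike.conj_to_real]
          field_simp
        have h4 := norm_nonneg ((sin t)⁻¹ • (y - cos t • x))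
        nlinarith
      · rw [inner_smul_right, hperp, mul_zero]
      · rw [smul_smul, mul_inv_cancel₀ hs, one_smul]; abel
  have hff : ⟪f, f⟫ = 1 := by rw [real_inner_self_eq_norm_sq, hf1]; norm_num
  have hfx : ⟪f, x⟫ = 0 := by rw [real_inner_comm, hf0]
  have hh := sin_sq_add_cos_sq (t / 2)
  have hct : cos t = 2 * cos (t/2) ^ 2 - 1 := by rw [← cos_two_mul]; ring_nf
  have hst : sin t = 2 * sin (t/2) * cos (t/2) := by rw [← sin_two_mul]; ring_nf
  have hn : ∀ v : E, ⟪v, v⟫ = 1 → ‖v‖ = 1 := by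
    intro v hv
    rw [real_inner_self_eq_norm_sq] at hv
    nlinarith [norm_nonneg v]
  refine ⟨cos (t/2) • x + sin (t/2) • f, sin (t/2) • x - cos (t/2) • f, hn _ ?_, hn _ ?_, ?_, ?_, ?_⟩
  · simp only [inner_add_left, inner_add_right, inner_smul_left, inner_smul_right, hxx, hff, hf0,
      hfx, RCLike.conj_to_real]
    linear_combination hh
  · simp only [inner_sub_left, inner_sub_right, inner_smul_left, inner_smul_right, hxx, hff, hf0,
      hfx, RCLike.conj_to_real]
    linear_combination hh
  · simp only [inner_add_left, inner_sub_right, inner_smul_left, inner_smul_right, hxx, hff, hf0,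
      hfx, RCLike.conj_to_real]
    ring
  · match_scalars
    · linear_combination -hh
    · ring
  · rw [hyf, hct, hst]
    match_scalars
    · linear_combination hh
    · ring

variable [MeasurableSpace E] [BorelSpace E]

theorem exists_coord {n : ℕ} (hfin : Module.finrank ℝ E = 2 + n) {e₁ e₂ : E} (h1 : ‖e₁‖ = 1)
    (h2 : ‖e₂‖ = 1) (h12 : ⟪e₁, e₂⟫ = 0) :
    ∃ T : E ≃ᵐ (ℝ × ℝ) × EuclideanSpace ℝ (Fin n), MeasurePreserving T volume volume ∧
      ∀ z, (T z).1 = (⟪z, e₁⟫, ⟪z, e₂⟫) ∧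
        ‖z‖ ^ 2 = (T z).1.1 ^ 2 + (T z).1.2 ^ 2 + ‖(T z).2‖ ^ 2 := by
  obtain ⟨b, hb⟩ := Orthonormal.exists_orthonormalBasis_extension_of_card_eq (𝕜 := ℝ) (E := E)
    (ι := Fin 2 ⊕ Fin n) (by simp [hfin]) (v := Sum.elim ![e₁, e₂] (fun _ => 0))
    (s := range Sum.inl) (by
      rw [orthonormal_iff_ite]
      rintro ⟨_, i, rfl⟩ ⟨_, j, rfl⟩
      have h11 : ⟪e₁, e₁⟫ = 1 := by rw [real_inner_self_eq_norm_sq, h1]; norm_num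
      have h22 : ⟪e₂, e₂⟫ = 1 := by rw [real_inner_self_eq_norm_sq, h2]; norm_num
      have h21 : ⟪e₂, e₁⟫ = 0 := by rw [real_inner_comm, h12]
      fin_cases i <;> fin_cases j <;> simp [h11, h22, h12, h21, -inner_self_eq_norm_sq_to_K])
  have hb0 : b (Sum.inl 0) = e₁ := hb _ ⟨0, rfl⟩
  have hb1 : b (Sum.inl 1) = e₂ := hb _ ⟨1, rfl⟩
  let T1 : E ≃ᵐ EuclideanSpace ℝ (Fin 2 ⊕ Fin n) := b.measurableEquiv
  let T2 := (MeasurableEquiv.toLp 2 (Fin 2 ⊕ Fin n → ℝ)).symm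
  let T3 := MeasurableEquiv.sumPiEquivProdPi (fun _ : Fin 2 ⊕ Fin n => ℝ)
  let T4 := MeasurableEquiv.prodCongr (MeasurableEquiv.finTwoArrow (α := ℝ))
    (MeasurableEquiv.toLp 2 (Fin n → ℝ))
  have m4 : MeasurePreserving T4 volume volume :=
    (volume_preserving_finTwoArrow ℝ).prod (PiLp.volume_preserving_toLp (Fin n))
  refine ⟨((T1.trans T2).trans T3).trans T4, ?_, ?_⟩
  · exact m4.comp ((volume_measurePreserving_sumPiEquivProdPi (fun _ : Fin 2 ⊕ Fin n => ℝ)).comp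
      ((PiLp.volume_preserving_ofLp _).comp b.measurePreserving_repr))
  · intro z
    have hz : (((T1.trans T2).trans T3).trans T4) z =
      ((b.repr z (Sum.inl 0), b.repr z (Sum.inl 1)), WithLp.toLp 2 (fun j => b.repr z (Sum.inr j))) := rfl
    rw [hz]
    constructor
    · simp only [b.repr_apply_apply, hb0, hb1, real_inner_comm]
    · rw [← b.repr.norm_map z, EuclideanSpace.norm_sq_eq, EuclideanSpace.norm_sq_eq,
        Fintype.sum_sum_type]
      simp

theorem kernel_int {n : ℕ} (hfin : Module.finrank ℝ E = 2 + n) {a R C : ℝ} (ha : a < 1)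
    {N F m : ℝ → ℝ}
    (hd : ∀ x, a < x → HasDerivAt N (-F x) x) (hc : ContinuousOn F (Ioi a))
    (hN : ∀ x, R < x → N x = 0) (hF : ∀ x, R < x → F x = 0)
    (hmc : Continuous m) (hm : ∀ x, R < x → m x = 0)
    (hmF : ∀ q, 1 ≤ q → ∫ w : EuclideanSpace ℝ (Fin n), m (q + ‖w‖ ^ 2) = C * F q)
    {x y : E} (hx : ‖x‖ = 1) (hy : ‖y‖ = 1) :
    ∫ z : E, (if 1 ≤ ⟪z, x⟫ ∧ 1 ≤ ⟪z, y⟫ then m (‖z‖ ^ 2) else 0) =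
      C * ∫ b in (arccos ⟪x, y⟫ / 2)..(π/2), N (1 / cos b ^ 2) := by
  obtain ⟨e₁, e₂, h1, h2, h12, hxe, hye⟩ := exists_frame (by omega) hx hy
  have hC := plane_int ha hd hc hN hF (t := arccos ⟪x, y⟫ / 2)
    ⟨by have := arccos_nonneg ⟪x, y⟫; linarith, by have := arccos_le_pi ⟪x, y⟫; linarith⟩
  set t := arccos ⟪x, y⟫ / 2
  obtain ⟨T, hT, hTz⟩ := exists_coord hfin h1 h2 h12
  rw [← hC]
  set h : (ℝ × ℝ) × EuclideanSpace ℝ (Fin n) → ℝ := fun p =>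
    if 1 ≤ cos t * p.1.1 + sin t * p.1.2 ∧ 1 ≤ cos t * p.1.1 - sin t * p.1.2 then
      m (p.1.1 ^ 2 + p.1.2 ^ 2 + ‖p.2‖ ^ 2) else 0 with hh
  have e1 : ∀ z, (if 1 ≤ ⟪z, x⟫ ∧ 1 ≤ ⟪z, y⟫ then m (‖z‖ ^ 2) else 0) = h (T z) := by
    intro z
    have hzx : ⟪z, x⟫ = cos t * ⟪z, e₁⟫ + sin t * ⟪z, e₂⟫ := by
      conv_lhs => rw [hxe]
      rw [inner_add_right, inner_smul_right, inner_smul_right]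
    have hzy : ⟪z, y⟫ = cos t * ⟪z, e₁⟫ - sin t * ⟪z, e₂⟫ := by
      conv_lhs => rw [hye]
      rw [inner_sub_right, inner_smul_right, inner_smul_right]
    simp only [hh]
    rw [(hTz z).2, hzx, hzy]
    simp only [(hTz z).1]
  simp_rw [e1]
  rw [hT.integral_comp T.measurableEmbedding h]
  have hint : Integrable h volume := by
    have hcs : HasCompactSupport (fun p : (ℝ × ℝ) × EuclideanSpace ℝ (Fin n) =>
        m (p.1.1 ^ 2 + p.1.2 ^ 2 + ‖p.2‖ ^ 2)) := by
      apply HasCompactSupport.of_support_subset_isCompact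
        (isCompact_closedBall (0 : (ℝ × ℝ) × EuclideanSpace ℝ (Fin n)) (|R| + 1))
      intro p hp
      by_contra hpn
      apply hp
      apply hm
      rw [mem_closedBall_zero_iff, not_le, Prod.norm_def, Prod.norm_def, lt_max_iff, lt_max_iff] at hpn
      have hR := le_abs_self R
      have hR0 := abs_nonneg R
      have q1 := sq_nonneg p.1.1
      have q2 := sq_nonneg p.1.2
      have q3 := sq_nonneg ‖p.2‖
      rcases hpn with (hp | hp) | hp
      · have : |R| + 1 < ‖p.1.1‖ ^ 2 := by nlinarith
        rw [Real.norm_eq_abs, sq_abs] at this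
        linarith
      · have : |R| + 1 < ‖p.1.2‖ ^ 2 := by nlinarith
        rw [Real.norm_eq_abs, sq_abs] at this
        linarith
      · have : |R| + 1 < ‖p.2‖ ^ 2 := by nlinarith
        linarith
    have hci : Integrable (fun p : (ℝ × ℝ) × EuclideanSpace ℝ (Fin n) =>
        m (p.1.1 ^ 2 + p.1.2 ^ 2 + ‖p.2‖ ^ 2)) volume :=
      Continuous.integrable_of_hasCompactSupport (by fun_prop) hcs
    have hS : MeasurableSet ({p : (ℝ × ℝ) × EuclideanSpace ℝ (Fin n) | 1 ≤ cos t * p.1.1 + sin t * p.1.2} ∩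
      {p | 1 ≤ cos t * p.1.1 - sin t * p.1.2}) :=
      (isClosed_le (by fun_prop) (by fun_prop)).measurableSet.inter
        (isClosed_le (by fun_prop) (by fun_prop)).measurableSet
    refine (hci.indicator hS).congr (Filter.Eventually.of_forall fun p => ?_)
    simp only [hh, indicator, mem_inter_iff, mem_ofPred_eq]
  rw [Measure.volume_eq_prod] at hint ⊢
  rw [integral_prod _ hint, ← integral_const_mul]
  congr 1
  funext p
  simp only [hh]
  split_ifs with hcond
  · apply hmF
    have h3 : 1 ≤ cos t * p.1 := by linarith [hcond.1, hcond.2]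
    have h5 : 1 ≤ |cos t| * |p.1| := by rw [← abs_mul]; exact h3.trans (le_abs_self _)
    have h6 := abs_cos_le_one t
    have h7 : 1 ≤ |p.1| := by nlinarith [abs_nonneg p.1]
    have h8 : 1 ≤ p.1 ^ 2 := by rw [← sq_abs]; nlinarith
    nlinarith [sq_nonneg p.2]
  · simp

theorem kernel_psd {ι : Type*} [Fintype ι] {R : ℝ} {m : ℝ → ℝ}
    (hmc : Continuous m) (hm : ∀ x, R < x → m x = 0) (hm0 : ∀ x, 0 ≤ m x) (x : ι → E) (c : ι → ℝ) :
    0 ≤ ∑ i, ∑ j, c i * c j *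
      ∫ z : E, (if 1 ≤ ⟪z, x i⟫ ∧ 1 ≤ ⟪z, x j⟫ then m (‖z‖ ^ 2) else 0) := by
  have hci : Integrable (fun z : E => m (‖z‖ ^ 2)) volume := by
    refine Continuous.integrable_of_hasCompactSupport (by fun_prop) ?_
    apply HasCompactSupport.of_support_subset_isCompact
        (isCompact_closedBall (0 : E) (|R| + 1))
    intro p hp
    by_contra hpn
    apply hp
    apply hm
    rw [mem_closedBall_zero_iff, not_le] at hpn
    nlinarith [le_abs_self R, abs_nonneg R]
  have hint : ∀ i j, Integrable (fun z : E => (if 1 ≤ ⟪z, x i⟫ ∧ 1 ≤ ⟪z, x j⟫ then m (‖z‖ ^ 2) else 0)) := by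
    intro i j
    have hS : MeasurableSet ({z : E | 1 ≤ ⟪z, x i⟫} ∩ {z : E | 1 ≤ ⟪z, x j⟫}) :=
      (isClosed_le (by fun_prop) (by fun_prop)).measurableSet.inter
        (isClosed_le (by fun_prop) (by fun_prop)).measurableSet
    refine (hci.indicator hS).congr (Filter.Eventually.of_forall fun p => ?_)
    simp only [indicator, mem_inter_iff, mem_ofPred_eq]
  have : ∑ i, ∑ j, c i * c j *
      ∫ z : E, (if 1 ≤ ⟪z, x i⟫ ∧ 1 ≤ ⟪z, x j⟫ then m (‖z‖ ^ 2) else 0) =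
      ∫ z : E, (∑ i, c i * (if 1 ≤ ⟪z, x i⟫ then 1 else 0)) ^ 2 * m (‖z‖ ^ 2) := by
    simp_rw [← integral_const_mul]
    have h1 : ∀ i, ∑ j, ∫ z : E, c i * c j * (if 1 ≤ ⟪z, x i⟫ ∧ 1 ≤ ⟪z, x j⟫ then m (‖z‖ ^ 2) else 0)
        = ∫ z : E, ∑ j, c i * c j * (if 1 ≤ ⟪z, x i⟫ ∧ 1 ≤ ⟪z, x j⟫ then m (‖z‖ ^ 2) else 0) :=
      fun i => (integral_finsetSum _ (fun j _ => (hint i j).const_mul _)).symm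
    simp_rw [h1]
    rw [← integral_finsetSum _ (fun i _ => integrable_finsetSum _ (fun j _ => (hint i j).const_mul _))]
    congr 1
    funext z
    rw [sq (∑ i, _), Finset.sum_mul_sum, Finset.sum_mul]
    refine Finset.sum_congr rfl (fun i _ => ?_)
    rw [Finset.sum_mul]
    refine Finset.sum_congr rfl (fun j _ => ?_)
    by_cases h1 : 1 ≤ ⟪z, x i⟫ <;> by_cases h2 : 1 ≤ ⟪z, x j⟫ <;> simp [h1, h2]
  rw [this]
  exact integral_nonneg (fun z => mul_nonneg (sq_nonneg _) (hm0 _))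

end geom

section assemble
variable {E : Type*} [NormedAddCommGroup E] [InnerProductSpace ℝ E] [FiniteDimensional ℝ E]
  [MeasurableSpace E] [BorelSpace E]

theorem eta_psd {ι : Type*} [Fintype ι] {k : ℕ} (hfin : Module.finrank ℝ E = 2 + 2 * (k + 1))
    {n : ℝ → ℝ} {e eta : ℝ} (he : 0 < e) (heta : 0 < eta) (hn : CMk (k + 2) 0 n)
    (hv : ∀ x, π - e ≤ x → n x = 0) (x : ι → E) (hx : ∀ i, ‖x i‖ = 1) (c : ι → ℝ) :
    0 ≤ ∑ i, ∑ j, c i * c j * ∫ b in (arccos ⟪x i, x j⟫ / 2)..(π/2),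
      n (2 * arctan √(1 / cos b ^ 2 - 1 + eta)) := by
  have hN := hn.comp_arctan (e := eta)
  obtain ⟨f, f0, f1, f2⟩ := hN.exists_seq
  set R := 1 + tan ((π - min e 1) / 2) ^ 2 with hR
  have hmin : 0 < min e 1 := lt_min he one_pos
  have hmin1 : min e 1 ≤ 1 := min_le_right _ _
  have hpi : 3 < π := pi_gt_three
  have hR1 : 1 ≤ R := by have := sq_nonneg (tan ((π - min e 1) / 2)); linarith
  have haR : 1 - eta ≤ R := by linarith
  have hv0 : ∀ q, R < q → f 0 q = 0 := by
    intro q hq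
    rw [f0]
    apply hv
    have h1 : tan ((π - min e 1) / 2) ≤ √(q - 1 + eta) := by
      apply Real.le_sqrt_of_sq_le
      linarith
    have h2 := Real.arctan_mono h1
    rw [arctan_tan (by linarith) (by linarith)] at h2
    have := min_le_left e 1
    linarith
  have hvj := seq_vanish haR f1 hv0
  set m : ℝ → ℝ := fun q => f (k + 2) (max q 1) with hm
  have ha1 : 1 - eta < 1 := by linarith
  have hmc : Continuous m := (f2 (k+2) le_rfl).1.comp_continuous (by fun_prop)
    (fun q => lt_of_lt_of_le ha1 (le_max_right _ _))
  have hm0 : ∀ q, 0 ≤ m q := fun q => (f2 (k+2) le_rfl).2 _ (lt_of_lt_of_le ha1 (le_max_right _ _))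
  have hmv : ∀ q, R < q → m q = 0 := fun q hq =>
    hvj (k+2) le_rfl _ (lt_of_lt_of_le hq (le_max_left _ _))
  set V := (volume : Measure (EuclideanSpace ℝ (Fin (2 * (k + 1))))).real (Metric.ball 0 1) with hV
  have hVpos : 0 < V := by
    rw [hV, Measure.real]
    exact ENNReal.toReal_pos (Metric.measure_ball_pos _ _ one_pos).ne' measure_ball_lt_top.ne
  set C := ((2 * (k + 1) : ℕ) * V) * (k.factorial / 2 : ℝ) with hC
  have hCpos : 0 < C := by
    have : (0:ℝ) < k.factorial := by exact_mod_cast k.factorial_pos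
    positivity
  have hmF : ∀ q, 1 ≤ q → ∫ w : EuclideanSpace ℝ (Fin (2 * (k+1))), m (q + ‖w‖ ^ 2) = C * f 1 q := by
    intro q hq
    have hqT : R < q + (R + 1) ^ 2 := by nlinarith
    have h1 := radial_seq (k := k + 1) (f := fun j => f (j + 1)) haR
      (fun j hj => f1 (j+1) (by omega)) (fun j hj => (f2 (j+1) (by omega)).1)
      (hvj 1 (by omega)) (q := q) (T := R + 1) (by linarith) (by linarith) hqT k (by omega)
    have h2 := inner_w (k := k) (m := m) (q := q) (R := R) (T := R + 1)
      (A := (k.factorial / 2 : ℝ) * f 1 q) (by linarith) hqT hmv ?_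
    · rw [h2, hC, hV]; ring
    · rw [← h1]
      congr 1
      funext r
      simp only [hm]
      rw [max_eq_left (by nlinarith [sq_nonneg r])]
  have key : ∀ i j, ∫ z : E, (if 1 ≤ ⟪z, x i⟫ ∧ 1 ≤ ⟪z, x j⟫ then m (‖z‖ ^ 2) else 0) =
      C * ∫ b in (arccos ⟪x i, x j⟫ / 2)..(π/2), n (2 * arctan √(1 / cos b ^ 2 - 1 + eta)) := by
    intro i j
    have := kernel_int hfin ha1 (f1 0 (by omega)) (f2 1 (by omega)).1 hv0 (hvj 1 (by omega))
      hmc hmv hmF (hx i) (hx j)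
    rw [this, f0]
  have hpsd := kernel_psd hmc hmv hm0 x c
  simp_rw [key] at hpsd
  have e1 : ∀ i j, c i * c j * (C * ∫ b in (arccos ⟪x i, x j⟫ / 2)..(π/2), n (2 * arctan √(1 / cos b ^ 2 - 1 + eta)))
    = C * (c i * c j * ∫ b in (arccos ⟪x i, x j⟫ / 2)..(π/2), n (2 * arctan √(1 / cos b ^ 2 - 1 + eta))) := by
    intro i j; ring
  simp_rw [e1, ← Finset.mul_sum] at hpsd
  exact nonneg_of_mul_nonneg_right hpsd hCpos

theorem eta_lim {n : ℝ → ℝ} (hc : ContinuousOn n (Ici 0)) {t : ℝ} (ht0 : 0 ≤ t) (ht : t ≤ π) :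
    Filter.Tendsto (fun eta => ∫ b in (t / 2)..(π/2), n (2 * arctan √(1 / cos b ^ 2 - 1 + eta)))
      (nhdsWithin 0 (Ioi 0)) (nhds (1 / 2 * ∫ b in t..π, n b)) := by
  set n' : ℝ → ℝ := fun u => n (max u 0) with hn'
  have hn'c : Continuous n' := hc.comp_continuous (by fun_prop) (fun u => mem_Ici.2 (le_max_right _ _))
  have hnn : ∀ u, 0 ≤ u → n u = n' u := by
    intro u hu; simp only [hn']; rw [max_eq_left hu]
  have hat : ∀ s : ℝ, 0 ≤ 2 * arctan √s := by
    intro s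
    have := arctan_nonneg.2 (Real.sqrt_nonneg s)
    linarith
  obtain ⟨B, hB⟩ := (isCompact_Icc (a := (0:ℝ)) (b := π)).exists_bound_of_continuousOn hn'c.continuousOn
  have e1 : 1 / 2 * ∫ b in t..π, n b = ∫ b in (t/2)..(π/2), n (2 * b) := by
    rw [intervalIntegral.integral_comp_mul_left (fun b => n b) (by norm_num : (2:ℝ) ≠ 0)]
    rw [show 2 * (t / 2) = t by ring, show 2 * (π / 2) = π by ring]
    simp
  rw [e1]
  apply intervalIntegral.tendsto_integral_filter_of_dominated_convergence (fun _ => B)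
  · refine Filter.Eventually.of_forall fun eta => ?_
    simp_rw [hnn _ (hat _)]
    apply Measurable.aestronglyMeasurable
    apply hn'c.measurable.comp
    fun_prop
  · refine Filter.Eventually.of_forall fun eta => Filter.Eventually.of_forall fun b _ => ?_
    rw [hnn _ (hat _)]
    apply hB
    refine ⟨hat _, ?_⟩
    have := arctan_lt_pi_div_two √(1 / cos b ^ 2 - 1 + eta)
    linarith
  · exact intervalIntegrable_const
  · have hne : ∀ᵐ b : ℝ, b ≠ π / 2 := by simp [ae_iff]
    filter_upwards [hne] with b hb hbm
    rw [uIoc_of_le (by linarith)] at hbm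
    have hb0 : 0 < b := by linarith [hbm.1]
    have hb2 : b < π / 2 := lt_of_le_of_ne hbm.2 hb
    have hcos : 0 < cos b := cos_pos_of_mem_Ioo ⟨by linarith, hb2⟩
    have htan : 1 / cos b ^ 2 - 1 = tan b ^ 2 := by
      rw [tan_eq_sin_div_cos]
      field_simp
      linarith [sin_sq_add_cos_sq b]
    have h0 : 2 * b = 2 * arctan √(1 / cos b ^ 2 - 1 + 0) := by
      rw [add_zero, htan, Real.sqrt_sq (tan_nonneg_of_nonneg_of_le_pi_div_two hb0.le hb2.le),
        arctan_tan (by linarith) hb2]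
    rw [hnn (2 * b) (by linarith), h0]
    simp_rw [hnn _ (hat _)]
    apply Filter.Tendsto.mono_left _ nhdsWithin_le_nhds
    have : Continuous (fun eta => n' (2 * arctan √(1 / cos b ^ 2 - 1 + eta))) := by
      apply hn'c.comp
      fun_prop
    exact this.tendsto 0

theorem smooth_psd {ι : Type*} [Fintype ι] {k : ℕ} (hfin : Module.finrank ℝ E = 2 + 2 * (k + 1))
    {n : ℝ → ℝ} {e : ℝ} (he : 0 < e) (hn : CMk (k + 2) 0 n) (hc : ContinuousOn n (Ici 0))
    (hv : ∀ x, π - e ≤ x → n x = 0) (x : ι → E) (hx : ∀ i, ‖x i‖ = 1) (c : ι → ℝ) :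
    0 ≤ ∑ i, ∑ j, c i * c j * ∫ b in (arccos ⟪x i, x j⟫)..π, n b := by
  have h1 : Filter.Tendsto (fun eta => ∑ i, ∑ j, c i * c j *
      ∫ b in (arccos ⟪x i, x j⟫ / 2)..(π/2), n (2 * arctan √(1 / cos b ^ 2 - 1 + eta)))
      (nhdsWithin 0 (Ioi 0))
      (nhds (∑ i, ∑ j, c i * c j * (1 / 2 * ∫ b in (arccos ⟪x i, x j⟫)..π, n b))) :=
    tendsto_finsetSum _ fun i _ => tendsto_finsetSum _ fun j _ =>
      (eta_lim hc (arccos_nonneg _) (arccos_le_pi _)).const_mul _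
  have h2 := ge_of_tendsto h1 (b := 0) (by
    filter_upwards [self_mem_nhdsWithin] with eta heta
    exact eta_psd hfin he heta hn hv x hx c)
  have e1 : ∀ i j, c i * c j * (1 / 2 * ∫ b in (arccos ⟪x i, x j⟫)..π, n b)
    = 1 / 2 * (c i * c j * ∫ b in (arccos ⟪x i, x j⟫)..π, n b) := by
    intro i j; ring
  simp_rw [e1, ← Finset.mul_sum] at h2
  linarith

end assemble

noncomputable def avg (e : ℝ) (F : ℝ → ℝ) (x : ℝ) : ℝ := (∫ s in x..(x + e), F s) / e

theorem avg_ii {F : ℝ → ℝ} (hF : ContinuousOn F (Ioi 0)) {a b : ℝ} (ha : 0 < a) (hb : 0 < b) :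
    IntervalIntegrable F volume a b := by
  apply ContinuousOn.intervalIntegrable
  refine hF.mono fun y hy => ?_
  rw [mem_uIcc] at hy
  rcases hy with hy | hy
  · exact lt_of_lt_of_le ha hy.1
  · exact lt_of_lt_of_le hb hy.1

theorem avg_hasDeriv {F : ℝ → ℝ} (hF : ContinuousOn F (Ioi 0)) {e x : ℝ} (he : 0 < e)
    (hx : 0 < x) : HasDerivAt (avg e F) ((F (x + e) - F x) / e) x := by
  have hP : ∀ y, 0 < y → HasDerivAt (fun u => ∫ s in x..u, F s) (F y) y := by
    intro y hy
    exact intervalIntegral.integral_hasDerivAt_right (avg_ii hF hx hy)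
      (hF.stronglyMeasurableAtFilter isOpen_Ioi y hy) (hF.continuousAt (isOpen_Ioi.mem_nhds hy))
  have h1 : HasDerivAt (fun u => ∫ s in x..(u + e), F s) (F (x + e)) x :=
    HasDerivAt.comp_add_const x e (hP (x + e) (by linarith))
  have h2 := (h1.sub (hP x hx)).div_const e
  refine h2.congr_of_eventuallyEq ?_
  filter_upwards [isOpen_Ioi.mem_nhds (show x ∈ Ioi (0:ℝ) from hx)] with y hy
  have hy' : 0 < y := hy
  simp only [avg, Pi.sub_apply]
  rw [intervalIntegral.integral_interval_sub_left (avg_ii hF hx (by linarith)) (avg_ii hF hx hy)]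

theorem avg_cont {F : ℝ → ℝ} (hF : ContinuousOn F (Ioi 0)) {e : ℝ} (he : 0 < e) :
    ContinuousOn (avg e F) (Ioi 0) := fun _ hx =>
  (avg_hasDeriv hF he hx).continuousAt.continuousWithinAt

theorem avg_hasDeriv' {F F' : ℝ → ℝ} (hF : ∀ x, 0 < x → HasDerivAt F (-F' x) x)
    (hF' : ContinuousOn F' (Ioi 0)) {e x : ℝ} (he : 0 < e)
    (hx : 0 < x) : HasDerivAt (avg e F) (-(avg e F' x)) x := by
  have hc : ContinuousOn F (Ioi 0) := fun y hy => (hF y hy).continuousAt.continuousWithinAt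
  refine (avg_hasDeriv hc he hx).congr_deriv ?_
  have := intervalIntegral.integral_eq_sub_of_hasDerivAt (a := x) (b := x + e) (f := F)
    (f' := fun y => - F' y) (fun y hy => hF y (by
      rw [uIcc_of_le (by linarith)] at hy; linarith [hy.1]))
      (avg_ii hF' hx (by linarith)).neg
  rw [← this, intervalIntegral.integral_neg, avg]
  ring

theorem avg_bound {F : ℝ → ℝ} (hF : ContinuousOn F (Ioi 0)) {e x a b : ℝ} (he : 0 < e)
    (hx : 0 < x) (h : ∀ y, x ≤ y → y ≤ x + e → a ≤ F y ∧ F y ≤ b) :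
    a ≤ avg e F x ∧ avg e F x ≤ b := by
  have hi := avg_ii hF hx (show 0 < x + e by linarith)
  have h1 := intervalIntegral.integral_mono_on (by linarith : x ≤ x + e)
    (intervalIntegrable_const (c := a)) hi (fun y hy => (h y hy.1 hy.2).1)
  have h2 := intervalIntegral.integral_mono_on (by linarith : x ≤ x + e)
    hi (intervalIntegrable_const (c := b)) (fun y hy => (h y hy.1 hy.2).2)
  simp only [intervalIntegral.integral_const, smul_eq_mul, add_sub_cancel_left] at h1 h2
  rw [avg, le_div_iff₀ he, div_le_iff₀ he]
  constructor <;> linarith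

theorem avg_nonneg {F : ℝ → ℝ} {e x : ℝ} (he : 0 < e)
    (hx : 0 < x) (h : ∀ y, 0 < y → 0 ≤ F y) : 0 ≤ avg e F x := by
  refine div_nonneg (intervalIntegral.integral_nonneg (by linarith) fun y hy => h y ?_) he.le
  linarith [hy.1]

theorem avg_zero {F : ℝ → ℝ} {e x p : ℝ} (he : 0 < e)
    (hx : p ≤ x) (h : ∀ y, p ≤ y → F y = 0) : avg e F x = 0 := by
  rw [avg, intervalIntegral.integral_congr (g := fun _ => (0:ℝ))]
  · simp
  · intro y hy
    rw [uIcc_of_le (by linarith)] at hy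
    exact h y (hx.trans hy.1)

theorem avg_anti {F : ℝ → ℝ} (hF : ContinuousOn F (Ioi 0)) {e x : ℝ} (he : 0 < e)
    (hx : 0 < x) (h : ∀ y z, 0 < y → y ≤ z → F z ≤ F y) : avg e F (x + e) ≤ avg e F x := by
  have h1 := (avg_bound hF he (show 0 < x + e by linarith) (a := F (x + e + e)) (b := F (x + e))
    (fun y hy hy' => ⟨h _ _ (by linarith) hy', h _ _ (by linarith) hy⟩)).2
  have h2 := (avg_bound hF he hx (a := F (x + e)) (b := F x)
    (fun y hy hy' => ⟨h _ _ (by linarith) hy', h _ _ (by linarith) hy⟩)).1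
  linarith

def PC : ℕ → (ℝ → ℝ) → Prop
  | 0, F => ContinuousOn F (Ioi 0) ∧ ConvexOn ℝ (Ioi 0) F ∧ ∀ x, π ≤ x → F x = 0
  | k + 1, F => ∃ F' : ℝ → ℝ, (∀ x, 0 < x → HasDerivAt F (-F' x) x) ∧ PC k F' ∧
      ∀ x, π ≤ x → F x = 0

theorem PC.cont {k : ℕ} {F : ℝ → ℝ} (h : PC k F) : ContinuousOn F (Ioi 0) := by
  cases k with
  | zero => exact h.1
  | succ k =>
    obtain ⟨F', h1, -⟩ := h
    exact fun y hy => (h1 y hy).continuousAt.continuousWithinAt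

theorem PC.zero {k : ℕ} {F : ℝ → ℝ} (h : PC k F) : ∀ x, π ≤ x → F x = 0 := by
  cases k with
  | zero => exact h.2.2
  | succ k =>
    obtain ⟨F', -, -, h1⟩ := h
    exact h1

theorem nonneg_of_anti {F : ℝ → ℝ} (h : ∀ y z, 0 < y → y ≤ z → F z ≤ F y)
    (h0 : ∀ x, π ≤ x → F x = 0) : ∀ x, 0 < x → 0 ≤ F x := by
  intro x hx
  rw [← h0 (max x π) (le_max_right _ _)]
  exact h _ _ hx (le_max_left _ _)

theorem PC.anti {k : ℕ} : ∀ {F : ℝ → ℝ}, PC k F → ∀ y z, 0 < y → y ≤ z → F z ≤ F y := by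
  induction k with
  | zero =>
    intro F h y z hy hyz
    rcases hyz.eq_or_lt with rfl | hyz
    · exact le_rfl
    obtain ⟨h1, h2, h3⟩ := h
    have hw : z < max z π + 1 := by linarith [le_max_left z π]
    have hw' : π ≤ max z π + 1 := by linarith [le_max_right z π]
    set w := max z π + 1
    have a1 := h2.slope_mono_adjacent (x := y) (y := z) (z := w) hy
      (by simp only [mem_Ioi]; linarith) hyz hw
    have a2 := h2.slope_mono_adjacent (x := z) (y := w) (z := w + 1)
      (by simp only [mem_Ioi]; linarith)
      (by simp only [mem_Ioi]; linarith) hw (by linarith)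
    rw [h3 w hw', h3 (w + 1) (by linarith)] at a2
    rw [h3 w hw'] at a1
    have a3 : (F z - F y) / (z - y) ≤ 0 := by
      refine a1.trans (a2.trans ?_)
      simp
    have := (div_le_iff₀ (by linarith : 0 < z - y)).1 a3
    linarith
  | succ k ih =>
    intro F h y z hy hyz
    obtain ⟨F', h1, h2, h3⟩ := h
    have hn := nonneg_of_anti (ih h2) h2.zero
    have : AntitoneOn F (Ioi 0) := by
      refine antitoneOn_of_deriv_nonpos (convex_Ioi 0)
        (fun y hy => (h1 y hy).continuousAt.continuousWithinAt) ?_ ?_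
      · rw [interior_Ioi]
        exact fun y hy => (h1 y hy).differentiableAt.differentiableWithinAt
      · rw [interior_Ioi]
        intro y hy
        rw [(h1 y hy).deriv]
        linarith [hn y hy]
    exact this hy (lt_of_lt_of_le hy hyz : (0:ℝ) < z) hyz

theorem PC.nonneg {k : ℕ} {F : ℝ → ℝ} (h : PC k F) : ∀ x, 0 < x → 0 ≤ F x :=
  nonneg_of_anti h.anti h.zero

theorem PC.cmk {e : ℝ} (he : 0 < e) {k : ℕ} :
    ∀ {F : ℝ → ℝ}, PC k F → CMk (k + 2) 0 (avg e (avg e F)) := by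
  induction k with
  | zero =>
    intro F h
    have hcF := h.cont
    have hcH := avg_cont hcF he
    have hnn : ∀ x, 0 < x → 0 ≤ avg e F x := fun x hx => avg_nonneg he hx h.nonneg
    refine ⟨fun x hx => avg_nonneg he hx hnn,
      fun x => (avg e F x - avg e F (x + e)) / e, ?_, ?_, ?_⟩
    · intro x hx
      refine (avg_hasDeriv hcH he hx).congr_deriv ?_
      ring
    · intro x hx
      exact div_nonneg (sub_nonneg.2 (avg_anti hcF he hx h.anti)) he.le
    · refine ⟨fun x => (F (x + e + e) - 2 * F (x + e) + F x) / e / e, ?_, ?_, ?_⟩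
      · intro x hx
        have a1 := avg_hasDeriv hcF he hx
        have a2 : HasDerivAt (fun u => avg e F (u + e)) ((F (x + e + e) - F (x + e)) / e) x :=
          HasDerivAt.comp_add_const x e (avg_hasDeriv hcF he (by linarith))
        refine HasDerivAt.congr_deriv ((a1.sub a2).div_const e) ?_
        ring
      · have s1 : ContinuousOn (fun x => F (x + e)) (Ioi 0) :=
          hcF.comp (by fun_prop) (fun x hx => by simp only [mem_Ioi] at *; linarith)
        have s2 : ContinuousOn (fun x => F (x + e + e)) (Ioi 0) :=
          hcF.comp (by fun_prop) (fun x hx => by simp only [mem_Ioi] at *; linarith)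
        exact (((s2.sub (continuousOn_const.mul s1)).add hcF).div_const e).div_const e
      · intro x hx
        have hy : x + e + e ∈ Ioi (0:ℝ) := by simp only [mem_Ioi]; linarith
        have := h.2.1.2 (mem_Ioi.2 hx) hy
          (show (0:ℝ) ≤ 1/2 by norm_num) (show (0:ℝ) ≤ 1/2 by norm_num) (by norm_num)
        simp only [smul_eq_mul] at this
        rw [show 1 / 2 * x + 1 / 2 * (x + e + e) = x + e by ring] at this
        refine div_nonneg (div_nonneg ?_ he.le) he.le
        linarith
  | succ k ih =>
    intro F h
    have hnn : ∀ x, 0 < x → 0 ≤ avg e F x := fun x hx => avg_nonneg he hx h.nonneg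
    obtain ⟨F', h1, h2, h3⟩ := h
    refine ⟨fun x hx => avg_nonneg he hx hnn, avg e (avg e F'), ?_, ih h2⟩
    intro x hx
    exact avg_hasDeriv' (fun y hy => avg_hasDeriv' h1 h2.cont he hy) (avg_cont h2.cont he) he hx

theorem CMk.shift {k : ℕ} {e : ℝ} {F : ℝ → ℝ} (h : CMk k 0 F) :
    CMk k (-e) (fun x => F (x + e)) := by
  refine CMk.comp (t' := fun x => (x + e) ^ (-0 : ℝ)) ?_ ?_ ?_ h
  · intro x hx; linarith
  · intro x hx
    simpa using (hasDerivAt_id x).add_const e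
  · intro k
    exact CMk.rpow (by linarith) le_rfl

theorem PC_psd_e {E : Type*} [NormedAddCommGroup E] [InnerProductSpace ℝ E]
    [FiniteDimensional ℝ E] [MeasurableSpace E] [BorelSpace E] {ι : Type*} [Fintype ι] {k : ℕ}
    (hfin : Module.finrank ℝ E = 2 + 2 * (k + 1)) {G : ℝ → ℝ} (hG : PC (k + 1) G)
    {e : ℝ} (he : 0 < e) (x : ι → E) (hx : ∀ i, ‖x i‖ = 1) (c : ι → ℝ) :
    0 ≤ ∑ i, ∑ j, c i * c j * avg e (avg e G) (arccos ⟪x i, x j⟫ + e) := by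
  have hcm : CMk (k + 3) (-e) (fun x => avg e (avg e G) (x + e)) := (hG.cmk he).shift
  obtain ⟨-, n, hd, hn⟩ := hcm
  have hz : ∀ x, π - e ≤ x → avg e (avg e G) (x + e) = 0 := by
    intro x hx
    exact avg_zero (p := π) he (by linarith) fun y hy => avg_zero he hy hG.zero
  have hc : ContinuousOn n (Ici 0) := hn.cont.mono fun y hy => by
    simp only [mem_Ici, mem_Ioi] at *; linarith
  have hv : ∀ x, π - e / 2 ≤ x → n x = 0 := by
    intro x hx
    have h1 := hd x (by linarith [pi_pos])
    have h2 : HasDerivAt (fun x => avg e (avg e G) (x + e)) 0 x := by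
      refine (hasDerivAt_const x (0:ℝ)).congr_of_eventuallyEq ?_
      filter_upwards [isOpen_Ioi.mem_nhds (show x ∈ Ioi (π - e) by
        simp only [mem_Ioi]; linarith)] with y hy
      exact hz y (le_of_lt hy)
    have := h1.unique h2
    linarith
  have key := smooth_psd hfin (half_pos he) (hn.anti (by linarith)) hc hv x hx c
  have hI : ∀ t, 0 ≤ t → ∫ b in t..π, n b = avg e (avg e G) (t + e) := by
    intro t ht
    have := intervalIntegral.integral_eq_sub_of_hasDerivAt (a := t) (b := π)
      (f := fun x => avg e (avg e G) (x + e)) (f' := fun x => - n x)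
      (fun y hy => hd y ?_) (ContinuousOn.intervalIntegrable (hc.mono ?_).neg)
    · rw [intervalIntegral.integral_neg, hz π (by linarith)] at this
      linarith
    · rw [mem_uIcc] at hy
      rcases hy with hy | hy
      · linarith [hy.1]
      · linarith [hy.1, pi_pos]
    · intro y hy
      rw [mem_uIcc] at hy
      simp only [mem_Ici]
      rcases hy with hy | hy
      · linarith [hy.1]
      · linarith [hy.1, pi_pos]
  refine key.trans_eq ?_
  refine Finset.sum_congr rfl fun i _ => Finset.sum_congr rfl fun j _ => ?_
  rw [hI _ (arccos_nonneg _)]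

open Filter Topology in
theorem PC_psd {E : Type*} [NormedAddCommGroup E] [InnerProductSpace ℝ E]
    [FiniteDimensional ℝ E] [MeasurableSpace E] [BorelSpace E] {ι : Type*} [Fintype ι] {k : ℕ}
    (hfin : Module.finrank ℝ E = 2 + 2 * (k + 1)) {G : ℝ → ℝ} (hG : PC (k + 1) G)
    (hc0 : ContinuousOn G (Ici 0)) (x : ι → E) (hx : ∀ i, ‖x i‖ = 1) (c : ι → ℝ) :
    0 ≤ ∑ i, ∑ j, c i * c j * G (arccos ⟪x i, x j⟫) := by
  have hlim : ∀ t, 0 ≤ t → Tendsto (fun e => avg e (avg e G) (t + e)) (𝓝[>] 0) (𝓝 (G t)) := by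
    intro t ht
    rw [Metric.tendsto_nhds]
    intro δ hδ
    obtain ⟨r, hr, hr'⟩ := Metric.continuousWithinAt_iff.1 (hc0 t ht) (δ / 2) (half_pos hδ)
    filter_upwards [Ioo_mem_nhdsGT (show (0:ℝ) < r / 4 by linarith)] with e he
    have hp : 0 < e := he.1
    have hs : e < r / 4 := he.2
    have hb : ∀ y, t ≤ y → y ≤ t + 3 * e → G t - δ / 2 ≤ G y ∧ G y ≤ G t + δ / 2 := by
      intro y hy hy'
      have := hr' (x := y) (show (0:ℝ) ≤ y by linarith) (by
        rw [Real.dist_eq, abs_lt]; constructor <;> linarith)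
      rw [Real.dist_eq, abs_lt] at this
      constructor <;> linarith [this.1, this.2]
    have := avg_bound (avg_cont hG.cont hp) hp (show 0 < t + e by linarith)
      (a := G t - δ / 2) (b := G t + δ / 2) (fun y hy hy' =>
        avg_bound hG.cont hp (by linarith) fun z hz hz' => hb z (by linarith) (by linarith))
    rw [Real.dist_eq, abs_lt]
    constructor <;> linarith [this.1, this.2]
  refine ge_of_tendsto (f := fun e => ∑ i, ∑ j, c i * c j *
    avg e (avg e G) (arccos ⟪x i, x j⟫ + e)) (x := 𝓝[>] (0:ℝ)) ?_ ?_
  · exact tendsto_finsetSum _ fun i _ => tendsto_finsetSum _ fun j _ =>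
      (hlim _ (arccos_nonneg _)).const_mul _
  · filter_upwards [self_mem_nhdsWithin] with e he
    exact PC_psd_e hfin hG he x hx c

open Filter Topology in
theorem PC_of_hyp (lam : ℕ) (g : ℝ → ℝ)
    (hg : ContDiffOn ℝ lam g (Set.Icc 0 π))
    (hconvex : ConvexOn ℝ (Set.Icc 0 π)
      (fun θ => (-1 : ℝ) ^ lam * iteratedDerivWithin lam g (Set.Icc 0 π) θ))
    (hvanish : ∀ j ≤ lam, iteratedDerivWithin j g (Set.Icc 0 π) π = 0)
    (hleft : HasDerivWithinAt (iteratedDerivWithin lam g (Set.Icc 0 π)) 0 (Set.Icc 0 π) π) :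
    ∀ i j, j + i = lam → PC i (fun x => (-1 : ℝ) ^ j *
      iteratedDerivWithin j g (Set.Icc 0 π) (min x π)) := by
  have hu : UniqueDiffOn ℝ (Icc 0 π) := uniqueDiffOn_Icc pi_pos
  have hmaps : ∀ x, 0 < x → min x π ∈ Icc 0 π := fun x hx =>
    ⟨le_min hx.le pi_pos.le, min_le_right _ _⟩
  have hpi : π ∈ Icc 0 π := ⟨pi_pos.le, le_rfl⟩
  intro i
  induction i with
  | zero =>
    intro j hj
    obtain rfl : j = lam := by simpa using hj
    refine ⟨?_, ?_, ?_⟩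
    · have := (hg.continuousOn_iteratedDerivWithin le_rfl hu)
      exact continuousOn_const.mul (this.comp (f := fun x => min x π) (by fun_prop) hmaps)
    · have himg : (fun x => min x π) '' (Ioi 0) ⊆ Icc 0 π := by
        rintro _ ⟨x, hx, rfl⟩
        exact hmaps x hx
      have hle : ∀ x ∈ Icc 0 π, (fun θ => (-1 : ℝ) ^ j * iteratedDerivWithin j g (Set.Icc 0 π) θ) π
          ≤ (-1 : ℝ) ^ j * iteratedDerivWithin j g (Set.Icc 0 π) x := by
        intro x hx
        rcases hx.2.eq_or_lt with h | h
        · rw [h]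
        have := hconvex.slope_le_of_hasDerivWithinAt hx hpi h (hleft.const_mul ((-1:ℝ)^j))
        rw [mul_zero, slope_def_field, div_le_iff₀ (by linarith)] at this
        simp only at *
        linarith
      have hanti : AntitoneOn (fun θ => (-1 : ℝ) ^ j * iteratedDerivWithin j g (Set.Icc 0 π) θ)
          (Icc 0 π) := by
        intro x hx y hy hxy
        rcases hxy.eq_or_lt with h | hxy
        · rw [h]
        rcases hy.2.eq_or_lt with h | hy2
        · rw [h]; exact hle x hx
        have a1 := hconvex.slope_mono_adjacent hx hpi hxy hy2
        have a2 : ∀ A B : ℝ, A ≤ B → (A - B) / (π - y) ≤ 0 := fun A B h =>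
          div_nonpos_of_nonpos_of_nonneg (by linarith) (by linarith)
        have a3 := a1.trans (a2 _ _ (hle y hy))
        have := (div_le_iff₀ (by linarith : 0 < y - x)).1 a3
        simp only at *
        linarith
      have hmin : ConcaveOn ℝ (Ioi 0) (fun x : ℝ => min x π) := by
        have := (concaveOn_id (𝕜 := ℝ) (convex_Ioi (0:ℝ))).inf (concaveOn_const π (convex_Ioi (0:ℝ)))
        exact this
      have hcv : Convex ℝ ((fun x : ℝ => min x π) '' (Ioi 0)) := by
        have : (fun x : ℝ => min x π) '' (Ioi 0) = Ioc 0 π := by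
          ext y
          constructor
          · rintro ⟨x, hx, rfl⟩
            exact ⟨lt_min hx pi_pos, min_le_right _ _⟩
          · intro hy
            exact ⟨y, hy.1, min_eq_left hy.2⟩
        rw [this]
        exact convex_Ioc _ _
      exact (hconvex.subset himg hcv).comp_concaveOn hmin (hanti.mono himg)
    · intro x hx
      simp only [min_eq_right hx, hvanish j le_rfl, mul_zero]
  | succ i ih =>
    intro j hj
    have hlt : j < lam := by omega
    have h0 : ∀ x, π ≤ x → (fun x => (-1 : ℝ) ^ j *
        iteratedDerivWithin j g (Set.Icc 0 π) (min x π)) x = 0 := by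
      intro x hx
      simp only [min_eq_right hx, hvanish j hlt.le, mul_zero]
    refine ⟨_, ?_, ih (j + 1) (by omega), h0⟩
    have hd : ∀ y ∈ Icc 0 π, HasDerivWithinAt (fun y => (-1 : ℝ) ^ j *
        iteratedDerivWithin j g (Set.Icc 0 π) y)
        (-((-1 : ℝ) ^ (j + 1) * iteratedDerivWithin (j + 1) g (Set.Icc 0 π) y)) (Icc 0 π) y := by
      intro y hy
      have := (hg.differentiableOn_iteratedDerivWithin (m := j) (by exact_mod_cast hlt) hu
        y hy).hasDerivWithinAt
      rw [← iteratedDerivWithin_succ] at this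
      refine (this.const_mul ((-1:ℝ)^j)).congr_deriv ?_
      ring
    intro x hx
    rcases lt_trichotomy x π with h | h | h
    · have h1 := (hd x ⟨hx.le, h.le⟩).hasDerivAt (Icc_mem_nhds hx h)
      simp only [min_eq_left h.le]
      refine h1.congr_of_eventuallyEq ?_
      filter_upwards [isOpen_Iio.mem_nhds (show x ∈ Iio π from h)] with y hy
      rw [min_eq_left (le_of_lt hy)]
    · subst h
      have h1 := (hd π hpi).mono_of_mem_nhdsWithin (Icc_mem_nhdsLE pi_pos : Icc 0 π ∈ 𝓝[≤] π)
      have hz : -((-1 : ℝ) ^ (j + 1) * iteratedDerivWithin (j + 1) g (Set.Icc 0 π) π) = 0 := by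
        rw [hvanish (j+1) hlt]; simp
      simp only [min_self]
      rw [hz] at h1 ⊢
      have h2 : HasDerivWithinAt (fun x => (-1 : ℝ) ^ j *
        iteratedDerivWithin j g (Set.Icc 0 π) (min x π)) 0 (Iic π) π :=
        h1.congr (fun y hy => by rw [min_eq_left hy]) (by rw [min_self])
      have h3 : HasDerivWithinAt (fun x => (-1 : ℝ) ^ j *
        iteratedDerivWithin j g (Set.Icc 0 π) (min x π)) 0 (Ici π) π :=
        (hasDerivWithinAt_const π (Ici π) (0:ℝ)).congr (fun y hy => h0 y hy) (h0 π le_rfl)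
      have h4 := h2.union h3
      rwa [Iic_union_Ici, hasDerivWithinAt_univ] at h4
    · simp only [min_eq_right h.le, hvanish (j + 1) hlt]
      rw [mul_zero, neg_zero]
      refine (hasDerivAt_const x (0:ℝ)).congr_of_eventuallyEq ?_
      filter_upwards [isOpen_Ioi.mem_nhds (show x ∈ Ioi π from h)] with y hy
      exact h0 y (le_of_lt hy)

theorem polya_criterion_pos_def (d : ℕ) (hd : 3 ≤ d) (lam : ℕ)
    (hlam : (lam : ℤ) = ⌈((d : ℝ) - 2) / 2⌉) (g : ℝ → ℝ)
    (hg : ContDiffOn ℝ lam g (Set.Icc 0 π))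
    (hconvex : ConvexOn ℝ (Set.Icc 0 π)
      (fun θ => (-1 : ℝ) ^ lam * iteratedDerivWithin lam g (Set.Icc 0 π) θ))
    (hvanish : ∀ j ≤ lam, iteratedDerivWithin j g (Set.Icc 0 π) π = 0)
    (hleft : HasDerivWithinAt (iteratedDerivWithin lam g (Set.Icc 0 π)) 0 (Set.Icc 0 π) π)
    (hright : ∃ L : ℝ,
      HasDerivWithinAt (iteratedDerivWithin lam g (Set.Icc 0 π)) L (Set.Icc 0 π) 0) :
    PosDefOnSphere d g := by
  have hle : ((d : ℝ) - 2) / 2 ≤ lam := by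
    have := Int.le_ceil (((d : ℝ) - 2) / 2)
    rw [← hlam] at this
    exact_mod_cast this
  have hdl : d ≤ 2 * lam + 2 := by
    have : (d : ℝ) ≤ 2 * lam + 2 := by linarith
    exact_mod_cast this
  obtain ⟨k, rfl⟩ : ∃ k, lam = k + 1 := ⟨lam - 1, by omega⟩
  have hPC := PC_of_hyp (k + 1) g hg hconvex hvanish hleft (k + 1) 0 (by simp)
  simp only [pow_zero, one_mul, iteratedDerivWithin_zero] at hPC
  have hc0 : ContinuousOn (fun x => g (min x π)) (Ici 0) :=
    hg.continuousOn.comp (f := fun x => min x π) (by fun_prop)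
      (fun x hx => ⟨le_min hx pi_pos.le, min_le_right _ _⟩)
  intro N x hx _
  let X : Fin N → EuclideanSpace ℝ (Fin d ⊕ Fin (2 * (k + 1) + 2 - d)) := fun i =>
    WithLp.toLp 2 (Sum.elim (x i) 0)
  have hin : ∀ i j, ⟪X i, X j⟫ = ⟪x i, x j⟫ := by
    intro i j
    simp [X, PiLp.inner_apply]
  have hX : ∀ i, ‖X i‖ = 1 := by
    intro i
    have h1 := real_inner_self_eq_norm_sq (X i)
    rw [hin, real_inner_self_eq_norm_sq, hx] at h1
    nlinarith [norm_nonneg (X i)]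
  have hfin : Module.finrank ℝ (EuclideanSpace ℝ (Fin d ⊕ Fin (2 * (k + 1) + 2 - d)))
      = 2 + 2 * (k + 1) := by
    rw [finrank_euclideanSpace, Fintype.card_sum, Fintype.card_fin, Fintype.card_fin]
    omega
  refine Matrix.PosSemidef.of_dotProduct_mulVec_nonneg ?_ ?_
  · ext i j
    simp [Matrix.conjTranspose_apply, real_inner_comm]
  · intro c
    have key := PC_psd hfin hPC hc0 X hX c
    refine key.trans_eq ?_
    simp only [dotProduct, Matrix.mulVec, Matrix.of_apply, Finset.mul_sum, Pi.star_apply,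
      star_trivial]
    refine Finset.sum_congr rfl fun i _ => Finset.sum_congr rfl fun j _ => ?_
    rw [hin, min_eq_left (arccos_le_pi _)]
    ring
end

section
/- (Pólya criterion, strict positive definiteness) Let d ∈ ℕ with d ≥ 3 and set λ = ⌈(d-2)/2⌉. Let g: [0,π] → ℝ be λ-times continuously differentiable and suppose that: (i) (-1)^λ g^{(λ)} is convex on [0,π]; (ii) g^{(j)}(π) = 0 for all 0 ≤ j ≤ λ, the left derivative of g^{(λ)} at π equals 0, and the right derivative of g^{(λ)} at 0 exists and is finite; (iii) g^{(λ)} is not an affine function on [0,π]. Then g is a strictly positive definite function on the unit sphere S^{d-1}. -/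
open MeasureTheory Real Set
open scoped RealInnerProductSpace

/-- Gegenbauer polynomials (homogenised) by the three term recurrence. -/
noncomputable def geg {A : Type*} [CommRing A] [Algebra ℝ A] (j : ℕ) (r t : A) : ℕ → A
  | 0 => 1
  | 1 => (2 * (j : ℝ)) • t
  | (n + 2) => ((n : ℝ) + 2)⁻¹ • ((2 * ((n : ℝ) + 1 + j)) • (t * geg j r t (n + 1))
      - ((n : ℝ) + 2 * j) • (r * geg j r t n))

lemma geg_rec {A : Type*} [CommRing A] [Algebra ℝ A] (j : ℕ) (r t : A) (n : ℕ) :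
    ((n : ℝ) + 2) • geg j r t (n + 2) = (2 * ((n : ℝ) + 1 + j)) • (t * geg j r t (n + 1))
      - ((n : ℝ) + 2 * j) • (r * geg j r t n) := by
  rw [geg, smul_smul, mul_inv_cancel₀ (by positivity), one_smul]

lemma map_geg {A B : Type*} [CommRing A] [Algebra ℝ A] [CommRing B] [Algebra ℝ B]
    (φ : A →ₐ[ℝ] B) (j : ℕ) (r t : A) (n : ℕ) :
    φ (geg j r t n) = geg j (φ r) (φ t) n := by
  induction n using Nat.twoStepInduction with
  | zero => simp [geg]
  | one => simp [geg]
  | more n h1 h2 => simp [geg, h1, h2]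

namespace Fischer
open MvPolynomial

variable {D : ℕ}

/-- multi factorial -/
def mf (a : Fin D →₀ ℕ) : ℝ := ∏ i, ((a i).factorial : ℝ)

lemma mf_pos (a : Fin D →₀ ℕ) : 0 < mf a := by
  unfold mf; exact Finset.prod_pos fun i _ => by positivity

lemma mf_single (a : Fin D →₀ ℕ) (i : Fin D) :
    mf (a + Finsupp.single i 1) = mf a * ((a i : ℝ) + 1) := by
  unfold mf
  rw [← Finset.mul_prod_erase _ _ (Finset.mem_univ i),
    ← Finset.mul_prod_erase (Finset.univ) (fun k => ((a k).factorial : ℝ)) (Finset.mem_univ i)]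
  have : ∀ k ∈ Finset.univ.erase i, (((a + Finsupp.single i 1 : Fin D →₀ ℕ) k).factorial : ℝ)
      = ((a k).factorial : ℝ) := by
    intro k hk
    have : k ≠ i := by simpa using hk
    simp [Finsupp.single_apply, this.symm]
  rw [Finset.prod_congr rfl this]
  simp [Nat.factorial_succ]; ring

/-- The Fischer form. -/
noncomputable def F (q : MvPolynomial (Fin D) ℝ) : MvPolynomial (Fin D) ℝ →ₗ[ℝ] ℝ :=
  (basisMonomials (Fin D) ℝ).constr ℝ (fun a => mf a * coeff a q)

lemma F_monomial (q : MvPolynomial (Fin D) ℝ) (a : Fin D →₀ ℕ) (c : ℝ) :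
    F q (monomial a c) = c * (mf a * coeff a q) := by
  have : monomial a c = c • (basisMonomials (Fin D) ℝ a) := by
    simp [smul_monomial]
  rw [this, map_smul, F, Module.Basis.constr_basis]; rfl

lemma F_self_nonneg (q : MvPolynomial (Fin D) ℝ) : 0 ≤ F q q := by
  have : F q q = ∑ a ∈ q.support, F q (monomial a (coeff a q)) := by
    conv_lhs => rw [q.as_sum]
    rw [map_sum]
    rw [← q.as_sum]
  rw [this]
  apply Finset.sum_nonneg
  intro a _
  rw [F_monomial]
  nlinarith [mul_nonneg (mf_pos a).le (mul_self_nonneg (coeff a q))]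

lemma F_X_mul (q p : MvPolynomial (Fin D) ℝ) (i : Fin D) :
    F q (X i * p) = F (pderiv i q) p := by
  induction p using MvPolynomial.induction_on' with
  | monomial a c =>
    rw [show (X i : MvPolynomial (Fin D) ℝ) * monomial a c
      = monomial (a + Finsupp.single i 1) c by
        rw [mul_comm, X, monomial_mul, mul_one]]
    rw [F_monomial, F_monomial, mf_single, coeff_pderiv]
    ring
  | add p q h1 h2 => rw [mul_add, map_add, map_add, h1, h2]

lemma F_add (p q u : MvPolynomial (Fin D) ℝ) : F (p + q) u = F p u + F q u := by
  induction u using MvPolynomial.induction_on' with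
  | monomial a c => simp [F_monomial]; ring
  | add p q h1 h2 => rw [map_add, map_add, map_add, h1, h2]; ring

lemma F_smul (c : ℝ) (q u : MvPolynomial (Fin D) ℝ) : F (c • q) u = c * F q u := by
  induction u using MvPolynomial.induction_on' with
  | monomial a c => simp [F_monomial]; ring
  | add p q h1 h2 => rw [map_add, map_add, h1, h2]; ring

lemma F_zero (u : MvPolynomial (Fin D) ℝ) : F 0 u = 0 := by
  have := F_smul 0 0 u; simpa using this

lemma F_sum {ι : Type*} (s : Finset ι) (f : ι → MvPolynomial (Fin D) ℝ)
    (u : MvPolynomial (Fin D) ℝ) : F (∑ i ∈ s, f i) u = ∑ i ∈ s, F (f i) u := by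
  classical
  induction s using Finset.induction_on with
  | empty => simp [F_zero]
  | insert a s h ih => rw [Finset.sum_insert h, Finset.sum_insert h, F_add, ih]

/-- Laplacian -/
noncomputable def lap (p : MvPolynomial (Fin D) ℝ) : MvPolynomial (Fin D) ℝ :=
  ∑ i, pderiv i (pderiv i p)

/-- directional derivative -/
noncomputable def dd (x : Fin D → ℝ) (p : MvPolynomial (Fin D) ℝ) : MvPolynomial (Fin D) ℝ :=
  ∑ i, x i • pderiv i p

/-- squared norm -/
noncomputable def rr : MvPolynomial (Fin D) ℝ := ∑ i, X i * X i

/-- linear form -/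
noncomputable def ll (x : Fin D → ℝ) : MvPolynomial (Fin D) ℝ := ∑ i, x i • X i

lemma F_rr (q p : MvPolynomial (Fin D) ℝ) : F q (rr * p) = F (lap q) p := by
  rw [rr, lap, F_sum, Finset.sum_mul, map_sum]
  refine Finset.sum_congr rfl fun i _ => ?_
  rw [mul_assoc, F_X_mul, F_X_mul]

lemma F_ll (x : Fin D → ℝ) (q p : MvPolynomial (Fin D) ℝ) : F q (ll x * p) = F (dd x q) p := by
  rw [ll, dd, F_sum, Finset.sum_mul, map_sum]
  refine Finset.sum_congr rfl fun i _ => ?_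
  rw [smul_mul_assoc, map_smul, F_X_mul, F_smul, smul_eq_mul]

lemma lap_smul (c : ℝ) (p : MvPolynomial (Fin D) ℝ) : lap (c • p) = c • lap p := by
  simp [lap, Finset.smul_sum]

lemma lap_sub (p q : MvPolynomial (Fin D) ℝ) : lap (p - q) = lap p - lap q := by
  simp [lap]

lemma lap_ll_mul (x : Fin D → ℝ) (p : MvPolynomial (Fin D) ℝ) :
    lap (ll x * p) = ll x * lap p + (2 : ℝ) • dd x p := by
  have h : ∀ i, pderiv i (ll x) = C (x i) := by
    intro i; classical
    simp [ll, pderiv_X, Pi.single_apply, smul_eq_C_mul]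
  simp only [lap, dd, pderiv_mul, h, map_add, pderiv_C, Finset.smul_sum, Finset.mul_sum]
  rw [← Finset.sum_add_distrib]
  refine Finset.sum_congr rfl fun i _ => ?_
  simp only [smul_eq_C_mul, map_ofNat]
  ring

lemma pderiv_rr (i : Fin D) : pderiv i (rr : MvPolynomial (Fin D) ℝ) = 2 * X i := by
  classical
  simp [rr, pderiv_X, Pi.single_apply, two_mul, Finset.sum_add_distrib]

lemma lap_rr_mul (n : ℕ) (p : MvPolynomial (Fin D) ℝ) (hp : p.IsHomogeneous n) :
    lap (rr * p) = rr * lap p + (2 * (D : ℝ) + 4 * n) • p := by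
  have e := hp.sum_X_mul_pderiv
  simp only [lap, pderiv_mul, pderiv_rr, map_add, Finset.mul_sum]
  have : ∀ i, pderiv i (2 : MvPolynomial (Fin D) ℝ) = 0 := by
    intro i
    exact_mod_cast (pderiv_C (R := ℝ) (a := 2) (i := i))
  simp only [this, pderiv_X_self]
  have e2 : (2 * (D : ℝ) + 4 * n) • p = ∑ i : Fin D, (2 * p + 4 * (X i * pderiv i p)) := by
    rw [Finset.sum_add_distrib, ← Finset.mul_sum, ← Finset.mul_sum, e]
    simp only [smul_eq_C_mul, map_add, map_mul, map_natCast, map_ofNat, Finset.sum_const,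
      Finset.card_univ, Fintype.card_fin, nsmul_eq_mul]
    ring
  rw [e2, ← Finset.sum_add_distrib]
  refine Finset.sum_congr rfl fun i _ => ?_
  ring

lemma dd_smul (x : Fin D → ℝ) (c : ℝ) (p : MvPolynomial (Fin D) ℝ) :
    dd x (c • p) = c • dd x p := by
  simp [dd, Finset.smul_sum, smul_comm c]

lemma dd_sub (x : Fin D → ℝ) (p q : MvPolynomial (Fin D) ℝ) :
    dd x (p - q) = dd x p - dd x q := by
  simp [dd, smul_sub]

lemma dd_mul (x : Fin D → ℝ) (p q : MvPolynomial (Fin D) ℝ) :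
    dd x (p * q) = dd x p * q + p * dd x q := by
  simp only [dd, pderiv_mul, Finset.sum_mul, Finset.mul_sum]
  rw [← Finset.sum_add_distrib]
  refine Finset.sum_congr rfl fun i _ => ?_
  simp only [smul_eq_C_mul]; ring

lemma dd_rr (x : Fin D → ℝ) : dd x rr = 2 * ll x := by
  simp only [dd, pderiv_rr, ll, Finset.mul_sum]
  refine Finset.sum_congr rfl fun i _ => ?_
  simp only [smul_eq_C_mul]; ring

lemma dd_ll (x : Fin D → ℝ) (hx : ∑ i, x i * x i = 1) : dd x (ll x) = 1 := by
  classical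
  have h : ∀ i, pderiv i (ll x) = C (x i) := by
    intro i
    simp [ll, pderiv_X, Pi.single_apply, smul_eq_C_mul]
  simp only [dd, h, smul_eq_C_mul, ← C_mul, ← map_sum, hx, C_1]

lemma hom_rr : (rr : MvPolynomial (Fin D) ℝ).IsHomogeneous 2 :=
  IsHomogeneous.sum _ _ _ fun i _ => (isHomogeneous_X ℝ i).mul (isHomogeneous_X ℝ i)

lemma hom_smul {p : MvPolynomial (Fin D) ℝ} {n : ℕ} (c : ℝ) (hp : p.IsHomogeneous n) :
    (c • p).IsHomogeneous n := by
  rw [smul_eq_C_mul]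
  simpa using (isHomogeneous_C (Fin D) c).mul hp

lemma hom_ll (x : Fin D → ℝ) : (ll x).IsHomogeneous 1 :=
  IsHomogeneous.sum _ _ _ fun i _ => hom_smul _ (isHomogeneous_X ℝ i)

lemma hom_geg (j : ℕ) (x : Fin D → ℝ) (n : ℕ) : (geg j rr (ll x) n).IsHomogeneous n := by
  induction n using Nat.twoStepInduction with
  | zero => exact isHomogeneous_one _ _
  | one => exact hom_smul _ (hom_ll x)
  | more n h1 h2 =>
    rw [geg]
    refine hom_smul _ (IsHomogeneous.sub (hom_smul _ ?_) (hom_smul _ ?_))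
    · have := (hom_ll x).mul h2
      rwa [show 1 + (n + 1) = n + 2 by ring] at this
    · have := (hom_rr (D := D)).mul h1
      rwa [show 2 + n = n + 2 by ring] at this

lemma smul_cancel {p q : MvPolynomial (Fin D) ℝ} {c : ℝ} (hc : c ≠ 0) (h : c • p = c • q) :
    p = q := by
  have := congrArg (fun z => c⁻¹ • z) h
  simpa [smul_smul, inv_mul_cancel₀ hc] using this

lemma dd_geg (j : ℕ) (x : Fin D → ℝ) (hx : ∑ i, x i * x i = 1) (n : ℕ) :
    dd x (geg j rr (ll x) (n + 1)) = ((n : ℝ) + 2 * j) • geg j rr (ll x) n := by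
  induction n using Nat.twoStepInduction with
  | zero => simp [geg, dd_smul, dd_ll x hx]
  | one =>
    simp only [geg, dd_smul, dd_sub, dd_mul, dd_ll x hx, dd_rr]
    have : dd x (1 : MvPolynomial (Fin D) ℝ) = 0 := by simp [dd]
    rw [this]
    simp only [smul_eq_C_mul, map_add, map_mul, map_natCast, map_ofNat, map_one, Nat.cast_zero,
      Nat.cast_one, zero_add, map_zero]
    have h2 : C (2:ℝ)⁻¹ * 2 = (1 : MvPolynomial (Fin D) ℝ) := by
      rw [show (2 : MvPolynomial (Fin D) ℝ) = C 2 from (map_ofNat C 2).symm, ← C_mul]; norm_num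
    linear_combination ((1 + (j : MvPolynomial (Fin D) ℝ)) * (2 * j * ll x) * 2 - 2 * j * ll x) * h2
  | more n h1 h2 =>
    apply smul_cancel (c := (((n + 1 : ℕ) : ℝ) + 2)) (by positivity)
    rw [← dd_smul, geg_rec, dd_sub, dd_smul, dd_smul, dd_mul, dd_mul, dd_ll x hx, dd_rr, h1, h2]
    have e := geg_rec j rr (ll x) n
    simp only [smul_eq_C_mul, map_add, map_mul, map_natCast, map_ofNat, map_one] at e ⊢
    push_cast
    linear_combination (-((n : MvPolynomial (Fin D) ℝ) + 1 + 2 * j)) * e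

lemma lap_geg (j : ℕ) (hD : D = 2 * j + 2) (x : Fin D → ℝ) (hx : ∑ i, x i * x i = 1) (n : ℕ) :
    lap (geg j rr (ll x) n) = 0 := by
  induction n using Nat.twoStepInduction with
  | zero => simp [geg, lap]
  | one =>
    rw [geg, lap_smul, show ll x = ll x * 1 by ring, lap_ll_mul]
    simp [lap, dd]
  | more n h1 h2 =>
    rw [geg, lap_smul, lap_sub, lap_smul, lap_smul, lap_ll_mul, lap_rr_mul n _ (hom_geg j x n),
      h1, h2, dd_geg j x hx]
    have hD' : (D : ℝ) = 2 * j + 2 := by rw [hD]; push_cast; ring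
    rw [hD']
    simp only [smul_eq_C_mul, map_add, map_mul, map_natCast, map_ofNat, map_one]
    ring

lemma hom_dd {n : ℕ} (x : Fin D → ℝ) {q : MvPolynomial (Fin D) ℝ} (hq : q.IsHomogeneous (n + 1)) :
    (dd x q).IsHomogeneous n := by
  refine IsHomogeneous.sum _ _ _ fun i _ => hom_smul _ ?_
  simpa using hq.pderiv (i := i)

lemma lap_dd (x : Fin D → ℝ) {q : MvPolynomial (Fin D) ℝ} (hq : lap q = 0) :
    lap (dd x q) = 0 := by
  have hc : ∀ i k : Fin D, ∀ p : MvPolynomial (Fin D) ℝ,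
      pderiv i (pderiv k p) = pderiv k (pderiv i p) := by
    intro i k p
    ext m
    simp only [coeff_pderiv]
    rw [add_right_comm]
    by_cases h : i = k
    · subst h; rfl
    · simp [Finsupp.single_apply, h, Ne.symm h]; ring
  have : lap (dd x q) = dd x (lap q) := by
    simp only [lap, dd, map_sum, map_smul, Finset.smul_sum]
    rw [Finset.sum_comm]
    refine Finset.sum_congr rfl fun i _ => Finset.sum_congr rfl fun k _ => ?_
    rw [(pderiv k).map_smul, (pderiv k).map_smul, hc k i, hc k i]
  rw [this, hq]; simp [dd]

lemma eval_dd {n : ℕ} (x : Fin D → ℝ) {q : MvPolynomial (Fin D) ℝ} (hq : q.IsHomogeneous n) :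
    aeval x (dd x q) = n * aeval x q := by
  have e := congrArg (aeval x) hq.sum_X_mul_pderiv
  simp only [map_sum, map_mul, aeval_X, nsmul_eq_mul, map_natCast] at e
  simp only [dd, map_sum, map_smul, smul_eq_mul]
  exact e

lemma F_geg (j : ℕ) (n : ℕ) : ∃ k : ℝ, (1 ≤ j → 0 < k) ∧
    ∀ (x : Fin D → ℝ) (q : MvPolynomial (Fin D) ℝ), q.IsHomogeneous n → lap q = 0 →
      F q (geg j rr (ll x) n) = k * aeval x q := by
  induction n using Nat.twoStepInduction with
  | zero =>
    refine ⟨1, fun _ => one_pos, fun x q hq _ => ?_⟩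
    have h : q = C (coeff 0 q) := by
      rw [← totalDegree_eq_zero_iff_eq_C]
      exact hq.totalDegree_le |> Nat.le_zero.mp
    have : (geg j rr (ll x) 0) = monomial 0 (1 : ℝ) := rfl
    rw [this, F_monomial]
    conv_rhs => rw [h]
    simp [mf]
  | one =>
    refine ⟨2 * j, fun h => by have : (1:ℝ) ≤ j := by exact_mod_cast h
                               linarith, fun x q hq _ => ?_⟩
    have hd := hom_dd (n := 0) x hq
    have h : dd x q = C (coeff 0 (dd x q)) := by
      rw [← totalDegree_eq_zero_iff_eq_C]
      exact hd.totalDegree_le |> Nat.le_zero.mp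
    have h2 := eval_dd x hq
    rw [geg, map_smul, show ll x = ll x * monomial 0 (1:ℝ) by rw [← C_apply, C_1, mul_one],
      F_ll, F_monomial]
    rw [h] at h2
    simp at h2
    simp [mf, h2]
  | more n h1 h2 =>
    obtain ⟨k, hk, h⟩ := h2
    refine ⟨2 * (n + 1 + j) * k, fun hj => by have := hk hj; positivity, fun x q hq hl => ?_⟩
    rw [geg, map_smul, map_sub, map_smul, map_smul, F_ll, F_rr, hl, F_zero,
      h x _ (hom_dd x hq) (lap_dd x hl), eval_dd x hq]
    simp only [smul_eq_mul]
    push_cast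
    field_simp
    ring

theorem geg_psd (j : ℕ) (hj : 1 ≤ j) (hD : D = 2 * j + 2) {N : ℕ} (x : Fin N → Fin D → ℝ)
    (hx : ∀ i, ∑ k, x i k * x i k = 1) (c : Fin N → ℝ) (n : ℕ) :
    0 ≤ ∑ i, ∑ k, c i * c k * geg j (1 : ℝ) (∑ l, x i l * x k l) n := by
  set u : MvPolynomial (Fin D) ℝ := ∑ i, c i • geg j rr (ll (x i)) n with hu
  have h0 := F_self_nonneg u
  have hhom : u.IsHomogeneous n :=
    IsHomogeneous.sum _ _ _ fun i _ => hom_smul _ (hom_geg j _ n)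
  have hlap : lap u = 0 := by
    have : lap u = ∑ i, c i • lap (geg j rr (ll (x i)) n) := by
      simp only [hu, lap, map_sum, map_smul, Finset.smul_sum]
      rw [Finset.sum_comm]
      simp only [Derivation.map_smul]
    rw [this]
    exact Finset.sum_eq_zero fun i _ => by rw [lap_geg j hD _ (hx i), smul_zero]
  have hk : ∃ k : ℝ, 0 < k ∧ ∀ i, F u (geg j rr (ll (x i)) n) = k * aeval (x i) u := by
    obtain ⟨k, h1, h2⟩ := F_geg (D := D) j n
    exact ⟨k, h1 hj, fun i => h2 (x i) u hhom hlap⟩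
  obtain ⟨k, hk0, hk⟩ := hk
  have : F u u = k * ∑ i, ∑ k, c i * c k * geg j (1 : ℝ) (∑ l, x i l * x k l) n := by
    conv_lhs => rw [hu]
    rw [map_sum, Finset.mul_sum]
    refine Finset.sum_congr rfl fun i _ => ?_
    rw [map_smul, ← hu, hk, hu, map_sum]
    simp only [map_smul, smul_eq_mul, map_geg]
    have e1 : aeval (x i) (rr : MvPolynomial (Fin D) ℝ) = (1 : ℝ) := by
      simp [rr, hx i]
    have e2 : ∀ k, aeval (x i) (ll (x k)) = ∑ l, x i l * x k l := by
      intro k; simp [ll, mul_comm]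
    simp only [e1, e2, Finset.mul_sum]
    refine Finset.sum_congr rfl fun k _ => ?_
    ring
  rw [this] at h0
  exact nonneg_of_mul_nonneg_right h0 hk0

end Fischer

namespace Vol

/-- the integration operator -/
noncomputable def J : Module.End ℝ C(ℝ, ℝ) where
  toFun f := ⟨fun x => ∫ u in (0:ℝ)..x, f u, by
    exact intervalIntegral.continuous_primitive (fun a b => f.continuous.intervalIntegrable a b) 0⟩
  map_add' f g := by
    ext x
    exact intervalIntegral.integral_add (f.continuous.intervalIntegrable _ _)
      (g.continuous.intervalIntegrable _ _)
  map_smul' c f := by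
    ext x
    exact intervalIntegral.integral_smul c _

lemma J_apply (f : C(ℝ, ℝ)) (x : ℝ) : J f x = ∫ u in (0:ℝ)..x, f u := rfl

lemma J_deriv (f : C(ℝ, ℝ)) (x : ℝ) : HasDerivAt (J f) (f x) x :=
  intervalIntegral.integral_hasDerivAt_right (f.continuous.intervalIntegrable _ _)
    (f.continuous.stronglyMeasurableAtFilter _ _) f.continuous.continuousAt

lemma J_zero (f : C(ℝ, ℝ)) : J f 0 = 0 := by simp [J_apply]

lemma eq_J {F f : C(ℝ, ℝ)} (h : ∀ x, HasDerivAt F (f x) x) (h0 : F 0 = 0) : F = J f := by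
  ext x
  rw [J_apply, intervalIntegral.integral_eq_sub_of_hasDerivAt (fun y _ => h y)
    (f.continuous.intervalIntegrable _ _), h0, sub_zero]

/-- cosine -/
noncomputable def co (m : ℕ) : C(ℝ, ℝ) := ⟨fun x => cos (m * x), by fun_prop⟩
/-- sine -/
noncomputable def si (m : ℕ) : C(ℝ, ℝ) := ⟨fun x => sin (m * x), by fun_prop⟩

lemma co_apply (m : ℕ) (x : ℝ) : co m x = cos (m * x) := rfl
lemma si_apply (m : ℕ) (x : ℝ) : si m x = sin (m * x) := rfl

lemma co_deriv (m : ℕ) (x : ℝ) : HasDerivAt (co m) (-(m * si m x)) x := by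
  have := ((hasDerivAt_id x).const_mul (m : ℝ)).cos
  simpa [co, si, mul_comm] using this

lemma si_deriv (m : ℕ) (x : ℝ) : HasDerivAt (si m) (m * co m x) x := by
  have := ((hasDerivAt_id x).const_mul (m : ℝ)).sin
  simpa [co, si, mul_comm] using this

lemma cs (m : ℕ) (x : ℝ) : co m x * co m x + si m x * si m x = 1 := by
  simp only [co_apply, si_apply]; nlinarith [cos_sq_add_sin_sq (m * x)]

/-- convolution with cosine -/
noncomputable def Cc (m : ℕ) (f : C(ℝ, ℝ)) : C(ℝ, ℝ) := co m * J (co m * f) + si m * J (si m * f)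

/-- the resolvent: solution operator of `y'' + m ^ 2 y = f` -/
noncomputable def R (m : ℕ) : Module.End ℝ C(ℝ, ℝ) :=
  if m = 0 then J * J else
  { toFun := fun f => (m : ℝ)⁻¹ • (si m * J (co m * f) - co m * J (si m * f))
    map_add' := by intro f g; simp only [mul_add, map_add]; rw [← smul_add]; congr 1; ring
    map_smul' := by
      intro c f
      simp only [mul_smul_comm, map_smul, RingHom.id_apply]
      rw [← smul_sub, smul_comm] }

lemma R_zero : R 0 = J * J := by simp [R]

lemma R_apply {m : ℕ} (hm : m ≠ 0) (f : C(ℝ, ℝ)) :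
    R m f = (m : ℝ)⁻¹ • (si m * J (co m * f) - co m * J (si m * f)) := by
  simp [R, hm]

lemma R_J_Cc (m : ℕ) (f : C(ℝ, ℝ)) : R m f = J (Cc m f) := by
  by_cases hm : m = 0
  · subst hm
    rw [R_zero]
    have h1 : co 0 = 1 := by ext x; simp [co_apply]
    have h2 : si 0 = 0 := by ext x; simp [si_apply]
    simp [Cc, h1, h2]
  · have hm' : (m : ℝ) ≠ 0 := by exact_mod_cast hm
    apply eq_J
    · intro x
      rw [R_apply hm]
      have h1 := ((si_deriv m x).mul (J_deriv (co m * f) x)).sub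
        ((co_deriv m x).mul (J_deriv (si m * f) x))
      have h2 := h1.const_mul ((m : ℝ)⁻¹)
      refine HasDerivAt.congr_deriv (f := fun y => (m : ℝ)⁻¹ * (si m y * J (co m * f) y - co m y * J (si m * f) y)) h2 ?_
      simp only [Cc, ContinuousMap.add_apply, ContinuousMap.mul_apply]
      field_simp
      ring
    · rw [R_apply hm]; simp [J_zero]

lemma Cc_J (m : ℕ) (f : C(ℝ, ℝ)) : Cc m f = J (f - (m : ℝ) ^ 2 • R m f) := by
  apply eq_J
  · intro x
    have h1 := ((co_deriv m x).mul (J_deriv (co m * f) x)).add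
        ((si_deriv m x).mul (J_deriv (si m * f) x))
    refine HasDerivAt.congr_deriv (f := fun y => co m y * J (co m * f) y + si m y * J (si m * f) y) h1 ?_
    by_cases hm : m = 0
    · subst hm
      simp [co_apply, si_apply]
    · have hm' : (m : ℝ) ≠ 0 := by exact_mod_cast hm
      rw [R_apply hm]
      simp only [ContinuousMap.sub_apply, ContinuousMap.smul_apply, ContinuousMap.mul_apply,
        smul_eq_mul]
      field_simp
      linear_combination (f x) * cs m x
  · simp [Cc, J_zero]

/-- `1 + m ^ 2 J ^ 2` -/
noncomputable def Bm (m : ℕ) : Module.End ℝ C(ℝ, ℝ) := 1 + (m : ℝ) ^ 2 • (J * J)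
/-- inverse of `Bm` -/
noncomputable def Dm (m : ℕ) : Module.End ℝ C(ℝ, ℝ) := 1 - (m : ℝ) ^ 2 • R m

lemma R_eq (m : ℕ) : R m = J * J * Dm m := by
  ext1 f
  rw [R_J_Cc, Cc_J]; rfl

lemma B_D (m : ℕ) : Bm m * Dm m = 1 := by
  have h := R_eq m
  rw [Bm, add_mul, one_mul, smul_mul_assoc, ← h, Dm]; abel

lemma B_inj (m : ℕ) (y : C(ℝ, ℝ)) (h : Bm m y = 0) : y = 0 := by
  set z := J y with hz
  have e : y = -((m : ℝ) ^ 2 • J z) := by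
    have : y + (m : ℝ) ^ 2 • J z = 0 := h
    exact eq_neg_of_add_eq_zero_left this
  have dz : ∀ x, HasDerivAt z (y x) x := fun x => J_deriv y x
  have dy : ∀ x, HasDerivAt y (-((m : ℝ) ^ 2 * z x)) x := by
    intro x
    have := ((J_deriv z x).const_mul ((m : ℝ) ^ 2)).neg
    refine this.congr_of_eventuallyEq (Filter.Eventually.of_forall fun t => ?_)
    exact congrArg (fun q : C(ℝ, ℝ) => q t) e
  have hE : ∀ x, y x * y x + (m : ℝ) ^ 2 * (z x * z x) = y 0 * y 0 + (m : ℝ) ^ 2 * (z 0 * z 0) := by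
    intro x
    have hd : ∀ x, HasDerivAt (fun x => y x * y x + (m : ℝ) ^ 2 * (z x * z x)) 0 x := by
      intro x
      refine (((dy x).mul (dy x)).add (((dz x).mul (dz x)).const_mul _)).congr_deriv ?_
      ring
    exact is_const_of_deriv_eq_zero (fun x => (hd x).differentiableAt) (fun x => (hd x).deriv) x 0
  have y0 : y 0 = 0 := by rw [e]; simp [J_zero]
  have z0 : z 0 = 0 := J_zero y
  ext x
  have := hE x
  rw [y0, z0] at this
  have h2 : 0 ≤ (m : ℝ) ^ 2 * (z x * z x) := mul_nonneg (sq_nonneg _) (mul_self_nonneg _)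
  have h3 : y x * y x = 0 := by nlinarith [mul_self_nonneg (y x)]
  simpa using h3

lemma D_B (m : ℕ) : Dm m * Bm m = 1 := by
  ext1 f
  have : Bm m ((Dm m * Bm m) f - f) = 0 := by
    have h : (Bm m * Dm m) * Bm m = Bm m := by rw [B_D, one_mul]
    have h' := congrArg (fun T => T f) h
    rw [map_sub, sub_eq_zero]
    exact h'
  exact sub_eq_zero.mp (B_inj m _ this)

lemma comm_inv {Rg : Type*} [Ring Rg] {a b d : Rg} (h1 : b * d = 1) (h2 : d * b = 1)
    (h : a * b = b * a) : a * d = d * a := by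
  calc a * d = d * b * a * d := by rw [h2, one_mul]
    _ = d * (b * a) * d := by rw [mul_assoc d b a]
    _ = d * a * (b * d) := by rw [← h]; noncomm_ring
    _ = d * a := by rw [h1, mul_one]

lemma J_B (m : ℕ) : J * Bm m = Bm m * J := by
  simp only [Bm, mul_add, add_mul, mul_smul_comm, smul_mul_assoc, mul_one, one_mul, mul_assoc]

lemma J_D (m : ℕ) : Commute J (Dm m) := comm_inv (B_D m) (D_B m) (J_B m)

lemma D_D (m n : ℕ) : Commute (Dm m) (Dm n) := by
  refine comm_inv (B_D n) (D_B n) ?_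
  have : Commute (Dm m) (Bm n) := by
    unfold Bm
    exact (Commute.one_right _).add_right
      ((((J_D m).symm).mul_right ((J_D m).symm)).smul_right _)
  exact this

lemma J_R (m : ℕ) : Commute J (R m) := by
  rw [R_eq]
  exact ((Commute.refl J).mul_right (Commute.refl J)).mul_right (J_D m)

lemma R_R (m n : ℕ) : Commute (R m) (R n) := by
  have h : Commute (R m) (Dm n) := by
    rw [R_eq m]
    exact ((J_D n).mul_left (J_D n)).mul_left (D_D m n)
  rw [R_eq n]
  exact ((J_R m).symm.mul_right (J_R m).symm).mul_right h

lemma resolvent (m p : ℕ) : R m - R p = ((p : ℝ) ^ 2 - (m : ℝ) ^ 2) • (R m * R p) := by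
  have h : Dm m - Dm p = ((p : ℝ) ^ 2 - (m : ℝ) ^ 2) • (Dm m * (J * J) * Dm p) := by
    have h1 : Dm m * (Bm p - Bm m) * Dm p = Dm m - Dm p := by
      rw [mul_sub, sub_mul, mul_assoc, B_D, D_B, mul_one, one_mul]
    have h2 : Bm p - Bm m = ((p : ℝ) ^ 2 - (m : ℝ) ^ 2) • (J * J) := by
      rw [Bm, Bm]; module
    rw [← h1, h2, mul_smul_comm, smul_mul_assoc]
  have h2 : R m - R p = J * J * (Dm m - Dm p) := by rw [R_eq, R_eq, mul_sub]
  rw [h2, h, mul_smul_comm, R_eq m, R_eq p]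
  simp only [mul_assoc]

/-- product of resolvents -/
noncomputable def P : ℕ → ℕ → Module.End ℝ C(ℝ, ℝ)
  | n, 0 => R n
  | n, (j + 1) => R n * P (n + 2) j

lemma P_succ' (n j : ℕ) : P n (j + 1) = P n j * R (n + 2 * (j + 1)) := by
  induction j generalizing n with
  | zero => rfl
  | succ j ih =>
    rw [P, ih, P, mul_assoc]
    rw [show n + 2 + 2 * (j + 1) = n + 2 * (j + 1 + 1) by ring]

lemma R_P (m n j : ℕ) : Commute (R m) (P n j) := by
  induction j generalizing n with
  | zero => exact R_R m n
  | succ j ih => exact (R_R m n).mul_right (ih _)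

lemma P_diff (n j : ℕ) : P n j - P (n + 2) j = (4 * ((j : ℝ) + 1) * (n + j + 1)) • P n (j + 1) := by
  cases j with
  | zero =>
    rw [P, P, resolvent, P, P]; congr 1; push_cast; ring
  | succ i =>
    rw [P, P_succ' (n + 2) i, (R_P n (n + 2) i).eq, ← mul_sub, resolvent, mul_smul_comm, ← mul_assoc,
      ← (R_P n (n + 2) i).eq, P, P_succ' (n + 2) i, mul_assoc]
    congr 1; push_cast; ring

lemma Jpow_R (k m : ℕ) : Commute (J ^ k) (R m) := (J_R m).pow_left k

/-- the basic functions -/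
noncomputable def Y (n j : ℕ) : C(ℝ, ℝ) := (J ^ j * P n j) 1

lemma Y_succ (n j : ℕ) : Y n (j + 1) = J (R n (Y (n + 2) j)) := by
  have : J ^ (j + 1) * P n (j + 1) = J * (R n * (J ^ j * P (n + 2) j)) := by
    rw [pow_succ', P, mul_assoc, ← mul_assoc (J ^ j), (Jpow_R j n).eq, mul_assoc]
  rw [Y, this]; rfl

/-- the kernels -/
noncomputable def w (m : ℕ) (v : ℝ) : ℝ := if m = 0 then v ^ 2 / 2 else (1 - cos (m * v)) / m ^ 2

lemma w_nonneg (m : ℕ) (v : ℝ) : 0 ≤ w m v := by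
  unfold w; split_ifs
  · positivity
  · have := cos_le_one (m * v)
    exact div_nonneg (by linarith) (by positivity)

lemma w_cont (m : ℕ) : Continuous (w m) := by
  unfold w; split_ifs <;> fun_prop

lemma w_le (m : ℕ) (v : ℝ) (h0 : 0 ≤ v) (h1 : v ≤ π) : w m v ≤ 10 / ((m : ℝ) + 1) ^ 2 := by
  unfold w; split_ifs with h
  · subst h
    have := pi_lt_four
    norm_num
    nlinarith
  · have h1' : (1 : ℝ) ≤ m := by exact_mod_cast Nat.one_le_iff_ne_zero.mpr h
    have := neg_one_le_cos (m * v)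
    rw [div_le_div_iff₀ (by positivity) (by positivity)]
    have h3 : (1 - cos (m * v)) * ((m:ℝ) + 1) ^ 2 ≤ 2 * ((m:ℝ) + 1) ^ 2 :=
      mul_le_mul_of_nonneg_right (by linarith) (by positivity)
    nlinarith

/-- Cauchy's formula for repeated integration -/
lemma cauchy (k : ℕ) (f : C(ℝ, ℝ)) (x : ℝ) :
    (J ^ (k + 1)) f x = ∫ u in (0:ℝ)..x, (x - u) ^ k / (k.factorial : ℝ) * f u := by
  induction k generalizing f with
  | zero => simp [J_apply]
  | succ k ih =>
    rw [pow_succ]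
    change (J ^ (k + 1)) (J f) x = _
    rw [ih]
    have h1 : ∀ u ∈ uIcc (0:ℝ) x, HasDerivAt (fun u => (x - u) ^ (k + 1) / ((k + 1).factorial : ℝ))
        (-((x - u) ^ k / (k.factorial : ℝ))) u := by
      intro u _
      have := (((hasDerivAt_id u).const_sub x).pow (k + 1)).div_const ((k + 1).factorial : ℝ)
      refine this.congr_deriv ?_
      rw [Nat.factorial_succ]
      simp
      field_simp
    have h2 : ∀ u ∈ uIcc (0:ℝ) x, HasDerivAt (fun u => J f u) (f u) u := fun u _ => J_deriv f u
    rw [intervalIntegral.integral_mul_deriv_eq_deriv_mul h1 h2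
      (Continuous.intervalIntegrable (by fun_prop) _ _)
      (f.continuous.intervalIntegrable _ _)]
    simp [J_zero]

lemma JR_apply (m : ℕ) (f : C(ℝ, ℝ)) (x : ℝ) :
    J (R m f) x = ∫ u in (0:ℝ)..x, w m (x - u) * f u := by
  by_cases hm : m = 0
  · subst hm
    have : J (R 0 f) = (J ^ (2 + 1)) f := by
      rw [R_zero, pow_succ, pow_two]; rfl
    rw [this, cauchy]; simp [w]
  · have hm' : (m : ℝ) ≠ 0 := by exact_mod_cast hm
    have : J (R m f) = ((m : ℝ) ^ 2)⁻¹ • (J f - co m * J (co m * f) - si m * J (si m * f)) := by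
      symm
      apply eq_J
      · intro x
        have h := (((J_deriv f x).sub ((co_deriv m x).mul (J_deriv (co m * f) x))).sub
          ((si_deriv m x).mul (J_deriv (si m * f) x))).const_mul (((m : ℝ) ^ 2)⁻¹)
        refine HasDerivAt.congr_deriv (f := fun y => ((m : ℝ) ^ 2)⁻¹ * (J f y - co m y * J (co m * f) y - si m y * J (si m * f) y)) h ?_
        rw [R_apply hm]
        simp only [ContinuousMap.sub_apply, ContinuousMap.smul_apply, ContinuousMap.mul_apply,
          smul_eq_mul]
        field_simp
        linear_combination (-(f x)) * cs m x
      · simp [J_zero]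
    rw [this]
    simp only [ContinuousMap.sub_apply, ContinuousMap.smul_apply, ContinuousMap.mul_apply,
      smul_eq_mul, J_apply]
    rw [← intervalIntegral.integral_const_mul, ← intervalIntegral.integral_const_mul,
      ← intervalIntegral.integral_sub, ← intervalIntegral.integral_sub,
      ← intervalIntegral.integral_const_mul]
    · refine intervalIntegral.integral_congr fun u _ => ?_
      simp only [w, hm, if_false, co_apply, si_apply, mul_sub, cos_sub]
      field_simp
      ring
    all_goals exact Continuous.intervalIntegrable (by fun_prop) _ _

lemma R_one (m : ℕ) : R m 1 = (J ^ 2) (co m) := by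
  rw [R_J_Cc]
  have : Cc m 1 = J (co m) := by
    apply eq_J
    · intro x
      have h1 := ((co_deriv m x).mul (J_deriv (co m * 1) x)).add
        ((si_deriv m x).mul (J_deriv (si m * 1) x))
      refine HasDerivAt.congr_deriv (f := fun y => co m y * J (co m * 1) y + si m y * J (si m * 1) y) h1 ?_
      have e1 : (m : ℝ) • J (co m) = si m := by
        rw [← map_smul]; symm
        exact eq_J (fun x => si_deriv m x) (by simp [si_apply])
      have e2 : (m : ℝ) • J (si m) = 1 - co m := by
        rw [← map_smul]; symm
        refine eq_J (fun x => ?_) (by simp [co_apply])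
        have := (co_deriv m x).const_sub 1
        rw [neg_neg] at this
        exact this
      have e1' := congrArg (fun q : C(ℝ, ℝ) => q x) e1
      have e2' := congrArg (fun q : C(ℝ, ℝ) => q x) e2
      simp only [ContinuousMap.smul_apply, smul_eq_mul, ContinuousMap.sub_apply,
        ContinuousMap.one_apply] at e1' e2'
      simp only [mul_one]
      linear_combination (-(si m x)) * e1' + (co m x) * e2'
    · simp [Cc, J_zero]
  rw [this, pow_two]; rfl

lemma R_one_eq (m : ℕ) (x : ℝ) : R m 1 x = w m x := by
  rw [R_one]
  by_cases hm : m = 0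
  · subst hm
    rw [cauchy 1]
    simp [w, co_apply]
    rw [intervalIntegral.integral_comp_sub_left (fun u => u)]
    simp
  · have hm' : (m : ℝ) ≠ 0 := by exact_mod_cast hm
    have e1 : J (co m) = (m : ℝ)⁻¹ • si m := by
      symm
      refine eq_J (fun x => ?_) (by simp [si_apply])
      have := (si_deriv m x).const_mul ((m : ℝ)⁻¹)
      rw [inv_mul_cancel_left₀ hm'] at this
      exact this
    have e2 : J (si m) = (m : ℝ)⁻¹ • (1 - co m) := by
      symm
      refine eq_J (fun x => ?_) (by simp [co_apply])
      have := ((co_deriv m x).const_sub 1).const_mul ((m : ℝ)⁻¹)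
      rw [neg_neg, inv_mul_cancel_left₀ hm'] at this
      exact this
    have : (J ^ 2) (co m) = J (J (co m)) := by rw [pow_two]; rfl
    rw [this, e1, map_smul, e2]
    simp [w, hm, co_apply]
    field_simp

lemma Y_zero_apply (n : ℕ) (x : ℝ) : Y n 0 x = w n x := by
  have : Y n 0 = R n 1 := by simp [Y, P]
  rw [this, R_one_eq]

/-- nonnegative and positive on a dense set -/
def Pos (f : ℝ → ℝ) : Prop :=
  (∀ u, 0 ≤ u → 0 ≤ f u) ∧ ∀ a b, 0 ≤ a → a < b → ∃ u ∈ Ioo a b, 0 < f u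

lemma w_pos_dense (m : ℕ) (a b : ℝ) (hab : a < b) : ∃ u ∈ Ioo a b, 0 < w m u := by
  by_contra! hcon
  have hz : ∀ u ∈ Ioo a b, w m u = 0 := fun u hu => le_antisymm (hcon u hu) (w_nonneg m u)
  by_cases hm : m = 0
  · subst hm
    have h1 := hz ((a + b) / 2) ⟨by linarith, by linarith⟩
    have h2 := hz ((a + 2 * b) / 3) ⟨by linarith, by linarith⟩
    simp [w] at h1 h2
    linarith
  · have hm' : (0 : ℝ) < m := by exact_mod_cast Nat.pos_of_ne_zero hm
    have hc : ∀ u ∈ Ioo a b, cos (m * u) = 1 := by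
      intro u hu
      have := hz u hu
      simp [w, hm] at this
      linarith
    set u := (a + b) / 2 with hu
    set e := min ((b - a) / 4) (1 / m) with he
    have he0 : 0 < e := lt_min (by linarith) (by positivity)
    have he1 : e ≤ (b - a) / 4 := min_le_left _ _
    have he2 : m * e ≤ 1 := by
      have : e ≤ 1 / m := min_le_right _ _
      calc m * e ≤ m * (1 / m) := mul_le_mul_of_nonneg_left this hm'.le
        _ = 1 := by field_simp
    have h1 := hc u ⟨by linarith, by linarith⟩
    have h2 := hc (u + e) ⟨by linarith, by linarith⟩
    have hs : sin (m * u) = 0 := by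
      have := cos_sq_add_sin_sq (m * u)
      rw [h1] at this
      nlinarith
    rw [mul_add, cos_add, h1, hs] at h2
    have h3 : cos (m * e) < cos 0 :=
      cos_lt_cos_of_nonneg_of_le_pi le_rfl (by linarith [pi_gt_three]) (by positivity)
    rw [cos_zero] at h3
    linarith

lemma w_Pos (m : ℕ) : Pos (w m) := ⟨fun u _ => w_nonneg m u, fun a b _ h => w_pos_dense m a b h⟩

lemma JR_pos (m : ℕ) (f : C(ℝ, ℝ)) (hf : Pos f) (x : ℝ) (hx : 0 < x) : 0 < J (R m f) x := by
  rw [JR_apply]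
  have hcont : Continuous fun u => w m (x - u) * f u :=
    ((w_cont m).comp (by fun_prop)).mul f.continuous
  obtain ⟨u0, hu0, hp⟩ := hf.2 0 x le_rfl hx
  have hev : ∀ᶠ u in nhds u0, 0 < f u ∧ u ∈ Ioo 0 x :=
    (f.continuous.continuousAt.eventually (lt_mem_nhds hp)).and (Ioo_mem_nhds hu0.1 hu0.2)
  obtain ⟨e, he, hball⟩ := Metric.eventually_nhds_iff.mp hev
  obtain ⟨v, hv, hwv⟩ := w_pos_dense m (x - u0 - e) (x - u0 + e) (by linarith)
  have hxv := @hball (x - v) (by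
    rw [Real.dist_eq, abs_lt]; constructor <;> linarith [hv.1, hv.2])
  refine intervalIntegral.integral_pos hx hcont.continuousOn
    (fun u hu => mul_nonneg (w_nonneg _ _) (hf.1 u hu.1.le))
    ⟨x - v, ⟨hxv.2.1.le, hxv.2.2.le⟩, ?_⟩
  rw [sub_sub_cancel]
  exact mul_pos hwv hxv.1

lemma JR_Pos (m : ℕ) (f : C(ℝ, ℝ)) (hf : Pos f) : Pos (J (R m f)) := by
  constructor
  · intro u hu
    rcases hu.eq_or_lt with h | h
    · rw [← h, J_zero]
    · exact (JR_pos m f hf u h).le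
  · intro a b ha hab
    exact ⟨(a + b) / 2, ⟨by linarith, by linarith⟩, JR_pos m f hf _ (by linarith)⟩

lemma Y_Pos (n j : ℕ) : Pos (Y n j) := by
  induction j generalizing n with
  | zero =>
    have : (Y n 0 : ℝ → ℝ) = w n := funext (Y_zero_apply n)
    rw [this]; exact w_Pos n
  | succ j ih => rw [Y_succ]; exact JR_Pos _ _ (ih _)

lemma Y_pos (n j : ℕ) (hj : 1 ≤ j) (x : ℝ) (hx : 0 < x) : 0 < Y n j x := by
  obtain ⟨i, rfl⟩ : ∃ i, j = i + 1 := ⟨j - 1, by omega⟩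
  rw [Y_succ]
  exact JR_pos _ _ (Y_Pos _ _) x hx

lemma bound_int (k f : ℝ → ℝ) (A B x : ℝ) (h0 : 0 ≤ x) (h1 : x ≤ π) (hA : 0 ≤ A)
    (hk : ∀ u ∈ Icc 0 x, |k u| ≤ A) (hf : ∀ u ∈ Icc 0 π, |f u| ≤ B) :
    |∫ u in (0:ℝ)..x, k u * f u| ≤ π * A * B := by
  have hB : 0 ≤ B := (abs_nonneg _).trans (hf 0 ⟨le_rfl, pi_pos.le⟩)
  have := intervalIntegral.norm_integral_le_of_norm_le_const (a := 0) (b := x) (C := A * B)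
    (f := fun u => k u * f u) (by
      intro u hu
      rw [uIoc_of_le h0] at hu
      rw [norm_mul]
      exact mul_le_mul (hk u ⟨hu.1.le, hu.2⟩) (hf u ⟨hu.1.le, hu.2.trans h1⟩) (norm_nonneg _) hA)
  rw [Real.norm_eq_abs, sub_zero, abs_of_nonneg h0] at this
  calc _ ≤ A * B * x := this
    _ ≤ A * B * π := mul_le_mul_of_nonneg_left h1 (by positivity)
    _ = _ := by ring

lemma Y_bound (j : ℕ) : ∃ K : ℝ, 0 ≤ K ∧ ∀ n : ℕ, ∀ x ∈ Icc 0 π,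
    |Y n j x| ≤ K / ((n : ℝ) + 1) ^ (2 * j + 2) := by
  induction j with
  | zero =>
    refine ⟨10, by norm_num, fun n x hx => ?_⟩
    rw [Y_zero_apply, abs_of_nonneg (w_nonneg _ _)]
    simpa using w_le n x hx.1 hx.2
  | succ j ih =>
    obtain ⟨K, hK, h⟩ := ih
    refine ⟨π * 10 * K, by positivity, fun n x hx => ?_⟩
    rw [Y_succ, JR_apply]
    refine (bound_int _ _ (10 / ((n : ℝ) + 1) ^ 2) (K / ((n : ℝ) + 1) ^ (2 * j + 2)) x hx.1 hx.2
      (by positivity) ?_ ?_).trans (le_of_eq ?_)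
    · intro u hu
      rw [abs_of_nonneg (w_nonneg _ _)]
      exact w_le n _ (by linarith [hu.2]) (by linarith [hu.1, hx.2])
    · intro u hu
      refine (h (n + 2) u hu).trans ?_
      have : ((n : ℝ) + 1) ^ (2 * j + 2) ≤ (((n + 2 : ℕ) : ℝ) + 1) ^ (2 * j + 2) := by
        gcongr; simp
      exact div_le_div_of_nonneg_left hK (by positivity) this
    · rw [show 2 * (j + 1) + 2 = 2 + (2 * j + 2) by ring, pow_add]
      field_simp
      ring

/-- the coefficients -/
noncomputable def W (L j n : ℕ) (x : ℝ) : ℝ := (J ^ L * P n j) 1 x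

lemma Jpow_bound (k : ℕ) (f : C(ℝ, ℝ)) (B : ℝ) (hf : ∀ u ∈ Icc 0 π, |f u| ≤ B) :
    ∀ u ∈ Icc 0 π, |(J ^ k) f u| ≤ π ^ k * B := by
  induction k with
  | zero => simpa using hf
  | succ k ih =>
    intro u hu
    rw [pow_succ']
    change |J ((J ^ k) f) u| ≤ _
    rw [J_apply]
    have := bound_int (fun _ => 1) ((J ^ k) f) 1 (π ^ k * B) u hu.1 hu.2 zero_le_one
      (by simp) ih
    simp only [one_mul] at this
    refine this.trans (le_of_eq ?_)
    ring

lemma W_bound (L j : ℕ) (h : j ≤ L) : ∃ K : ℝ, 0 ≤ K ∧ ∀ n : ℕ, ∀ x ∈ Icc 0 π,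
    |W L j n x| ≤ K / ((n : ℝ) + 1) ^ (2 * j + 2) := by
  obtain ⟨K, hK, hY⟩ := Y_bound j
  refine ⟨π ^ (L - j) * K, by positivity, fun n x hx => ?_⟩
  have : W L j n x = (J ^ (L - j)) (Y n j) x := by
    rw [W, Y]
    have : J ^ L * P n j = J ^ (L - j) * (J ^ j * P n j) := by
      rw [← mul_assoc, ← pow_add, Nat.sub_add_cancel h]
    rw [this]; rfl
  rw [this, mul_div_assoc]
  exact Jpow_bound _ _ _ (hY n) x hx

lemma W_pos (L n : ℕ) (hL : 1 ≤ L) (x : ℝ) (hx : 0 < x) : 0 < W L L n x := Y_pos n L hL x hx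

lemma W_diff (L j n : ℕ) (x : ℝ) :
    W L j n x - W L j (n + 2) x = 4 * ((j : ℝ) + 1) * (n + j + 1) * W L (j + 1) n x := by
  have h := congrArg (fun T => (J ^ L * T) (1 : C(ℝ, ℝ)) x) (P_diff n j)
  simp only [mul_sub, mul_smul_comm] at h
  exact h

lemma W_zero (L n : ℕ) (x : ℝ) : W L 0 n x
    = ∫ u in (0:ℝ)..x, (x - u) ^ (L + 1) / ((L + 1).factorial : ℝ) * cos (n * u) := by
  have : W L 0 n x = (J ^ (L + 1 + 1)) (co n) x := by
    rw [W, P, pow_add J L 2]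
    change (J ^ L) (R n 1) x = (J ^ L) ((J ^ 2) (co n)) x
    rw [R_one]
  rw [this, cauchy]; rfl

end Vol

namespace Ser
open Vol

lemma geg_real_rec (j : ℕ) (t : ℝ) (n : ℕ) :
    ((n : ℝ) + 2) * geg j 1 t (n + 2) = 2 * ((n : ℝ) + 1 + j) * (t * geg j 1 t (n + 1))
      - ((n : ℝ) + 2 * j) * geg j 1 t n := by
  have := geg_rec j (1 : ℝ) t n
  simpa using this

lemma geg_low (j : ℕ) (t : ℝ) (n : ℕ) :
    geg j 1 t (n + 2) = geg (j + 1) 1 t (n + 2) - 2 * t * geg (j + 1) 1 t (n + 1)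
      + geg (j + 1) 1 t n := by
  induction n using Nat.twoStepInduction with
  | zero => simp [geg]; ring
  | one => simp [geg]; ring
  | more n h1 h2 =>
    have r := geg_real_rec j t (n + 2)
    have a2 := geg_real_rec (j + 1) t (n + 2)
    have a1 := geg_real_rec (j + 1) t (n + 1)
    have a0 := geg_real_rec (j + 1) t n
    rw [show n + 2 + 1 = n + 1 + 2 by ring, h1, h2] at r
    rw [show n + 2 + 1 = n + 1 + 2 by ring] at a2 ⊢
    rw [show n + 1 + 1 = n + 2 by ring] at r a1
    push_cast at r a2 a1 a0
    have h4 : ((n : ℝ) + 4) ≠ 0 := by positivity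
    apply mul_left_cancel₀ h4
    linear_combination r - a2 + 2 * t * a1 - a0

lemma geg_step (j : ℕ) (t : ℝ) (n : ℕ) :
    ((n : ℝ) + 2 + j) * geg j 1 t (n + 2) = j * (geg (j + 1) 1 t (n + 2) - geg (j + 1) 1 t n) := by
  have a0 := geg_real_rec (j + 1) t n
  rw [geg_low]
  push_cast at a0
  linear_combination a0

lemma geg_one_step (θ : ℝ) (n : ℕ) :
    geg 1 1 (cos θ) (n + 2) - geg 1 1 (cos θ) n = 2 * cos (((n + 2 : ℕ) : ℝ) * θ) := by
  have A : ∀ n, geg 1 1 (cos θ) (n + 2) = 2 * cos θ * geg 1 1 (cos θ) (n + 1) - geg 1 1 (cos θ) n := by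
    intro n
    have := geg_real_rec 1 (cos θ) n
    have h : ((n : ℝ) + 2) ≠ 0 := by positivity
    apply mul_left_cancel₀ h
    push_cast at this
    linear_combination this
  induction n using Nat.twoStepInduction with
  | zero =>
    rw [A]; simp [geg, cos_two_mul]; ring
  | one =>
    rw [A, A]; simp [geg]
    rw [cos_three_mul]; ring
  | more n h1 h2 =>
    have hc : cos (((n + 2 + 2 : ℕ) : ℝ) * θ) = 2 * cos θ * cos (((n + 1 + 2 : ℕ) : ℝ) * θ)
        - cos (((n + 2 : ℕ) : ℝ) * θ) := by
      have e1 : ((n + 2 + 2 : ℕ) : ℝ) * θ = ((n + 1 + 2 : ℕ) : ℝ) * θ + θ := by push_cast; ring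
      have e2 : ((n + 2 : ℕ) : ℝ) * θ = ((n + 1 + 2 : ℕ) : ℝ) * θ - θ := by push_cast; ring
      rw [e1, e2, cos_add, cos_sub]; ring
    rw [hc]
    have b1 := A (n + 2)
    have b2 := A n
    rw [show n + 1 + 2 = n + 2 + 1 by ring] at h2 ⊢
    linear_combination b1 - b2 + 2 * cos θ * h2 - h1

/-- summands at level 0 -/
noncomputable def ec (θ : ℝ) (n : ℕ) : ℝ := if n = 0 then 1 else 2 * cos (n * θ)

lemma hs_congr {f g : ℕ → ℝ} {S T : ℝ} (h : HasSum f S) (e : ∀ n, g n = f n) (e2 : T = S) :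
    HasSum g T := by
  have : g = f := funext e
  rw [this, e2]; exact h

lemma abel (D W e : ℕ → ℝ) (S : ℝ) (h0 : e 0 = D 0) (h1 : e 1 = D 1)
    (h2 : ∀ n, e (n + 2) = D (n + 2) - D n) (hs : HasSum (fun n => e n * W n) S)
    (hl : Filter.Tendsto (fun n => D n * W n) Filter.atTop (nhds 0))
    (hsum : Summable (fun n => D n * (W n - W (n + 2)))) :
    HasSum (fun n => D n * (W n - W (n + 2))) S := by
  have key : ∀ N, ∑ n ∈ Finset.range (N + 2), e n * W n
      = ∑ n ∈ Finset.range N, D n * (W n - W (n + 2)) + (D N * W N + D (N + 1) * W (N + 1)) := by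
    intro N
    induction N with
    | zero => simp [Finset.sum_range_succ, h0, h1]
    | succ N ih =>
      rw [Finset.sum_range_succ, ih, Finset.sum_range_succ, h2]; ring
  have t1 := (hs.tendsto_sum_nat).comp (Filter.tendsto_add_atTop_nat 2)
  have t2 := hl.add (hl.comp (Filter.tendsto_add_atTop_nat 1))
  have t3 := t1.sub t2
  have : Filter.Tendsto (fun N => ∑ n ∈ Finset.range N, D n * (W n - W (n + 2))) Filter.atTop
      (nhds S) := by
    simp only [add_zero, sub_zero] at t3
    refine t3.congr fun N => ?_
    simp only [Function.comp]
    rw [key]; ring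
  have := tendsto_nhds_unique this hsum.hasSum.tendsto_sum_nat
  rw [this]; exact hsum.hasSum

lemma D_bound (D e : ℕ → ℝ) (h0 : e 0 = D 0) (h1 : e 1 = D 1)
    (h2 : ∀ n, e (n + 2) = D (n + 2) - D n) (K : ℝ) (j : ℕ) (hK : 0 ≤ K)
    (he : ∀ n : ℕ, |e n| ≤ K * ((n : ℝ) + 1) ^ (2 * j)) (n : ℕ) :
    |D n| ≤ K * ((n : ℝ) + 1) ^ (2 * j + 1) := by
  induction n using Nat.twoStepInduction with
  | zero => have := he 0; rw [h0] at this; simpa using this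
  | one =>
    have := he 1; rw [h1] at this
    refine this.trans (mul_le_mul_of_nonneg_left ?_ hK)
    exact pow_le_pow_right₀ (by norm_num) (by omega)
  | more n a b =>
    have h := he (n + 2)
    rw [h2] at h
    have h3 : |D (n + 2)| ≤ |D (n + 2) - D n| + |D n| := by
      have := abs_add_le (D (n + 2) - D n) (D n); simpa using this
    have h4 : ((n : ℝ) + 1) ^ (2 * j) ≤ (((n + 2 : ℕ) : ℝ) + 1) ^ (2 * j) := by
      gcongr; simp
    set q := (((n + 2 : ℕ) : ℝ) + 1) ^ (2 * j) with hq
    have hq0 : 0 ≤ q := by positivity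
    calc |D (n + 2)| ≤ K * q + K * ((n : ℝ) + 1) ^ (2 * j + 1) := by linarith
      _ = K * (q + ((n : ℝ) + 1) ^ (2 * j) * ((n : ℝ) + 1)) := by rw [pow_succ]; ring
      _ ≤ K * (q + q * ((n : ℝ) + 1)) := by gcongr
      _ ≤ K * (q * (((n + 2 : ℕ) : ℝ) + 1)) := by
        gcongr; push_cast; nlinarith
      _ = _ := by rw [pow_succ]

lemma summable_bd (a : ℕ → ℝ) (K : ℝ) (h : ∀ n : ℕ, |a n| ≤ K / ((n : ℝ) + 1) ^ 2) :
    Summable a := by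
  refine Summable.of_norm_bounded (g := fun n : ℕ => K / ((n : ℝ) + 1) ^ 2) ?_ h
  have := (summable_nat_add_iff 1).mpr (Real.summable_one_div_nat_pow.mpr (one_lt_two))
  refine (this.mul_left K).congr fun n => ?_
  push_cast; ring

/-- the abstract step -/
lemma step (L j : ℕ) (hj : j + 1 ≤ L) (x : ℝ) (hx : x ∈ Icc 0 π) (D e : ℕ → ℝ) (S : ℝ)
    (h0 : e 0 = D 0) (h1 : e 1 = D 1) (h2 : ∀ n, e (n + 2) = D (n + 2) - D n)
    (K : ℝ) (hK : 0 ≤ K) (he : ∀ n : ℕ, |e n| ≤ K * ((n : ℝ) + 1) ^ (2 * j))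
    (hs : HasSum (fun n => e n * W L j n x) S) :
    HasSum (fun n : ℕ => (((n : ℝ) + j + 1) * D n) * W L (j + 1) n x) (S / (4 * (j + 1))) ∧
    ∀ n : ℕ, |((n : ℝ) + j + 1) * D n| ≤ ((j : ℝ) + 1) * K * ((n : ℝ) + 1) ^ (2 * (j + 1)) := by
  have hD := D_bound D e h0 h1 h2 K j hK he
  have hB : ∀ n : ℕ, |((n : ℝ) + j + 1) * D n| ≤ ((j : ℝ) + 1) * K * ((n : ℝ) + 1) ^ (2 * (j + 1)) := by
    intro n
    rw [abs_mul, abs_of_nonneg (by positivity)]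
    calc ((n : ℝ) + j + 1) * |D n| ≤ (((j : ℝ) + 1) * (n + 1)) * (K * ((n : ℝ) + 1) ^ (2 * j + 1)) := by
          gcongr
          · nlinarith [mul_nonneg (Nat.cast_nonneg (α := ℝ) j) (Nat.cast_nonneg (α := ℝ) n)]
          · exact hD n
      _ = _ := by rw [show 2 * (j + 1) = 2 * j + 1 + 1 by ring, pow_succ _ (2 * j + 1)]; ring
  refine ⟨?_, hB⟩
  obtain ⟨K1, hK1, hW1⟩ := W_bound L j (by omega)
  obtain ⟨K2, hK2, hW2⟩ := W_bound L (j + 1) hj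
  have hS : Summable (fun n : ℕ => (((n : ℝ) + j + 1) * D n) * W L (j + 1) n x) := by
    refine summable_bd _ (((j : ℝ) + 1) * K * K2) fun n => ?_
    rw [abs_mul]
    refine (mul_le_mul (hB n) (hW2 n x hx) (abs_nonneg _) (by positivity)).trans (le_of_eq ?_)
    rw [pow_add ((n : ℝ) + 1) (2 * (j + 1)) 2]
    field_simp
  have hd : ∀ n, D n * (W L j n x - W L j (n + 2) x)
      = (4 * ((j : ℝ) + 1)) * ((((n : ℝ) + j + 1) * D n) * W L (j + 1) n x) := by
    intro n; rw [W_diff]; ring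
  have := abel D (fun n => W L j n x) e S h0 h1 h2 hs ?_ ?_
  · have h5 := this.div_const (4 * ((j : ℝ) + 1))
    refine hs_congr h5 (fun n => ?_) rfl
    rw [hd]
    have : (4 * ((j : ℝ) + 1)) ≠ 0 := by positivity
    field_simp
  · have hlim : Filter.Tendsto (fun n : ℕ => K * K1 * (1 / ((n : ℝ) + 1))) Filter.atTop (nhds 0) := by
      have := (tendsto_one_div_add_atTop_nhds_zero_nat (𝕜 := ℝ)).const_mul (K * K1)
      simpa using this
    refine squeeze_zero_norm (fun n => ?_) hlim
    rw [norm_mul]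
    refine (mul_le_mul (hD n) (hW1 n x hx) (abs_nonneg _) (by positivity)).trans (le_of_eq ?_)
    rw [pow_succ ((n : ℝ) + 1) (2 * j + 1)]
    field_simp
  · refine (hS.mul_left (4 * ((j : ℝ) + 1))).congr fun n => ?_
    rw [hd]

lemma fold_int (G : ℝ → ℂ) (hG : Continuous G) :
    ∫ u in (-π)..π, G u = ∫ u in (0 : ℝ)..π, (G u + G (-u)) := by
  have hi : ∀ a b : ℝ, IntervalIntegrable G volume a b := fun a b => hG.intervalIntegrable a b
  have hi2 : IntervalIntegrable (fun u => G (-u)) volume 0 π :=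
    (hG.comp continuous_neg).intervalIntegrable _ _
  rw [intervalIntegral.integral_add (hi _ _) hi2, intervalIntegral.integral_comp_neg,
    ← intervalIntegral.integral_add_adjacent_intervals (hi (-π) 0) (hi 0 π)]
  simp [add_comm]

noncomputable def Fr (L : ℕ) (x u : ℝ) : ℝ := (max (x - |u|) 0) ^ (L + 1) / ((L + 1).factorial : ℝ)

lemma Fr_cont (L : ℕ) (x : ℝ) : Continuous (Fr L x) := by
  unfold Fr; fun_prop

lemma Fr_int (L : ℕ) (x : ℝ) (hx : x ∈ Ioc 0 π) (n : ℕ) :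
    ∫ u in (0 : ℝ)..π, Fr L x u * cos (n * u) = W L 0 n x := by
  have hc : Continuous fun u => Fr L x u * cos (n * u) := by
    have := Fr_cont L x
    fun_prop
  rw [W_zero, ← intervalIntegral.integral_add_adjacent_intervals (hc.intervalIntegrable 0 x)
    (hc.intervalIntegrable x π)]
  have h2 : ∫ u in x..π, Fr L x u * cos (n * u) = 0 := by
    rw [intervalIntegral.integral_congr (g := fun _ => 0)]
    · simp
    · intro u hu
      rw [uIcc_of_le hx.2] at hu
      have : max (x - |u|) 0 = 0 := max_eq_right (by
        have := le_abs_self u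
        linarith [hu.1])
      simp [Fr, this]
  rw [h2, add_zero]
  refine intervalIntegral.integral_congr fun u hu => ?_
  rw [uIcc_of_le hx.1.le] at hu
  have : max (x - |u|) 0 = x - u := by
    rw [abs_of_nonneg hu.1]; exact max_eq_left (by linarith [hu.2])
  simp [Fr, this]

lemma coef (L : ℕ) (x : ℝ) (hx : x ∈ Ioc 0 π) (n : ℤ) :
    ∫ u in (-π)..π, Complex.exp (-(Complex.I * n * u)) * (Fr L x u : ℂ) = 2 * (W L 0 n.natAbs x : ℂ) := by
  have hF := Fr_cont L x
  rw [fold_int _ (by fun_prop), ← Fr_int L x hx, ← intervalIntegral.integral_ofReal,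
    ← intervalIntegral.integral_const_mul]
  refine intervalIntegral.integral_congr fun u _ => ?_
  have h1 : Fr L x (-u) = Fr L x u := by simp [Fr]
  have h2 : cos ((n.natAbs : ℝ) * u) = cos (n * u) := by
    rcases Int.natAbs_eq n with h | h
    · conv_rhs => rw [h]
      simp
    · have h' := congrArg (Int.cast : ℤ → ℝ) h
      rw [Int.cast_neg, Int.cast_natCast] at h'
      rw [h', neg_mul, cos_neg]
  simp only [h1, h2]
  push_cast
  rw [Complex.cos]
  have e1 : -(Complex.I * n * u) = -((n : ℂ) * u) * Complex.I := by ring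
  have e2 : -(Complex.I * n * -(u : ℂ)) = ((n : ℂ) * u) * Complex.I := by ring
  rw [e1, e2]; ring

lemma cos_series (L : ℕ) (x : ℝ) (hx : x ∈ Ioc 0 π) (θ : ℝ) (hθ : θ ∈ Icc 0 π) :
    HasSum (fun n => ec θ n * W L 0 n x) (π * ((max (x - θ) 0) ^ (L + 1) / ((L + 1).factorial : ℝ))) := by
  have : Fact (0 < 2 * π) := ⟨by positivity⟩
  have hF := Fr_cont L x
  have hev : ∀ u, Fr L x (-u) = Fr L x u := fun u => by simp [Fr]
  let f : C(AddCircle (2 * π), ℂ) := ⟨AddCircle.liftIco (2 * π) (-π) (fun u => (Fr L x u : ℂ)),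
    AddCircle.liftIco_continuous (by
      rw [show -π + 2 * π = π by ring, hev]) (by fun_prop)⟩
  have hf : ∀ u ∈ Ico (-π) π, f (u : AddCircle (2 * π)) = (Fr L x u : ℂ) := by
    intro u hu
    have h' : u ∈ Ico (-π) (-π + 2 * π) := by rw [show -π + 2 * π = π by ring]; exact hu
    exact AddCircle.liftIco_coe_apply (f := fun u => (Fr L x u : ℂ)) h' 
  have hc : ∀ n : ℤ, fourierCoeff f n = ((W L 0 n.natAbs x / π : ℝ) : ℂ) := by
    intro n
    rw [fourierCoeff_eq_intervalIntegral f n (-π), show -π + 2 * π = π by ring]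
    have : ∫ u in (-π)..π, fourier (-n) (u : AddCircle (2 * π)) • f u
        = ∫ u in (-π)..π, Complex.exp (-(Complex.I * n * u)) * (Fr L x u : ℂ) := by
      refine intervalIntegral.integral_congr_ae ?_
      have : ∀ᵐ u : ℝ, u ≠ π := by simp [ae_iff]
      filter_upwards [this] with u hu hu2
      rw [uIoc_of_le (by linarith [pi_pos])] at hu2
      rw [hf u ⟨hu2.1.le, lt_of_le_of_ne hu2.2 hu⟩, fourier_coe_apply, smul_eq_mul]
      congr 2
      push_cast
      have : (π : ℂ) ≠ 0 := by exact_mod_cast pi_ne_zero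
      field_simp
    rw [this, coef L x hx, Complex.real_smul]
    push_cast
    have : (π : ℂ) ≠ 0 := by exact_mod_cast pi_ne_zero
    field_simp
  have hsW : Summable fun n : ℕ => W L 0 n x / π := by
    obtain ⟨K, hK, hb⟩ := W_bound L 0 (by omega)
    refine (summable_bd _ K fun n => ?_).div_const _
    exact hb n x ⟨hx.1.le, hx.2⟩
  have hsum : Summable (fourierCoeff f) := by
    have : Summable fun n : ℤ => W L 0 n.natAbs x / π := by
      refine Summable.of_nat_of_neg (by simpa using hsW) (by simpa using hsW)
    have := Complex.summable_ofReal.mpr this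
    exact this.congr fun n => (hc n).symm
  have hval : f (θ : AddCircle (2 * π)) = (Fr L x θ : ℂ) := by
    rcases eq_or_lt_of_le hθ.2 with h | h
    · have : ((θ : ℝ) : AddCircle (2 * π)) = ((-π : ℝ) : AddCircle (2 * π)) := by
        have e := AddCircle.coe_add_period (2 * π) (-π)
        rw [show -π + 2 * π = π by ring] at e
        rw [h]; exact e
      rw [this, hf _ ⟨le_rfl, by linarith [pi_pos]⟩, hev, h]
    · exact hf θ ⟨by linarith [hθ.1, pi_pos], h⟩
  have H := has_pointwise_sum_fourier_series_of_summable hsum (θ : AddCircle (2 * π))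
  rw [hval] at H
  have H2 := H.nat_add_neg
  have H3 := Complex.hasSum_re H2
  have H4 := (H3.sub (hasSum_ite_eq (0 : ℕ) (W L 0 0 x / π))).mul_left π
  refine hs_congr H4 (fun n => ?_) ?_
  · simp only [hc, fourier_coe_apply, smul_eq_mul, Complex.add_re, Complex.re_ofReal_mul]
    have e1 : (2 * (π : ℂ) * Complex.I * ((n : ℤ) : ℂ) * θ / ((2 * π : ℝ) : ℂ)) = ((n * θ : ℝ) : ℂ) * Complex.I := by
      have : (π : ℂ) ≠ 0 := by exact_mod_cast pi_ne_zero
      push_cast; field_simp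
    have e2 : (2 * (π : ℂ) * Complex.I * ((-(n : ℤ) : ℤ) : ℂ) * θ / ((2 * π : ℝ) : ℂ)) = ((-(n * θ) : ℝ) : ℂ) * Complex.I := by
      have : (π : ℂ) ≠ 0 := by exact_mod_cast pi_ne_zero
      push_cast; field_simp
    rw [e1, e2, Complex.exp_ofReal_mul_I_re, Complex.exp_ofReal_mul_I_re, cos_neg]
    simp only [Int.natAbs_natCast, Int.natAbs_neg]
    unfold ec
    split_ifs with h
    · subst h; simp; field_simp
    · field_simp; ring
  · rw [Complex.add_re, Complex.ofReal_re, hc, fourier_coe_apply]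
    simp only [Fr, abs_of_nonneg hθ.1]
    simp

lemma series (L : ℕ) (x : ℝ) (hx : x ∈ Ioc 0 π) (j : ℕ) (hj : j + 1 ≤ L) :
    ∃ K : ℝ, 0 < K ∧ ∃ B : ℝ, 0 ≤ B ∧ ∀ θ ∈ Icc 0 π,
    HasSum (fun n : ℕ => (((n : ℝ) + j + 1) * geg (j + 1) 1 (cos θ) n) * W L (j + 1) n x)
      (K * (max (x - θ) 0) ^ (L + 1)) ∧
    ∀ n : ℕ, |((n : ℝ) + j + 1) * geg (j + 1) 1 (cos θ) n| ≤ B * ((n : ℝ) + 1) ^ (2 * (j + 1)) := by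
  have hx' : x ∈ Icc 0 π := ⟨hx.1.le, hx.2⟩
  induction j with
  | zero =>
    refine ⟨π / ((L + 1).factorial : ℝ) / 4, by positivity, 2, by norm_num, fun θ hθ => ?_⟩
    have := step L 0 hj x hx' (geg 1 1 (cos θ)) (ec θ) _ (by simp [ec, geg]) (by simp [ec, geg])
      (fun n => by rw [geg_one_step]; simp [ec]) 2 (by norm_num) (fun n => by
        simp only [mul_zero, pow_zero, mul_one]
        unfold ec
        split_ifs
        · norm_num
        · rw [abs_mul, abs_two]; linarith [abs_cos_le_one (n * θ)])
      (cos_series L x hx θ hθ)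
    refine ⟨?_, ?_⟩
    · convert this.1 using 1
      push_cast; ring
    · intro n
      refine (this.2 n).trans (le_of_eq ?_)
      push_cast; ring
  | succ j ih =>
    obtain ⟨K, hK, B, hB, h⟩ := ih (by omega)
    refine ⟨K / (4 * (j + 2)) / (j + 1), by positivity, (j + 2) * (B / (j + 1)), by positivity,
      fun θ hθ => ?_⟩
    obtain ⟨hs, hb⟩ := h θ hθ
    have hj0 : ((j : ℝ) + 1) ≠ 0 := by positivity
    have := step L (j + 1) hj x hx' (geg (j + 2) 1 (cos θ))
      (fun n => (((n : ℝ) + j + 1) * geg (j + 1) 1 (cos θ) n) / (j + 1))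
      (K * (max (x - θ) 0) ^ (L + 1) / (j + 1))
      (by simp [geg]; exact hj0) (by simp [geg]; field_simp; ring)
      (fun n => by
        have := geg_step (j + 1) (cos θ) n
        push_cast at this ⊢
        rw [div_eq_iff hj0]
        linear_combination this) (B / (j + 1)) (by positivity) (fun n => by
        rw [abs_div, abs_of_pos (show (0 : ℝ) < j + 1 by positivity), div_mul_eq_mul_div]
        gcongr
        exact hb n)
      (by
        have := hs.div_const ((j : ℝ) + 1)
        exact hs_congr this (fun n => by ring) rfl)
    refine ⟨?_, ?_⟩
    · convert this.1 using 1
      push_cast; field_simp; ring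
    · intro n
      refine (this.2 n).trans (le_of_eq ?_)
      push_cast; ring
end Ser

namespace Fin4
open Vol Ser

variable {N D : ℕ}

lemma t_le (a b : Fin D → ℝ) (ha : ∑ k, a k * a k = 1) (hb : ∑ k, b k * b k = 1) :
    ∑ k, a k * b k ∈ Icc (-1 : ℝ) 1 := by
  have h1 : 0 ≤ ∑ k, (a k - b k) ^ 2 := Finset.sum_nonneg fun _ _ => sq_nonneg _
  have h2 : 0 ≤ ∑ k, (a k + b k) ^ 2 := Finset.sum_nonneg fun _ _ => sq_nonneg _
  have e1 : ∑ k, (a k - b k) ^ 2 = ∑ k, a k * a k - 2 * ∑ k, a k * b k + ∑ k, b k * b k := by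
    rw [Finset.mul_sum, ← Finset.sum_sub_distrib, ← Finset.sum_add_distrib]
    exact Finset.sum_congr rfl fun _ _ => by ring
  have e2 : ∑ k, (a k + b k) ^ 2 = ∑ k, a k * a k + 2 * ∑ k, a k * b k + ∑ k, b k * b k := by
    rw [Finset.mul_sum, ← Finset.sum_add_distrib, ← Finset.sum_add_distrib]
    exact Finset.sum_congr rfl fun _ _ => by ring
  constructor <;> linarith

lemma t_eq (a b : Fin D → ℝ) (ha : ∑ k, a k * a k = 1) (hb : ∑ k, b k * b k = 1)
    (h : ∑ k, a k * b k = 1) : a = b := by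
  have e1 : ∑ k, (a k - b k) ^ 2 = ∑ k, a k * a k - 2 * ∑ k, a k * b k + ∑ k, b k * b k := by
    rw [Finset.mul_sum, ← Finset.sum_sub_distrib, ← Finset.sum_add_distrib]
    exact Finset.sum_congr rfl fun _ _ => by ring
  rw [ha, hb, h] at e1
  have e2 : ∑ k, (a k - b k) ^ 2 = 0 := by rw [e1]; norm_num
  rw [Finset.sum_eq_zero_iff_of_nonneg fun _ _ => sq_nonneg _] at e2
  funext k
  have := e2 k (Finset.mem_univ k)
  nlinarith [pow_eq_zero_iff (n := 2) (by norm_num) |>.mp this]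

lemma moments (L : ℕ) (hL : 1 ≤ L) (t : Fin N → Fin N → ℝ) (c : Fin N → ℝ)
    (h : ∀ n, ∑ i, ∑ k, c i * c k * geg L 1 (t i k) n = 0) (m : ℕ) :
    ∀ n, ∑ i, ∑ k, c i * c k * (t i k ^ m * geg L 1 (t i k) n) = 0 := by
  induction m with
  | zero => simpa using h
  | succ m ih =>
    intro n
    cases n with
    | zero =>
      have h1 := ih 1
      have : ∀ i k, c i * c k * (t i k ^ m * geg L 1 (t i k) 1)
          = (2 * L) * (c i * c k * (t i k ^ (m + 1) * geg L 1 (t i k) 0)) := by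
        intro i k; simp [geg]; ring
      simp only [this, ← Finset.mul_sum] at h1
      have hL0 : (2 * (L : ℝ)) ≠ 0 := by positivity
      exact (mul_eq_zero.mp h1).resolve_left hL0
    | succ n =>
      have h1 := ih (n + 2)
      have h2 := ih n
      have key : ∀ i k, (2 * ((n : ℝ) + 1 + L)) * (c i * c k * (t i k ^ (m + 1) * geg L 1 (t i k) (n + 1)))
          = ((n : ℝ) + 2) * (c i * c k * (t i k ^ m * geg L 1 (t i k) (n + 2)))
            + ((n : ℝ) + 2 * L) * (c i * c k * (t i k ^ m * geg L 1 (t i k) n)) := by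
        intro i k
        have := geg_real_rec L (t i k) n
        linear_combination (- c i * c k * t i k ^ m) * this
      have h3 : (2 * ((n : ℝ) + 1 + L)) * ∑ i, ∑ k, c i * c k * (t i k ^ (m + 1) * geg L 1 (t i k) (n + 1)) = 0 := by
        simp only [Finset.mul_sum, key, Finset.sum_add_distrib]
        simp only [← Finset.mul_sum, h1, h2]
        simp
      exact (mul_eq_zero.mp h3).resolve_left (by positivity)

lemma poly_zero (t : Fin N → Fin N → ℝ) (c : Fin N → ℝ)
    (h : ∀ m : ℕ, ∑ i, ∑ k, c i * c k * t i k ^ m = 0) (p : Polynomial ℝ) :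
    ∑ i, ∑ k, c i * c k * p.eval (t i k) = 0 := by
  induction p using Polynomial.induction_on' with
  | add p q hp hq =>
    simp only [Polynomial.eval_add, mul_add, Finset.sum_add_distrib, hp, hq, add_zero]
  | monomial n a =>
    simp only [Polynomial.eval_monomial]
    have : ∀ i k, c i * c k * (a * t i k ^ n) = a * (c i * c k * t i k ^ n) := fun i k => by ring
    simp only [this, ← Finset.mul_sum, h, mul_zero]

lemma c_zero (t : Fin N → Fin N → ℝ) (c : Fin N → ℝ) (ht : ∀ i k, t i k = 1 ↔ i = k)
    (h : ∀ m : ℕ, ∑ i, ∑ k, c i * c k * t i k ^ m = 0) : c = 0 := by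
  classical
  let S : Finset ℝ := (Finset.univ.image fun q : Fin N × Fin N => t q.1 q.2).erase 1
  let p : Polynomial ℝ := ∏ s ∈ S, (Polynomial.X - Polynomial.C s)
  have hp1 : p.eval 1 ≠ 0 := by
    simp only [p, Polynomial.eval_prod, Polynomial.eval_sub, Polynomial.eval_X, Polynomial.eval_C]
    rw [Finset.prod_ne_zero_iff]
    intro s hs h0
    have := Finset.ne_of_mem_erase hs
    exact this (by linarith)
  have hp0 : ∀ i k, i ≠ k → p.eval (t i k) = 0 := by
    intro i k hik
    simp only [p, Polynomial.eval_prod, Polynomial.eval_sub, Polynomial.eval_X, Polynomial.eval_C]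
    refine Finset.prod_eq_zero (i := t i k) ?_ (by ring)
    refine Finset.mem_erase.mpr ⟨fun h => hik ((ht i k).mp h), ?_⟩
    exact Finset.mem_image.mpr ⟨(i, k), Finset.mem_univ _, rfl⟩
  have h1 := poly_zero t c h p
  have h2 : ∀ i, ∑ k, c i * c k * p.eval (t i k) = c i ^ 2 * p.eval 1 := by
    intro i
    rw [Finset.sum_eq_single i]
    · rw [(ht i i).mpr rfl]; ring
    · intro k _ hk; rw [hp0 i k (Ne.symm hk), mul_zero]
    · simp
  simp only [h2, ← Finset.sum_mul] at h1
  have h3 := (mul_eq_zero.mp h1).resolve_right hp1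
  rw [Finset.sum_eq_zero_iff_of_nonneg fun _ _ => sq_nonneg _] at h3
  funext i
  simpa using h3 i (Finset.mem_univ i)

lemma Phi_pos (L : ℕ) (hL : 1 ≤ L) (hD : D = 2 * L + 2) (y : Fin N → Fin D → ℝ)
    (hy : ∀ i, ∑ k, y i k * y i k = 1) (hinj : Function.Injective y) (c : Fin N → ℝ) (hc : c ≠ 0)
    (x : ℝ) (hx : x ∈ Ioc 0 π) :
    0 < ∑ i, ∑ k, c i * c k * (max (x - arccos (∑ l, y i l * y k l)) 0) ^ (L + 1) := by
  obtain ⟨m, rfl⟩ : ∃ m, L = m + 1 := ⟨L - 1, by omega⟩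
  obtain ⟨K, hK, B, hB, h⟩ := series (m + 1) x hx m le_rfl
  set t : Fin N → Fin N → ℝ := fun i k => ∑ l, y i l * y k l with ht
  have htm : ∀ i k, t i k ∈ Icc (-1 : ℝ) 1 := fun i k => t_le _ _ (hy i) (hy k)
  have h1 : ∀ i k, HasSum (fun n : ℕ => c i * c k * ((((n : ℝ) + m + 1) * geg (m + 1) 1 (t i k) n)
      * W (m + 1) (m + 1) n x)) (c i * c k * (K * (max (x - arccos (t i k)) 0) ^ (m + 1 + 1))) := by
    intro i k
    have := (h (arccos (t i k)) ⟨arccos_nonneg _, arccos_le_pi _⟩).1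
    rw [cos_arccos (htm i k).1 (htm i k).2] at this
    exact this.mul_left _
  have h2 := hasSum_sum (s := Finset.univ) fun i _ => hasSum_sum (s := Finset.univ) fun k _ => h1 i k
  set q : ℕ → ℝ := fun n => ∑ i, ∑ k, c i * c k * geg (m + 1) 1 (t i k) n with hq
  have hq0 : ∀ n, 0 ≤ q n := fun n => Fischer.geg_psd (m + 1) hL hD y hy c n
  have hWp : ∀ n : ℕ, 0 < ((n : ℝ) + m + 1) * W (m + 1) (m + 1) n x := fun n =>
    mul_pos (by positivity) (W_pos _ _ hL x hx.1)
  have h3 : HasSum (fun n : ℕ => (((n : ℝ) + m + 1) * W (m + 1) (m + 1) n x) * q n)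
      (K * ∑ i, ∑ k, c i * c k * (max (x - arccos (t i k)) 0) ^ (m + 1 + 1)) := by
    refine hs_congr h2 (fun n => ?_) ?_
    · simp only [hq, Finset.mul_sum]
      exact Finset.sum_congr rfl fun i _ => Finset.sum_congr rfl fun k _ => by ring
    · simp only [Finset.mul_sum]
      exact Finset.sum_congr rfl fun i _ => Finset.sum_congr rfl fun k _ => by ring
  have hne : ∃ n, q n ≠ 0 := by
    by_contra hcon
    push Not at hcon
    apply hc
    refine c_zero t c (fun i k => ⟨fun h => hinj (t_eq _ _ (hy i) (hy k) h), ?_⟩) ?_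
    · rintro rfl; exact hy i
    · intro r
      have := moments (m + 1) hL t c hcon r 0
      simpa [geg] using this
  obtain ⟨n0, hn0⟩ := hne
  have hpos : 0 < K * ∑ i, ∑ k, c i * c k * (max (x - arccos (t i k)) 0) ^ (m + 1 + 1) := by
    have hle := le_hasSum h3 n0 (fun n _ => mul_nonneg (hWp n).le (hq0 n))
    refine lt_of_lt_of_le (mul_pos (hWp n0) (lt_of_le_of_ne (hq0 n0) (Ne.symm hn0))) hle
  exact (mul_pos_iff_of_pos_left hK).mp hpos
end Fin4

namespace Fin5

lemma lower_int (φ : ℝ → ℝ) (hφ : Continuous φ) (hA : ∀ x ∈ Ioc 0 π, 0 < ∫ t in (0 : ℝ)..x, φ t)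
    (E : Set ℝ) (hE : IsLowerSet E) :
    0 ≤ ∫ t in Ioc 0 π, E.indicator φ t ∧
    ((∃ t0 ∈ Ioo 0 π, t0 ∈ E) → 0 < ∫ t in Ioc 0 π, E.indicator φ t) := by
  have hEm : MeasurableSet E := hE.ordConnected.measurableSet
  rw [setIntegral_indicator hEm]
  rcases (Ioc 0 π ∩ E).eq_empty_or_nonempty with h | h
  · rw [h]
    refine ⟨by simp, ?_⟩
    rintro ⟨t0, h1, h2⟩
    exact absurd (show t0 ∈ Ioc 0 π ∩ E from ⟨⟨h1.1, h1.2.le⟩, h2⟩) (by rw [h]; simp)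
  · have hb : BddAbove (Ioc 0 π ∩ E) := ⟨π, fun t ht => ht.1.2⟩
    set x := sSup (Ioc 0 π ∩ E) with hx
    have h1 : Ioo 0 x ⊆ Ioc 0 π ∩ E := by
      intro t ht
      obtain ⟨u, hu, htu⟩ := exists_lt_of_lt_csSup h ht.2
      exact ⟨⟨ht.1, htu.le.trans hu.1.2⟩, hE htu.le hu.2⟩
    have h2 : Ioc 0 π ∩ E ⊆ Ioc 0 x := fun t ht => ⟨ht.1.1, le_csSup hb ht⟩
    have hae : (Ioc 0 π ∩ E : Set ℝ) =ᵐ[volume] Ioc 0 x := by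
      refine Filter.EventuallyLE.antisymm (Filter.Eventually.of_forall h2) ?_
      exact (Ioo_ae_eq_Ioc (a := (0 : ℝ)) (b := x)).symm.le.trans (Filter.Eventually.of_forall h1)
    obtain ⟨u, hu⟩ := h
    have hxm : x ∈ Ioc 0 π := ⟨lt_of_lt_of_le hu.1.1 (le_csSup hb hu), csSup_le ⟨u, hu⟩ fun t ht => ht.1.2⟩
    rw [setIntegral_congr_set hae, ← intervalIntegral.integral_of_le hxm.1.le]
    exact ⟨(hA x hxm).le, fun _ => hA x hxm⟩

lemma layer (k : ℝ → ℝ) (hk : Antitone k) (h0 : ∀ t, 0 ≤ k t) (M : ℝ) (hM : ∀ t, k t ≤ M)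
    (t0 : ℝ) (ht0 : t0 ∈ Ioo 0 π) (hkt : 0 < k t0) (φ : ℝ → ℝ) (hφ : Continuous φ)
    (hA : ∀ x ∈ Ioc 0 π, 0 < ∫ t in (0 : ℝ)..x, φ t) :
    0 < ∫ t in (0 : ℝ)..π, k t * φ t := by
  have hkm : Measurable k := hk.measurable
  let E : Set (ℝ × ℝ) := {p | p.2 < k p.1}
  have hE : MeasurableSet E := measurableSet_lt measurable_snd (hkm.comp measurable_fst)
  let f : ℝ → ℝ → ℝ := fun t s => E.indicator (fun p => φ p.1) (t, s)
  let μ := (volume : Measure ℝ).restrict (Ioc 0 π)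
  let ν := (volume : Measure ℝ).restrict (Ioc 0 M)
  have hfi : Integrable (Function.uncurry f) (μ.prod ν) := by
    obtain ⟨C, hC⟩ := (isCompact_Icc (a := (0 : ℝ)) (b := π)).exists_bound_of_continuousOn hφ.continuousOn
    have hφi : Integrable (fun p : ℝ × ℝ => φ p.1) (μ.prod ν) := by
      have : Integrable φ μ := (hφ.integrableOn_Icc).mono_set Ioc_subset_Icc_self
      exact this.comp_fst ν
    exact hφi.indicator hE
  have hsw := integral_integral_swap hfi
  have hl : ∀ t, ∫ s, f t s ∂ν = k t * φ t := by
    intro t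
    have : ∀ s, f t s = (Iio (k t)).indicator (fun _ => φ t) s := by
      intro s; simp [f, E, indicator]
    simp only [this]
    rw [integral_indicator measurableSet_Iio, integral_const]
    simp only [ν, measureReal_def]
    have hset : Iio (k t) ∩ Ioc 0 M = Ioo 0 (k t) := by
      ext s
      simp only [mem_inter_iff, mem_Iio, mem_Ioc, mem_Ioo]
      exact ⟨fun h => ⟨h.2.1, h.1⟩, fun h => ⟨h.2, h.1, h.2.le.trans (hM t)⟩⟩
    rw [Measure.restrict_apply_univ, Measure.restrict_apply measurableSet_Iio, hset, volume_Ioo,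
      sub_zero, ENNReal.toReal_ofReal (h0 t), smul_eq_mul]
  rw [intervalIntegral.integral_of_le pi_pos.le]
  have e1 : ∫ t in Ioc 0 π, k t * φ t = ∫ s, ∫ t, f t s ∂μ ∂ν := by
    rw [← hsw]; simp only [hl]; rfl
  rw [e1]
  have hin : ∀ s, 0 ≤ ∫ t, f t s ∂μ ∧ (s < k t0 → 0 < ∫ t, f t s ∂μ) := by
    intro s
    have hlow : IsLowerSet {t | s < k t} := fun a b hba ha => lt_of_lt_of_le ha (hk hba)
    have := lower_int φ hφ hA {t | s < k t} hlow
    refine ⟨this.1, fun h => this.2 ⟨t0, ht0, h⟩⟩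
  rw [integral_pos_iff_support_of_nonneg (fun s => (hin s).1) hfi.integral_prod_right]
  have hsub : Ioo 0 (k t0) ⊆ Function.support fun s => ∫ t, f t s ∂μ :=
    fun s hs => ((hin s).2 hs.2).ne'
  refine lt_of_lt_of_le ?_ (measure_mono hsub)
  simp only [ν]
  have hsub2 : Ioo 0 (k t0) ⊆ Ioc 0 M := fun s hs => ⟨hs.1, hs.2.le.trans (hM t0)⟩
  rw [Measure.restrict_apply measurableSet_Ioo, inter_eq_left.mpr hsub2]
  simpa using hkt

lemma pow_int (l : ℕ) (hl : 1 ≤ l) (θ x : ℝ) (hθ : 0 ≤ θ) (hx : 0 ≤ x) :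
    ∫ t in (0 : ℝ)..x, (max (t - θ) 0) ^ l = (max (x - θ) 0) ^ (l + 1) / (l + 1) := by
  have hc : Continuous fun t : ℝ => (max (t - θ) 0) ^ l := by fun_prop
  have hz : ∀ y, 0 ≤ y → y ≤ θ → ∫ t in (0 : ℝ)..y, (max (t - θ) 0) ^ l = 0 := by
    intro y hy hyt
    rw [intervalIntegral.integral_congr (g := fun _ => 0)]
    · simp
    · intro t ht
      rw [uIcc_of_le hy] at ht
      have : max (t - θ) 0 = 0 := max_eq_right (by linarith [ht.2])
      simp [this]; omega
  rcases le_total x θ with h | h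
  · rw [hz x hx h, max_eq_right (by linarith)]; simp
  · rw [← intervalIntegral.integral_add_adjacent_intervals (hc.intervalIntegrable 0 θ)
      (hc.intervalIntegrable θ x), hz θ hθ le_rfl, zero_add, max_eq_left (by linarith)]
    rw [intervalIntegral.integral_congr (g := fun t => (t - θ) ^ l)]
    · rw [intervalIntegral.integral_comp_sub_right (fun t => t ^ l), integral_pow]; simp
    · intro t ht
      rw [uIcc_of_le h] at ht
      simp only
      rw [max_eq_left (by linarith [ht.1])]

lemma kernel (g : ℝ → ℝ) (n : ℕ)
    (hg : ContDiffOn ℝ (n + 1 : ℕ) g (Icc 0 π))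
    (hconvex : ConvexOn ℝ (Icc 0 π)
      (fun θ => (-1 : ℝ) ^ (n + 1) * iteratedDerivWithin (n + 1) g (Icc 0 π) θ))
    (hvanish : ∀ j ≤ n + 1, iteratedDerivWithin j g (Icc 0 π) π = 0)
    (hleft : HasDerivWithinAt (iteratedDerivWithin (n + 1) g (Icc 0 π)) 0 (Icc 0 π) π)
    (hright : ∃ L : ℝ,
      HasDerivWithinAt (iteratedDerivWithin (n + 1) g (Icc 0 π)) L (Icc 0 π) 0)
    (hnotaffine : ¬ ∃ a b : ℝ, ∀ θ ∈ Icc (0:ℝ) π,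
      iteratedDerivWithin (n + 1) g (Icc 0 π) θ = a * θ + b) :
    ∃ (k : ℝ → ℝ) (M t0 : ℝ), Antitone k ∧ (∀ t, 0 ≤ k t) ∧ (∀ t, k t ≤ M) ∧ t0 ∈ Ioo 0 π ∧
      0 < k t0 ∧ ∀ θ ∈ Icc 0 π,
        g θ = ∫ t in (0 : ℝ)..π, k t * ((max (t - θ) 0) ^ (n + 1) / ((n + 1).factorial : ℝ)) := by
  have hud : UniqueDiffOn ℝ (Icc 0 π) := uniqueDiffOn_Icc pi_pos
  set G := iteratedDerivWithin (n + 1) g (Icc 0 π) with hG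
  set h : ℝ → ℝ := fun θ => (-1 : ℝ) ^ (n + 1) * G θ with hh
  have hGh : ∀ t, G t = (-1 : ℝ) ^ (n + 1) * h t := by
    intro t; simp only [hh]; rw [← mul_assoc, ← mul_pow]; simp
  have hint : interior (Icc 0 π) = Ioo 0 π := interior_Icc
  have h0m : (0 : ℝ) ∈ Icc 0 π := ⟨le_rfl, pi_pos.le⟩
  have hpm : π ∈ Icc 0 π := ⟨pi_pos.le, le_rfl⟩
  obtain ⟨L0, hL0⟩ := hright
  have hhl : HasDerivWithinAt h 0 (Icc 0 π) π := by
    have := hleft.const_mul ((-1 : ℝ) ^ (n + 1)); rwa [mul_zero] at this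
  have hhr : HasDerivWithinAt h ((-1 : ℝ) ^ (n + 1) * L0) (Icc 0 π) 0 :=
    hL0.const_mul ((-1 : ℝ) ^ (n + 1))
  set ρ := (-1 : ℝ) ^ (n + 1) * L0 with hρ
  set r : ℝ → ℝ := fun x => derivWithin h (Ioi x) x with hr
  have hrd : ∀ t ∈ Ioo 0 π, HasDerivWithinAt h (r t) (Ioi t) t := fun t ht =>
    hconvex.hasDerivWithinAt_rightDeriv_of_mem_interior (by rw [hint]; exact ht)
  have hmono : ∀ a ∈ Ioo 0 π, ∀ b ∈ Ioo 0 π, a ≤ b → r a ≤ r b := fun a ha b hb hab =>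
    hconvex.monotoneOn_rightDeriv (by rw [hint]; exact ha) (by rw [hint]; exact hb) hab
  have hsl : ∀ t ∈ Ioo 0 π, r t ≤ slope h t π := fun t ht =>
    hconvex.rightDeriv_le_slope_of_mem_interior (by rw [hint]; exact ht) hpm ht.2
  have hsl2 : ∀ t ∈ Ioo 0 π, slope h t π ≤ 0 := fun t ht =>
    hconvex.slope_le_of_hasDerivWithinAt (Ioo_subset_Icc_self ht) hpm ht.2 hhl
  have hr0 : ∀ t ∈ Ioo 0 π, r t ≤ 0 := fun t ht => (hsl t ht).trans (hsl2 t ht)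
  have hrρ : ∀ t ∈ Ioo 0 π, ρ ≤ r t := by
    intro t ht
    have h1 : ρ ≤ slope h 0 t :=
      hconvex.le_slope_of_hasDerivWithinAt h0m (Ioo_subset_Icc_self ht) ht.1 hhr
    have ht' : t ∈ interior (Icc 0 π) := by rw [hint]; exact ht
    have h2 := hconvex.slope_le_leftDeriv_of_mem_interior h0m ht' ht.1
    exact h1.trans (h2.trans (hconvex.leftDeriv_le_rightDeriv_of_mem_interior ht'))
  have hmid : π / 2 ∈ Ioo 0 π := ⟨by positivity, by linarith [pi_pos]⟩
  have hρ0 : ρ ≤ 0 := (hrρ _ hmid).trans (hr0 _ hmid)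
  let k : ℝ → ℝ := fun t => if t ≤ 0 then -ρ else if t < π then - r t else 0
  have hk : ∀ t ∈ Ioo 0 π, k t = - r t := by
    intro t ht
    simp only [k, if_neg (not_le.mpr ht.1), if_pos ht.2]
  have hk0 : ∀ t, 0 ≤ k t := by
    intro t
    simp only [k]
    split_ifs with h1 h2
    · linarith
    · linarith [hr0 t ⟨not_le.mp h1, h2⟩]
    · exact le_rfl
  have hkM : ∀ t, k t ≤ -ρ := by
    intro t
    simp only [k]
    split_ifs with h1 h2
    · exact le_rfl
    · linarith [hrρ t ⟨not_le.mp h1, h2⟩]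
    · linarith
  have hka : Antitone k := by
    intro a b hab
    by_cases ha : a ≤ 0
    · have : k a = -ρ := by simp only [k, if_pos ha]
      rw [this]; exact hkM b
    · by_cases hb : b < π
      · rw [hk a ⟨not_le.mp ha, lt_of_le_of_lt hab hb⟩, hk b ⟨lt_of_lt_of_le (not_le.mp ha) hab, hb⟩]
        linarith [hmono a ⟨not_le.mp ha, lt_of_le_of_lt hab hb⟩ b ⟨lt_of_lt_of_le (not_le.mp ha) hab, hb⟩ hab]
      · have : k b = 0 := by
          simp only [k, if_neg hb, if_neg (not_le.mpr (lt_of_lt_of_le (not_le.mp ha) hab))]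
        rw [this]; exact hk0 a
  have hGc : ContinuousOn G (Icc 0 π) :=
    hg.continuousOn_iteratedDerivWithin (by exact_mod_cast le_rfl) hud
  have hne : ∃ t0 ∈ Ioo 0 π, 0 < k t0 := by
    by_contra hcon
    push Not at hcon
    apply hnotaffine
    refine ⟨0, 0, ?_⟩
    have hzero : EqOn G (fun _ => 0) (Ioo 0 π) := by
      intro t ht
      have h1 := hcon t ht
      rw [hk t ht] at h1
      have h2 := hsl t ht
      have h3 := hsl2 t ht
      have h4 : slope h t π = 0 := le_antisymm h3 (by linarith)
      rw [slope_def_field, div_eq_zero_iff] at h4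
      have h5 : h π = 0 := by
        have h6 := hvanish (n + 1) le_rfl
        rw [← hG] at h6
        simp only [hh, h6, mul_zero]
      rcases h4 with h4 | h4
      · rw [hGh, show h t = 0 by linarith, mul_zero]
      · linarith [ht.2]
    have := hzero.of_subset_closure hGc continuousOn_const Ioo_subset_Icc_self
      (by rw [closure_Ioo pi_pos.ne])
    intro θ hθ
    rw [this hθ]; ring
  obtain ⟨t0, ht0, hkt0⟩ := hne
  refine ⟨k, -ρ, t0, hka, hk0, hkM, ht0, hkt0, ?_⟩
  intro θ hθ
  have hki : ∀ a b, IntervalIntegrable (fun t => k t * ((max (t - θ) 0) ^ (n + 1) / ((n + 1).factorial : ℝ))) volume a b := by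
    intro a b
    refine (hka.intervalIntegrable (a := a) (b := b)).mul_continuousOn ?_
    exact Continuous.continuousOn (by fun_prop)
  rw [← intervalIntegral.integral_add_adjacent_intervals (hki 0 θ) (hki θ π)]
  have hz : ∫ t in (0 : ℝ)..θ, k t * ((max (t - θ) 0) ^ (n + 1) / ((n + 1).factorial : ℝ)) = 0 := by
    rw [intervalIntegral.integral_congr (g := fun _ => 0)]
    · simp
    · intro t ht
      rw [uIcc_of_le hθ.1] at ht
      have : max (t - θ) 0 = 0 := max_eq_right (by linarith [ht.2])
      simp [this]
  rw [hz, zero_add]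
  have hF := intervalIntegral.integral_eq_sub_of_hasDeriv_right_of_le hθ.2
    (f := fun t => - taylorWithinEval g (n + 1) (Icc 0 π) t θ)
    (f' := fun t => k t * ((max (t - θ) 0) ^ (n + 1) / ((n + 1).factorial : ℝ)))
    ((continuousOn_taylorWithinEval hud hg).neg.mono (Icc_subset_Icc_left hθ.1)) ?_ (hki _ _)
  · rw [hF, taylorWithinEval_self]
    have : taylorWithinEval g (n + 1) (Icc 0 π) π θ = 0 := by
      rw [taylor_within_apply]
      refine Finset.sum_eq_zero fun j hj => ?_
      rw [hvanish j (by simpa [Nat.lt_succ_iff] using hj), smul_zero]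
    rw [this]; ring
  · intro t ht
    have ht' : t ∈ Ioo 0 π := ⟨lt_of_le_of_lt hθ.1 ht.1, ht.2⟩
    have hdiff : DifferentiableOn ℝ (iteratedDerivWithin n g (Icc 0 π)) (Icc 0 π) :=
      hg.differentiableOn_iteratedDerivWithin (by exact_mod_cast Nat.lt_succ_self n) hud
    have d1 := taylorWithinEval_hasDerivAt_Ioo θ pi_pos ht' (hg.of_le (by exact_mod_cast Nat.le_succ n))
      (hdiff.mono Ioo_subset_Icc_self)
    have d2 : HasDerivWithinAt G ((-1 : ℝ) ^ (n + 1) * r t) (Ioi t) t := by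
      have := (hrd t ht').const_mul ((-1 : ℝ) ^ (n + 1))
      have e : G = fun y => (-1 : ℝ) ^ (n + 1) * h y := funext hGh
      rw [e]; exact this
    have d3 : HasDerivAt (fun y : ℝ => (((n + 1 : ℝ) * n.factorial)⁻¹ * (θ - y) ^ (n + 1)))
        (((n + 1 : ℝ) * n.factorial)⁻¹ * (((n + 1 : ℕ) : ℝ) * (θ - t) ^ n * (-1))) t := by
      have := (((hasDerivAt_id t).const_sub θ).pow (n + 1)).const_mul (((n + 1 : ℝ) * n.factorial)⁻¹)
      simpa using this
    have d4 := (d1.hasDerivWithinAt (s := Ioi t)).add ((d3.hasDerivWithinAt (s := Ioi t)).mul d2)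
    have e : (fun y => - taylorWithinEval g (n + 1) (Icc 0 π) y θ) = fun y =>
        -(taylorWithinEval g n (Icc 0 π) y θ + (((n + 1 : ℝ) * n.factorial)⁻¹ * (θ - y) ^ (n + 1)) * G y) := by
      funext y; rw [taylorWithinEval_succ, smul_eq_mul]
    rw [e]
    refine d4.neg.congr_deriv ?_
    rw [hk t ht', max_eq_left (by linarith [ht.1]), smul_eq_mul]
    have e2 : (t - θ) ^ (n + 1) = (-1) ^ (n + 1) * (θ - t) ^ (n + 1) := by rw [← mul_pow]; ring
    rw [e2, Nat.factorial_succ]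
    push_cast
    have f0 : ((n.factorial : ℕ) : ℝ) ≠ 0 := by positivity
    have f1 : (n : ℝ) + 1 ≠ 0 := by positivity
    rw [← hG]
    field_simp
    ring

end Fin5

namespace Fin6

lemma pad {N d D : ℕ} (h : D = d ∨ D = d + 1) (x : Fin N → Fin d → ℝ) :
    ∃ y : Fin N → Fin D → ℝ, ∀ i j, ∑ k, y i k * y j k = ∑ k, x i k * x j k := by
  rcases h with rfl | rfl
  · exact ⟨x, fun _ _ => rfl⟩
  · refine ⟨fun i => Fin.snoc (α := fun _ => ℝ) (x i) 0, fun i j => ?_⟩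
    rw [Fin.sum_univ_castSucc]
    simp

lemma inner_sum {d : ℕ} (a b : EuclideanSpace ℝ (Fin d)) : ⟪a, b⟫ = ∑ k, a k * b k := by
  simp [PiLp.inner_apply, mul_comm]

lemma parity (d : ℕ) (hd : 3 ≤ d) (lam : ℕ) (hlam : (lam : ℤ) = ⌈((d : ℝ) - 2) / 2⌉) :
    1 ≤ lam ∧ (2 * lam + 2 = d ∨ 2 * lam + 2 = d + 1) := by
  have h := hlam.symm
  rw [Int.ceil_eq_iff] at h
  obtain ⟨h1, h2⟩ := h
  push_cast at h1 h2
  have a1 : (2 * lam : ℝ) < d := by linarith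
  have a2 : (d : ℝ) ≤ 2 * lam + 2 := by linarith
  have b1 : 2 * lam < d := by exact_mod_cast a1
  have b2 : d ≤ 2 * lam + 2 := by exact_mod_cast a2
  omega

end Fin6

theorem polya_criterion_strict_pos_def (d : ℕ) (hd : 3 ≤ d) (lam : ℕ)
    (hlam : (lam : ℤ) = ⌈((d : ℝ) - 2) / 2⌉) (g : ℝ → ℝ)
    (hg : ContDiffOn ℝ lam g (Set.Icc 0 π))
    (hconvex : ConvexOn ℝ (Set.Icc 0 π)
      (fun θ => (-1 : ℝ) ^ lam * iteratedDerivWithin lam g (Set.Icc 0 π) θ))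
    (hvanish : ∀ j ≤ lam, iteratedDerivWithin j g (Set.Icc 0 π) π = 0)
    (hleft : HasDerivWithinAt (iteratedDerivWithin lam g (Set.Icc 0 π)) 0 (Set.Icc 0 π) π)
    (hright : ∃ L : ℝ,
      HasDerivWithinAt (iteratedDerivWithin lam g (Set.Icc 0 π)) L (Set.Icc 0 π) 0)
    (hnotaffine : ¬ ∃ a b : ℝ, ∀ θ ∈ Set.Icc (0:ℝ) π,
      iteratedDerivWithin lam g (Set.Icc 0 π) θ = a * θ + b) :
    StrictPosDefOnSphere d g := by
  obtain ⟨hl1, hpar⟩ := Fin6.parity d hd lam hlam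
  obtain ⟨n, rfl⟩ : ∃ n, lam = n + 1 := ⟨lam - 1, by omega⟩
  obtain ⟨k, M, t0, hka, hk0, hkM, ht0, hkt0, hrep⟩ :=
    Fin5.kernel g n hg hconvex hvanish hleft hright hnotaffine
  intro N x hx hinj
  refine Matrix.PosDef.of_dotProduct_mulVec_pos ?_ ?_
  · ext i j
    simp [Matrix.conjTranspose, real_inner_comm]
  intro c hc
  obtain ⟨y, hy⟩ := Fin6.pad hpar (fun i => (x i : Fin d → ℝ))
  have hxy : ∀ i j, ⟪x i, x j⟫ = ∑ l, y i l * y j l := fun i j => by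
    rw [Fin6.inner_sum, hy]
  have hy1 : ∀ i, ∑ l, y i l * y i l = 1 := fun i => by
    rw [← hxy, real_inner_self_eq_norm_sq, hx]; norm_num
  have hyinj : Function.Injective y := by
    intro i j hij
    apply hinj
    have : ∑ l, x i l * x j l = 1 := by
      rw [← Fin6.inner_sum, hxy, ← hij]; exact hy1 i
    have e := Fin4.t_eq (x i : Fin d → ℝ) (x j : Fin d → ℝ)
      (by rw [← Fin6.inner_sum, hxy]; exact hy1 i) (by rw [← Fin6.inner_sum, hxy]; exact hy1 j) this
    ext l; exact congrFun e l
  have hP := Fin4.Phi_pos (n + 1) hl1 rfl y hy1 hyinj c hc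
  set θ : Fin N → Fin N → ℝ := fun i j => arccos (∑ l, y i l * y j l) with hθ
  have hθm : ∀ i j, θ i j ∈ Icc 0 π := fun i j => ⟨arccos_nonneg _, arccos_le_pi _⟩
  let φ : ℝ → ℝ := fun t => ∑ i, ∑ j, c i * c j * ((max (t - θ i j) 0) ^ (n + 1) / ((n + 1).factorial : ℝ))
  have hφ : Continuous φ := by
    refine continuous_finsetSum _ fun i _ => continuous_finsetSum _ fun j _ => ?_
    fun_prop
  have hA : ∀ u ∈ Ioc 0 π, 0 < ∫ t in (0 : ℝ)..u, φ t := by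
    intro u hu
    have e : ∫ t in (0 : ℝ)..u, φ t = (∑ i, ∑ j, c i * c j * (max (u - θ i j) 0) ^ (n + 1 + 1))
        * (1 / ((n + 1).factorial : ℝ) / ((n + 1 : ℕ) + 1)) := by
      simp only [φ]
      rw [intervalIntegral.integral_finsetSum (fun i _ => Continuous.intervalIntegrable
        (continuous_finsetSum _ fun j _ => by fun_prop) _ _), Finset.sum_mul]
      refine Finset.sum_congr rfl fun i _ => ?_
      rw [intervalIntegral.integral_finsetSum (fun j _ => Continuous.intervalIntegrable (by fun_prop) _ _),
        Finset.sum_mul]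
      refine Finset.sum_congr rfl fun j _ => ?_
      rw [intervalIntegral.integral_const_mul, intervalIntegral.integral_div,
        Fin5.pow_int (n + 1) hl1 _ _ (hθm i j).1 hu.1.le]
      ring
    rw [e]
    exact mul_pos (hP u hu) (by positivity)
  have hQ := Fin5.layer k hka hk0 M hkM t0 ht0 hkt0 φ hφ hA
  have e : star c ⬝ᵥ ((Matrix.of fun i j : Fin N => g (Real.arccos ⟪x i, x j⟫)).mulVec c)
      = ∫ t in (0 : ℝ)..π, k t * φ t := by
    have hki : ∀ i j, IntervalIntegrable (fun t => c i * c j * (k t * ((max (t - θ i j) 0) ^ (n + 1)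
        / ((n + 1).factorial : ℝ)))) volume 0 π := by
      intro i j
      refine ((hka.intervalIntegrable (a := 0) (b := π)).mul_continuousOn ?_).const_mul _
      exact Continuous.continuousOn (by fun_prop)
    have e1 : ∀ t, k t * φ t = ∑ i, ∑ j, c i * c j * (k t * ((max (t - θ i j) 0) ^ (n + 1)
        / ((n + 1).factorial : ℝ))) := by
      intro t
      simp only [φ, Finset.mul_sum]
      exact Finset.sum_congr rfl fun i _ => Finset.sum_congr rfl fun j _ => by ring
    simp only [e1]
    rw [intervalIntegral.integral_finsetSum (fun i _ => by
      have := IntervalIntegrable.sum Finset.univ (fun j _ => hki i j)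
      have e2 : (fun t => ∑ j, c i * c j * (k t * ((max (t - θ i j) 0) ^ (n + 1)
        / ((n + 1).factorial : ℝ)))) = ∑ j, fun t => c i * c j * (k t * ((max (t - θ i j) 0) ^ (n + 1)
        / ((n + 1).factorial : ℝ))) := by
        funext t; simp
      rw [e2]
      exact this)]
    simp only [dotProduct, Matrix.mulVec, Matrix.of_apply, Finset.mul_sum]
    refine Finset.sum_congr rfl fun i _ => ?_
    rw [intervalIntegral.integral_finsetSum (fun j _ => hki i j)]
    refine Finset.sum_congr rfl fun j _ => ?_
    rw [intervalIntegral.integral_const_mul, ← hrep _ (hθm i j), hxy]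
    simp only [hθ, Pi.star_apply, star_trivial]
    ring
  rw [e]
  exact hQ
end

section
/- Let α, β be real numbers with α, β > -1/2, let n ∈ ℕ (n ≥ 0), let δ, σ be real numbers with 0 < δ < σ, and fix t ∈ (0, π]. If F_n^{(α,β),δ}(s) ≥ 0 for all s ∈ (0, t], then F_n^{(α,β),σ}(s) ≥ 0 for all s ∈ (0, t]. Moreover, if F_n^{(α,β),δ}(s) > 0 for all s ∈ (0, t], then F_n^{(α,β),σ}(s) > 0 for all s ∈ (0, t]. -/
open MeasureTheory Real Set

/-- Generalized binomial coefficient `C(u, v) = Γ(u+1) / (Γ(v+1) Γ(u-v+1))`. -/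
noncomputable def genBinom (u v : ℝ) : ℝ :=
  Real.Gamma (u + 1) / (Real.Gamma (v + 1) * Real.Gamma (u - v + 1))

/-- Jacobi polynomial `P_n^{(a,b)}(x)`. -/
noncomputable def jacobiP (n : ℕ) (a b x : ℝ) : ℝ :=
  ∑ k ∈ Finset.range (n + 1),
    genBinom ((n : ℝ) + a) ((n : ℝ) - (k : ℝ)) * genBinom ((n : ℝ) + b) (k : ℝ) *
      ((x - 1) / 2) ^ k * ((x + 1) / 2) ^ (n - k)

/-- `F_n^{(α,β),δ}(t)`. -/
noncomputable def FJ (n : ℕ) (α β δ t : ℝ) : ℝ :=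
  ∫ θ in (0:ℝ)..t, (t - θ) ^ δ * jacobiP n (α - 1/2) (β - 1/2) (Real.cos θ) *
    (Real.sin (θ / 2)) ^ (2 * α) * (Real.cos (θ / 2)) ^ (2 * β)

theorem aux_sin (a : ℝ) (ha : -1 < a) :
    IntervalIntegrable (fun θ : ℝ => Real.sin (θ / 2) ^ a) volume 0 π := by
  have h1 : IntervalIntegrable (fun θ : ℝ => θ ^ a) volume 0 π :=
    intervalIntegral.intervalIntegrable_rpow' ha
  have hpos : ∀ θ ∈ Set.uIcc (0:ℝ) π, 0 < Real.sinc (θ / 2) := by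
    intro θ hθ
    rw [Set.uIcc_of_le Real.pi_pos.le] at hθ
    rcases eq_or_lt_of_le hθ.1 with h | h
    · simp [← h]
    · rw [Real.sinc_of_ne_zero (by positivity)]
      exact div_pos (Real.sin_pos_of_pos_of_lt_pi (by linarith) (by linarith [hθ.2, Real.pi_pos]))
        (by positivity)
  have hc : ContinuousOn (fun θ : ℝ => (Real.sinc (θ / 2) / 2) ^ a) (Set.uIcc (0:ℝ) π) := by
    apply ContinuousOn.rpow_const
    · exact ((Real.continuous_sinc.comp (continuous_id.div_const 2)).div_const 2).continuousOn
    · intro θ hθ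
      left
      have := hpos θ hθ
      positivity
  refine (h1.mul_continuousOn hc).congr ?_
  intro θ hθ
  have hθ' := Set.uIoc_subset_uIcc hθ
  rw [Set.uIoc_of_le Real.pi_pos.le] at hθ
  have h0 := hpos θ hθ'
  have h2 := hθ.1
  show θ ^ a * (Real.sinc (θ / 2) / 2) ^ a = Real.sin (θ / 2) ^ a
  rw [← Real.mul_rpow hθ.1.le (by positivity), Real.sinc_of_ne_zero (by positivity)]
  congr 1
  field_simp

theorem aux_cos (b : ℝ) (hb : -1 < b) :
    IntervalIntegrable (fun θ : ℝ => Real.cos (θ / 2) ^ b) volume 0 π := by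
  have h := (aux_sin b hb).comp_sub_left π
  simp only [sub_zero, sub_self] at h
  refine h.symm.congr ?_
  intro θ _
  show Real.sin ((π - θ) / 2) ^ b = _
  rw [sub_div, Real.sin_pi_div_two_sub]

theorem aux_w (n : ℕ) (α β : ℝ) (hα : -1/2 < α) (hβ : -1/2 < β) :
    IntervalIntegrable (fun θ : ℝ => jacobiP n (α - 1/2) (β - 1/2) (Real.cos θ) *
    (Real.sin (θ / 2)) ^ (2 * α) * (Real.cos (θ / 2)) ^ (2 * β)) volume 0 π := by
  have hp := Real.pi_pos
  have hj : Continuous (fun θ : ℝ => jacobiP n (α - 1/2) (β - 1/2) (Real.cos θ)) := by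
    unfold jacobiP
    fun_prop
  have hA := aux_sin (2 * α) (by linarith)
  have hB := aux_cos (2 * β) (by linarith)
  have hm : π / 2 ∈ Set.uIcc 0 π := by
    rw [Set.uIcc_of_le hp.le]; constructor <;> linarith
  refine IntervalIntegrable.trans (b := π / 2) ?_ ?_
  · have hA' : IntervalIntegrable (fun θ : ℝ => Real.sin (θ / 2) ^ (2 * α)) volume 0 (π/2) :=
      hA.mono_set (Set.uIcc_subset_uIcc Set.left_mem_uIcc hm)
    refine (hA'.continuousOn_mul hj.continuousOn).mul_continuousOn ?_
    apply ContinuousOn.rpow_const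
    · fun_prop
    · intro θ hθ
      rw [Set.uIcc_of_le (by linarith)] at hθ
      left
      exact (Real.cos_pos_of_mem_Ioo ⟨by linarith [hθ.1], by linarith [hθ.2]⟩).ne'
  · have hB' : IntervalIntegrable (fun θ : ℝ => Real.cos (θ / 2) ^ (2 * β)) volume (π/2) π :=
      hB.mono_set (Set.uIcc_subset_uIcc hm Set.right_mem_uIcc)
    refine hB'.continuousOn_mul (hj.continuousOn.mul ?_)
    apply ContinuousOn.rpow_const
    · fun_prop
    · intro θ hθ
      rw [Set.uIcc_of_le (by linarith)] at hθ
      left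
      exact (Real.sin_pos_of_pos_of_lt_pi (by linarith [hθ.1]) (by linarith [hθ.2])).ne'

theorem aux_beta_int (c δ : ℝ) (hc : 0 < c) (hδ : 0 < δ) :
    IntervalIntegrable (fun x : ℝ => (1 - x) ^ (c - 1) * x ^ δ) volume 0 1 := by
  have h := (intervalIntegral.intervalIntegrable_rpow' (a := 0) (b := 1)
    (show -1 < c - 1 by linarith)).comp_sub_left 1
  simp only [sub_zero, sub_self] at h
  exact h.symm.mul_continuousOn (Real.continuous_rpow_const hδ.le).continuousOn

theorem aux_beta_pos (c δ : ℝ) (hc : 0 < c) (hδ : 0 < δ) :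
    0 < ∫ x in (0:ℝ)..1, (1 - x) ^ (c - 1) * x ^ δ := by
  apply intervalIntegral.intervalIntegral_pos_of_pos_on (aux_beta_int c δ hc hδ) _ one_pos
  intro x hx
  have h1 := hx.1
  have h2 : 0 < 1 - x := by linarith [hx.2]
  positivity

theorem aux_beta_scale (c δ θ s : ℝ) (h : θ < s) :
    ∫ u in θ..s, (s - u) ^ (c - 1) * (u - θ) ^ δ =
      (∫ x in (0:ℝ)..1, (1 - x) ^ (c - 1) * x ^ δ) * (s - θ) ^ (c + δ) := by
  have hd : 0 < s - θ := by linarith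
  have h1 := intervalIntegral.smul_integral_comp_mul_add (a := 0) (b := 1)
    (fun u : ℝ => (s - u) ^ (c - 1) * (u - θ) ^ δ) (s - θ) θ
  have e1 : (s - θ) * 0 + θ = θ := by ring
  have e2 : (s - θ) * 1 + θ = s := by ring
  rw [e1, e2] at h1
  rw [← h1, smul_eq_mul, ← intervalIntegral.integral_const_mul,
    ← intervalIntegral.integral_mul_const]
  apply intervalIntegral.integral_congr
  intro x hx
  rw [Set.uIcc_of_le zero_le_one] at hx
  have hx1 : 0 ≤ 1 - x := by linarith [hx.2]
  show (s - θ) * ((s - ((s - θ) * x + θ)) ^ (c - 1) * ((s - θ) * x + θ - θ) ^ δ) = _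
  have e3 : s - ((s - θ) * x + θ) = (s - θ) * (1 - x) := by ring
  have e4 : (s - θ) * x + θ - θ = (s - θ) * x := by ring
  rw [e3, e4, Real.mul_rpow hd.le hx1, Real.mul_rpow hd.le hx.1, Real.rpow_add hd,
    Real.rpow_sub_one hd.ne']
  field_simp

theorem aux_main (w : ℝ → ℝ) (c δ s : ℝ) (hc : 0 < c) (hδ : 0 < δ) (hs : 0 < s)
    (hw : IntervalIntegrable w volume 0 s) :
    IntervalIntegrable (fun u => (s - u) ^ (c - 1) * ∫ θ in (0:ℝ)..u, (u - θ) ^ δ * w θ)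
      volume 0 s ∧
    ∫ u in (0:ℝ)..s, (s - u) ^ (c - 1) * ∫ θ in (0:ℝ)..u, (u - θ) ^ δ * w θ =
      (∫ x in (0:ℝ)..1, (1 - x) ^ (c - 1) * x ^ δ) *
        ∫ θ in (0:ℝ)..s, (s - θ) ^ (c + δ) * w θ := by
  set μ : Measure ℝ := volume.restrict (Set.Ioc 0 s) with hμ
  have hw' : Integrable w μ := (intervalIntegrable_iff_integrableOn_Ioc_of_le hs.le).1 hw
  have hk : Integrable (fun u : ℝ => (s - u) ^ (c - 1)) μ := by
    have h := (intervalIntegral.intervalIntegrable_rpow' (a := 0) (b := s)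
      (show -1 < c - 1 by linarith)).comp_sub_left s
    simp only [sub_zero, sub_self] at h
    exact (intervalIntegrable_iff_integrableOn_Ioc_of_le hs.le).1 h.symm
  let G : ℝ × ℝ → ℝ := fun p => {p : ℝ × ℝ | p.2 < p.1}.indicator
    (fun p => (p.1 - p.2) ^ δ) p * ((s - p.1) ^ (c - 1) * w p.2)
  have hprod : Integrable (fun p : ℝ × ℝ => (s - p.1) ^ (c - 1) * w p.2) (μ.prod μ) :=
    hk.mul_prod hw'
  have hmem : ∀ᵐ p ∂(μ.prod μ), p ∈ Set.Ioc 0 s ×ˢ Set.Ioc 0 s := by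
    rw [hμ, Measure.prod_restrict]
    exact ae_restrict_mem (measurableSet_Ioc.prod measurableSet_Ioc)
  have hG : Integrable G (μ.prod μ) := by
    refine hprod.bdd_mul (c := s ^ δ) ?_ ?_
    · apply Measurable.aestronglyMeasurable
      apply Measurable.indicator
      · fun_prop
      · exact measurableSet_lt measurable_snd measurable_fst
    · filter_upwards [hmem] with p hp
      obtain ⟨⟨h1, h2⟩, h3, h4⟩ := hp
      by_cases h : p.2 < p.1
      · rw [Set.indicator_of_mem (by exact h), Real.norm_of_nonneg
          (Real.rpow_nonneg (by linarith) _)]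
        exact Real.rpow_le_rpow (by linarith) (by linarith) hδ.le
      · rw [Set.indicator_of_notMem (by exact h)]
        simp only [norm_zero]
        positivity
  have hL : ∀ u ∈ Set.Ioc 0 s, ∫ θ, G (u, θ) ∂μ =
      (s - u) ^ (c - 1) * ∫ θ in (0:ℝ)..u, (u - θ) ^ δ * w θ := by
    intro u hu
    have e : ∀ θ, G (u, θ) = (Set.Iio u).indicator
        (fun θ => (s - u) ^ (c - 1) * ((u - θ) ^ δ * w θ)) θ := by
      intro θ
      by_cases h : θ < u
      · simp only [G, Set.indicator, Set.mem_setOf_eq, Set.mem_Iio, h, if_true]; ring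
      · simp only [G, Set.indicator, Set.mem_setOf_eq, Set.mem_Iio, h, if_false]; ring
    simp_rw [e]
    rw [integral_indicator measurableSet_Iio, hμ, Measure.restrict_restrict measurableSet_Iio,
      ← intervalIntegral.integral_const_mul, intervalIntegral.integral_of_le hu.1.le,
      integral_Ioc_eq_integral_Ioo]
    congr 2
    ext x
    simp only [Set.mem_inter_iff, Set.mem_Iio, Set.mem_Ioc, Set.mem_Ioo]
    constructor
    · rintro ⟨h1, h2, h3⟩; exact ⟨h2, h1⟩
    · rintro ⟨h1, h2⟩; exact ⟨h2, h1, by linarith [hu.2]⟩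
  have hR : ∀ θ ∈ Set.Ioc 0 s, ∫ u, G (u, θ) ∂μ =
      (∫ x in (0:ℝ)..1, (1 - x) ^ (c - 1) * x ^ δ) * ((s - θ) ^ (c + δ) * w θ) := by
    intro θ hθ
    have e : ∀ u, G (u, θ) = (Set.Ioi θ).indicator
        (fun u => (s - u) ^ (c - 1) * (u - θ) ^ δ * w θ) u := by
      intro u
      by_cases h : θ < u
      · simp only [G, Set.indicator, Set.mem_setOf_eq, Set.mem_Ioi, h, if_true]; ring
      · simp only [G, Set.indicator, Set.mem_setOf_eq, Set.mem_Ioi, h, if_false]; ring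
    simp_rw [e]
    have es : Set.Ioi θ ∩ Set.Ioc 0 s = Set.Ioc θ s := by
      ext x
      simp only [Set.mem_inter_iff, Set.mem_Ioi, Set.mem_Ioc]
      constructor
      · rintro ⟨h1, h2, h3⟩; exact ⟨h1, h3⟩
      · rintro ⟨h1, h2⟩; exact ⟨h1, by linarith [hθ.1], h2⟩
    rw [integral_indicator measurableSet_Ioi, hμ, Measure.restrict_restrict measurableSet_Ioi, es,
      ← intervalIntegral.integral_of_le hθ.2, intervalIntegral.integral_mul_const]
    rcases eq_or_lt_of_le hθ.2 with h | h
    · subst h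
      rw [intervalIntegral.integral_same, sub_self, Real.zero_rpow (by linarith)]
      ring
    · rw [aux_beta_scale c δ θ s h]; ring
  constructor
  · rw [intervalIntegrable_iff_integrableOn_Ioc_of_le hs.le]
    refine hG.integral_prod_left.congr ?_
    filter_upwards [ae_restrict_mem measurableSet_Ioc] with u hu using hL u hu
  · rw [intervalIntegral.integral_of_le hs.le, ← setIntegral_congr_fun measurableSet_Ioc hL,
      intervalIntegral.integral_of_le hs.le, ← integral_const_mul,
      ← setIntegral_congr_fun measurableSet_Ioc hR]
    exact integral_integral_swap hG

theorem aux_FJ (n : ℕ) (α β δ s : ℝ) : FJ n α β δ s = ∫ θ in (0:ℝ)..s, (s - θ) ^ δ *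
    (jacobiP n (α - 1/2) (β - 1/2) (Real.cos θ) *
    (Real.sin (θ / 2)) ^ (2 * α) * (Real.cos (θ / 2)) ^ (2 * β)) := by
  simp only [FJ, mul_assoc]

theorem FJ_monotone_in_delta (α β : ℝ) (hα : -1/2 < α) (hβ : -1/2 < β) (n : ℕ)
    (δ σ : ℝ) (hδ : 0 < δ) (hδσ : δ < σ) (t : ℝ) (ht : t ∈ Set.Ioc (0:ℝ) π) :
    ((∀ s ∈ Set.Ioc (0:ℝ) t, 0 ≤ FJ n α β δ s) →
      ∀ s ∈ Set.Ioc (0:ℝ) t, 0 ≤ FJ n α β σ s) ∧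
    ((∀ s ∈ Set.Ioc (0:ℝ) t, 0 < FJ n α β δ s) →
      ∀ s ∈ Set.Ioc (0:ℝ) t, 0 < FJ n α β σ s) := by


  have key : ∀ s ∈ Set.Ioc (0:ℝ) t,
      IntervalIntegrable (fun u => (s - u) ^ (σ - δ - 1) * FJ n α β δ u) volume 0 s ∧
      ∫ u in (0:ℝ)..s, (s - u) ^ (σ - δ - 1) * FJ n α β δ u =
      (∫ x in (0:ℝ)..1, (1 - x) ^ (σ - δ - 1) * x ^ δ) * FJ n α β σ s := by
    intro s hs
    have hw := (aux_w n α β hα hβ).mono_set (c := 0) (d := s)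
      (Set.uIcc_subset_uIcc Set.left_mem_uIcc (by
        rw [Set.uIcc_of_le Real.pi_pos.le]; exact ⟨hs.1.le, hs.2.trans ht.2⟩))
    have h := aux_main _ (σ - δ) δ s (by linarith) hδ hs.1 hw
    simp only [aux_FJ]
    rwa [sub_add_cancel] at h
  have hB := aux_beta_pos (σ - δ) δ (by linarith) hδ
  constructor
  · intro h s hs
    obtain ⟨_, h2⟩ := key s hs
    refine nonneg_of_mul_nonneg_right (h2 ▸ ?_) hB
    rw [intervalIntegral.integral_of_le hs.1.le]
    refine setIntegral_nonneg measurableSet_Ioc ?_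
    intro u hu
    exact mul_nonneg (Real.rpow_nonneg (by linarith [hu.2]) _) (h u ⟨hu.1, hu.2.trans hs.2⟩)
  · intro h s hs
    obtain ⟨h1, h2⟩ := key s hs
    refine pos_of_mul_pos_right (h2 ▸ ?_) hB.le
    apply intervalIntegral.intervalIntegral_pos_of_pos_on h1 _ hs.1
    intro u hu
    exact mul_pos (Real.rpow_pos_of_pos (by linarith [hu.2]) _) (h u ⟨hu.1, hu.2.le.trans hs.2⟩)
end
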